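/- arXiv:0807.1967 — 6 statements merged into one kernel-verified Lean document; each statement's English description precedes it below -/
import Mathlib

section
/- Let D ⊆ ℝ[X₁,…,Xₙ]\{0} be a multiplicatively closed set with 1 ∈ D, let S ⊆ ℝ[X₁,…,Xₙ] be finite with K_S ≠ ∅, and assume there exist p ∈ D and an integer k ≥ 1 such that p ≥ 1 on K_S and k·p − (X₁²+⋯+Xₙ²) ≥ 0 on K_S. Let K be a compact subset of ⋃_{d∈D} Z(d). Then every f ∈ ℝ[X₁,…,Xₙ] that is nonnegative on K_S \ K belongs to the closure of T_S^E in the finest locally convex topology on E = D⁻¹ℝ[X₁,…,Xₙ]; equivalently, L(f/1) ≥ 0 for every linear functional L on E with L(T_S^E) ⊆ [0,∞). -/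
/-!
Let `L` be a linear functional on `D⁻¹ℝ[X]` which is nonnegative on `T_S^E`.

If `F ≥ 0` on all of `K_S`, then `L F ≥ 0`. The growth hypothesis bounds `F` on `K_S` by a multiple
`r q` of a square `q`, a unit of the localization. Hence `|F / q - r / 2| ≤ r / 2` on `K_S`, and for
every `c > (r / 2) ^ 2` the Positivstellensatz certifies that `c - (F / q - r / 2) ^ 2` is positive;
iterating the Cauchy–Schwarz inequality turns these certificates into the same estimate for `L`,
which gives `L F ≥ 0`. Consequently the elements `F / d` of the localization with `F d ≥ 0` on `K_S`
lie in the closure of `T_S^E`.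

If `f ≥ 0` only off `K`, let `d_a ∈ D` vanish at `a ∈ K`. On `K` we have `|d_a| ≤ C_a r` within
distance `r` of `a`, and `f ≥ -B`. When the balls about `a` of radius `r_a`, for `a` in a finite
`t ⊆ K`, cover `K`, the function `f + ∑ B (C_a r_a) ^ N / d_a ^ N`, with `N > n` even, is
therefore of the first kind. Its error term is a weighted sum of the `r_a ^ N`, which Vitali's
covering lemma makes arbitrarily small whatever the weights are, because `N > n`.

The Positivstellensatz rests on two facts. A proper preordering is nonnegative under a homomorphism
to a field whose polynomials have the intermediate value property, found inside an algebraic closure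
as a maximal subfield on which the preordering stays proper. Sign conditions realized over such an
extension field are realized over `ℝ`, by eliminating one variable at a time: whether two
specializations of a finite family of univariate polynomials show the same sign patterns is
decided by the signs of finitely many elements of the coefficient ring.
-/

open MvPolynomial MeasureTheory

noncomputable section

/-- The Euclidean (weak) topology on a real vector space; for finite-dimensional
spaces this is the usual Euclidean topology. -/
def weakTop (V : Type*) [AddCommGroup V] [Module ℝ V] : TopologicalSpace V :=
  ⨅ L : V →ₗ[ℝ] ℝ, TopologicalSpace.induced L inferInstance

/-- The topology of finitely open sets: `O` is open iff its intersection with every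
finite-dimensional subspace `U` is open in the Euclidean topology of `U`. -/
def finTop (E : Type*) [AddCommGroup E] [Module ℝ E] : TopologicalSpace E where
  IsOpen O := ∀ U : Submodule ℝ E, FiniteDimensional ℝ U →
    @IsOpen _ (weakTop U) ((Subtype.val : U → E) ⁻¹' O)
  isOpen_univ := by
    intro U _
    letI := weakTop U
    rw [Set.preimage_univ]
    exact isOpen_univ
  isOpen_inter := by
    intro s t hs ht U hU
    letI := weakTop U
    rw [Set.preimage_inter]
    exact (hs U hU).inter (ht U hU)
  isOpen_sUnion := by
    intro s hs U hU
    letI := weakTop U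
    rw [Set.preimage_sUnion]
    exact isOpen_biUnion fun t ht => hs t ht U hU

/-- The closure of a convex cone in the finest locally convex topology, via the dual
characterization: `x` lies in the closure iff `L x ≥ 0` for every linear functional `L`
nonnegative on the cone. -/
def dualClosure {E : Type*} [AddCommGroup E] [Module ℝ E] (C : Set E) : Set E :=
  {x | ∀ L : E →ₗ[ℝ] ℝ, (∀ c ∈ C, 0 ≤ L c) → 0 ≤ L x}

/-- The preordering generated by `g 1, …, g m` in a commutative ring: all finite sums
of elements `σ • g₁^ν₁ ⋯ g_m^ν_m` with `σ` a sum of squares and `ν ∈ {0,1}^m`. -/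
def genPreordering {E : Type*} [CommRing E] {m : ℕ} (g : Fin m → E) : Set E :=
  {x | ∃ σ : (Fin m → Bool) → E, (∀ ν, IsSumSq (σ ν)) ∧
    x = ∑ ν : Fin m → Bool, σ ν * ∏ j, (if ν j then g j else 1)}

/-- The basic closed semialgebraic set determined by `g 1, …, g m`. -/
def KS {n m : ℕ} (g : Fin m → MvPolynomial (Fin n) ℝ) : Set (Fin n → ℝ) :=
  {x | ∀ i, 0 ≤ eval x (g i)}

/-- The real zero set of a polynomial. -/
def Zset {n : ℕ} (d : MvPolynomial (Fin n) ℝ) : Set (Fin n → ℝ) :=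
  {x | eval x d = 0}

/-- `Pos^E(𝒳)`: elements of the localization having a representation `f/d` with
`f·d ≥ 0 pointwise on 𝒳`. -/
def PosE {n : ℕ} (D : Submonoid (MvPolynomial (Fin n) ℝ)) (X : Set (Fin n → ℝ)) :
    Set (Localization D) :=
  {R | ∃ (f : MvPolynomial (Fin n) ℝ) (d : D), R = Localization.mk f d ∧
    ∀ x ∈ X, 0 ≤ eval x f * eval x (d : MvPolynomial (Fin n) ℝ)}

section OrderedField

open scoped Polynomial
open SignType (sign)

/-- An ordered field whose polynomials have the intermediate value property; this is one of the
equivalent definitions of a real closed field. -/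
class PolynomialIVT (R : Type*) [Field R] [LinearOrder R] : Prop where
  exists_eval_eq_zero {p : R[X]} {a b : R} (hab : a < b) (h : p.eval a * p.eval b < 0) :
    ∃ c ∈ Set.Ioo a b, p.eval c = 0

instance : PolynomialIVT ℝ where
  exists_eval_eq_zero {p a b} hab h := by
    rcases mul_neg_iff.1 h with ⟨ha, hb⟩ | ⟨ha, hb⟩
    · exact intermediate_value_Ioo' hab.le p.continuousOn ⟨hb, ha⟩
    · exact intermediate_value_Ioo hab.le p.continuousOn ⟨ha, hb⟩

variable {R : Type*} [Field R] [LinearOrder R] [IsStrictOrderedRing R]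

theorem sign_eq_sign_of_mul_pos {a b : R} (h : 0 < a * b) : sign a = sign b := by
  rcases mul_pos_iff.1 h with ⟨ha, hb⟩ | ⟨ha, hb⟩
  · rw [sign_pos ha, sign_pos hb]
  · rw [sign_neg ha, sign_neg hb]

theorem sign_of_strictly_between {a b c : R} (h : a < b ∧ b < c ∨ c < b ∧ b < a) :
    (b ≠ 0 ∧ sign a = sign b) ∨ (b ≠ 0 ∧ sign c = sign b) ∨ (b = 0 ∧ a * c < 0) := by
  rcases lt_trichotomy b 0 with hb | rfl | hb
  · rcases h with ⟨hab, -⟩ | ⟨hcb, -⟩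
    · exact .inl ⟨hb.ne, by rw [sign_neg hb, sign_neg (hab.trans hb)]⟩
    · exact .inr (.inl ⟨hb.ne, by rw [sign_neg hb, sign_neg (hcb.trans hb)]⟩)
  · refine .inr (.inr ⟨rfl, ?_⟩)
    rcases h with ⟨ha, hc⟩ | ⟨hc, ha⟩
    · exact mul_neg_of_neg_of_pos ha hc
    · exact mul_neg_of_pos_of_neg ha hc
  · rcases h with ⟨-, hbc⟩ | ⟨-, hba⟩
    · exact .inr (.inl ⟨hb.ne', by rw [sign_pos hb, sign_pos (hb.trans hbc)]⟩)
    · exact .inl ⟨hb.ne', by rw [sign_pos hb, sign_pos (hb.trans hba)]⟩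

theorem exists_eq_pow_mul_pow_mul {p : R[X]} (hp : p ≠ 0) {a b : R} (hab : a ≠ b)
    (ha : p.eval a = 0) (hb : p.eval b = 0) :
    ∃ (m l : ℕ) (s : R[X]), s.eval a ≠ 0 ∧ s.eval b ≠ 0 ∧
      p = (.X - .C a) ^ (m + 1) * (.X - .C b) ^ (l + 1) * s := by
  obtain ⟨q, hq, hqa⟩ := Polynomial.exists_eq_pow_rootMultiplicity_mul_and_not_dvd p hp a
  have hq0 : q ≠ 0 := by rintro rfl; simp at hqa
  obtain ⟨s, hs, hsb⟩ := Polynomial.exists_eq_pow_rootMultiplicity_mul_and_not_dvd q hq0 b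
  have hqb : q.IsRoot b := by
    rw [hq] at hb
    simpa [sub_eq_zero, hab.symm] using hb
  obtain ⟨m, hm⟩ := Nat.exists_eq_succ_of_ne_zero
    ((Polynomial.rootMultiplicity_pos hp).2 ha).ne'
  obtain ⟨l, hl⟩ := Nat.exists_eq_succ_of_ne_zero
    ((Polynomial.rootMultiplicity_pos hq0).2 hqb).ne'
  rw [hm] at hq
  rw [hl] at hs
  refine ⟨m, l, s, fun h => hqa ?_, fun h => hsb (Polynomial.dvd_iff_isRoot.2 h), ?_⟩
  · exact hs ▸ (Polynomial.dvd_iff_isRoot.2 h).mul_left _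
  · rw [mul_assoc, ← hs, ← hq]

namespace PolynomialIVT

variable [PolynomialIVT R]

theorem isSquare_of_nonneg {c : R} (hc : 0 ≤ c) : IsSquare c := by
  rcases hc.eq_or_lt with rfl | hc
  · exact .zero
  have hlt : c < (c + 1) ^ 2 := by nlinarith
  obtain ⟨x, -, hx⟩ := exists_eval_eq_zero (p := .X ^ 2 - .C c) (a := 0) (b := c + 1)
    (by positivity) (by simpa [hc] using hlt)
  exact ⟨x, by simpa [sub_eq_zero, pow_two, eq_comm] using hx⟩

theorem sign_eval_eq {p : R[X]} {a b : R} (h : ∀ c ∈ Set.uIcc a b, p.eval c ≠ 0) :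
    sign (p.eval a) = sign (p.eval b) := by
  wlog hab : a ≤ b
  · exact (this (by rwa [Set.uIcc_comm]) (le_of_not_ge hab)).symm
  rcases hab.eq_or_lt with rfl | hab
  · rfl
  refine sign_eq_sign_of_mul_pos (not_le.1 fun hle => ?_)
  have hne : p.eval a * p.eval b ≠ 0 := mul_ne_zero (h a Set.left_mem_uIcc) (h b Set.right_mem_uIcc)
  obtain ⟨c, hc, hc0⟩ := exists_eval_eq_zero hab (hle.lt_of_ne hne)
  exact h c (Set.Icc_subset_uIcc (Set.Ioo_subset_Icc_self hc)) hc0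

/- Writing `p = (X - a)^(m+1) (X - b)^(l+1) s`, the derivative is `(X - a)^m (X - b)^l w`, where `w`
has opposite signs at `a` and `b` because `s` has no root in `[a, b]`. -/
theorem exists_derivative_eq_zero_of_consecutive {p : R[X]} {a b : R} (hab : a < b)
    (ha : p.eval a = 0) (hb : p.eval b = 0) (h : ∀ c ∈ Set.Ioo a b, p.eval c ≠ 0) :
    ∃ c ∈ Set.Ioo a b, p.derivative.eval c = 0 := by
  have hp : p ≠ 0 := by
    rintro rfl
    obtain ⟨c, hc⟩ := exists_between hab
    exact h c hc (by simp)
  obtain ⟨m, l, s, hsa, hsb, rfl⟩ := exists_eq_pow_mul_pow_mul hp hab.ne ha hb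
  have hs : ∀ c ∈ Set.uIcc a b, s.eval c ≠ 0 := by
    intro c hc hc0
    rw [Set.uIcc_of_le hab.le] at hc
    refine h c ⟨hc.1.lt_of_ne ?_, hc.2.lt_of_ne ?_⟩ (by simp [hc0])
    · rintro rfl; exact hsa hc0
    · rintro rfl; exact hsb hc0
  have hsab : 0 < s.eval a * s.eval b := by
    rw [← sign_eq_one_iff, sign_mul, sign_eval_eq hs, ← sign_mul, sign_eq_one_iff]
    exact mul_self_pos.2 hsb
  let w : R[X] := .C (m + 1 : R) * (.X - .C b) * s + .C (l + 1 : R) * (.X - .C a) * s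
    + (.X - .C a) * (.X - .C b) * s.derivative
  obtain ⟨c, hc, hc0⟩ := exists_eval_eq_zero (p := w) hab (by
    have hba : 0 < b - a := sub_pos.2 hab
    have : 0 < (m + 1 : R) * (l + 1) * (b - a) ^ 2 * (s.eval a * s.eval b) := by positivity
    simp only [w, Polynomial.eval_add, Polynomial.eval_mul, Polynomial.eval_sub, Polynomial.eval_X,
      Polynomial.eval_C, sub_self, mul_zero, zero_mul, add_zero, zero_add]
    linarith)
  refine ⟨c, hc, ?_⟩
  have hd : Polynomial.derivative ((.X - .C a) ^ (m + 1) * (.X - .C b) ^ (l + 1) * s) =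
      (.X - .C a) ^ m * (.X - .C b) ^ l * w := by
    simp only [w, Polynomial.derivative_mul, Polynomial.derivative_X_sub_C_pow,
      Nat.add_sub_cancel, Nat.cast_add, Nat.cast_one, map_add, map_natCast, map_one]
    ring
  rw [hd, Polynomial.eval_mul, hc0, mul_zero]

theorem exists_derivative_eq_zero {p : R[X]} {a b : R} (hab : a < b)
    (ha : p.eval a = 0) (hb : p.eval b = 0) : ∃ c ∈ Set.Ioo a b, p.derivative.eval c = 0 := by
  rcases eq_or_ne p 0 with rfl | hp
  · simpa using exists_between hab
  let roots := p.roots.toFinset.filter (a < ·)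
  have mem_roots {x : R} : x ∈ roots ↔ p.eval x = 0 ∧ a < x := by simp [roots, hp]
  have hne : roots.Nonempty := ⟨b, mem_roots.2 ⟨hb, hab⟩⟩
  obtain ⟨hb₀, hab₀⟩ := mem_roots.1 (roots.min'_mem hne)
  obtain ⟨c, hc, hc0⟩ := exists_derivative_eq_zero_of_consecutive hab₀ ha hb₀ fun c hc h0 =>
    (roots.min'_le c (mem_roots.2 ⟨h0, hc.1⟩)).not_gt hc.2
  exact ⟨c, ⟨hc.1, hc.2.trans_le (roots.min'_le b (mem_roots.2 ⟨hb, hab⟩))⟩, hc0⟩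

theorem exists_sub_eq_derivative_mul (p : R[X]) {a b : R} (hab : a < b) :
    ∃ c ∈ Set.Ioo a b, p.eval b - p.eval a = p.derivative.eval c * (b - a) := by
  have hba : b - a ≠ 0 := (sub_pos.2 hab).ne'
  let slope := (p.eval b - p.eval a) / (b - a)
  have hslope : slope * (b - a) = p.eval b - p.eval a := div_mul_cancel₀ _ hba
  obtain ⟨c, hc, hc0⟩ := exists_derivative_eq_zero
    (p := p - .C slope * (.X - .C a) - .C (p.eval a)) hab (by simp) (by simp [hslope])
  refine ⟨c, hc, ?_⟩
  rw [← hslope, sub_eq_zero.1 (show p.derivative.eval c - slope = 0 by simpa using hc0)]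

theorem strictMonoOn_or_strictAntiOn {p : R[X]} {l r : R}
    (h : ∀ c ∈ Set.Ioo l r, p.derivative.eval c ≠ 0) :
    StrictMonoOn (p.eval ·) (Set.Icc l r) ∨ StrictAntiOn (p.eval ·) (Set.Icc l r) := by
  have mean {a b : R} (ha : a ∈ Set.Icc l r) (hb : b ∈ Set.Icc l r) (hab : a < b) :
      ∃ c ∈ Set.Ioo l r, p.eval b - p.eval a = p.derivative.eval c * (b - a) :=
    (exists_sub_eq_derivative_mul p hab).imp fun c hc =>
      ⟨Set.Ioo_subset_Ioo ha.1 hb.2 hc.1, hc.2⟩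
  have hsign {a b : R} (ha : a ∈ Set.Ioo l r) (hb : b ∈ Set.Ioo l r) :
      sign (p.derivative.eval a) = sign (p.derivative.eval b) :=
    sign_eval_eq fun c hc => h c (Set.ordConnected_Ioo.uIcc_subset ha hb hc)
  by_cases hpos : ∃ a ∈ Set.Ioo l r, 0 < p.derivative.eval a
  · obtain ⟨a, ha, ha0⟩ := hpos
    refine .inl fun x hx y hy hxy => ?_
    obtain ⟨c, hc, e⟩ := mean hx hy hxy
    have hc0 : 0 < p.derivative.eval c := by
      rwa [← sign_eq_one_iff, hsign hc ha, sign_eq_one_iff]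
    exact sub_pos.1 (e ▸ mul_pos hc0 (sub_pos.2 hxy))
  · push Not at hpos
    refine .inr fun x hx y hy hxy => ?_
    obtain ⟨c, hc, e⟩ := mean hx hy hxy
    exact sub_neg.1 (e ▸ mul_neg_of_neg_of_pos ((hpos c hc).lt_of_ne (h c hc)) (sub_pos.2 hxy))

theorem exists_forall_mem_Icc_sign_eval_eq {p : R[X]} {a b : R} (hab : a < b)
    (ha : p.eval a ≠ 0) :
    ∃ c ∈ Set.Ioo a b, ∀ x ∈ Set.Icc a c, sign (p.eval x) = sign (p.eval a) := by
  classical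
  have hp : p ≠ 0 := by rintro rfl; simp at ha
  obtain ⟨c, hac, hc⟩ := Order.exists_between_finsets {a}
    (insert b (p.roots.toFinset.filter (a < ·))) (by simp +contextual [hab])
  simp only [Finset.mem_singleton, forall_eq] at hac
  refine ⟨c, ⟨hac, hc b (Finset.mem_insert_self ..)⟩, fun x hx => ?_⟩
  refine (sign_eval_eq fun y hy hy0 => ?_).symm
  rw [Set.uIcc_of_le hx.1] at hy
  have hay : a < y := hy.1.lt_of_ne (by rintro rfl; exact ha hy0)
  exact (hc y (by simp [hp, hy0, hay])).not_ge (hy.2.trans hx.2)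

theorem exists_mem_Ioo_sign_eval_eq_left {p : R[X]} {a b : R} (hab : a < b) (ha : p.eval a ≠ 0) :
    ∃ c ∈ Set.Ioo a b, sign (p.eval c) = sign (p.eval a) :=
  (exists_forall_mem_Icc_sign_eval_eq hab ha).imp fun c hc =>
    ⟨hc.1, hc.2 c (Set.right_mem_Icc.2 hc.1.1.le)⟩

theorem exists_mem_Ioo_sign_eval_eq_right {p : R[X]} {a b : R} (hab : a < b) (hb : p.eval b ≠ 0) :
    ∃ c ∈ Set.Ioo a b, sign (p.eval c) = sign (p.eval b) := by
  obtain ⟨c, hc, h⟩ := exists_mem_Ioo_sign_eval_eq_left (p := p.comp (-.X)) (neg_lt_neg hab)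
    (by simpa using hb)
  exact ⟨-c, ⟨lt_neg.1 hc.2, neg_lt.1 hc.1⟩, by simpa using h⟩

theorem exists_forall_ge_sign_eval_eq (p : R[X]) :
    ∃ N : R, ∀ x ≥ N, sign (p.eval x) = sign p.leadingCoeff := by
  rcases eq_or_ne p 0 with rfl | hp
  · simp
  have heval : p.reverse.eval 0 = p.leadingCoeff := by
    rw [← Polynomial.coeff_zero_eq_eval_zero, Polynomial.coeff_zero_reverse]
  obtain ⟨c, hc, hsign⟩ := exists_forall_mem_Icc_sign_eval_eq (p := p.reverse) zero_lt_one
    (by rwa [heval, Polynomial.leadingCoeff_ne_zero])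
  refine ⟨c⁻¹, fun x hx => ?_⟩
  have hx0 : 0 < x := (inv_pos.2 hc.1).trans_le hx
  have hrev : p.reverse.eval x⁻¹ * x ^ p.natDegree = p.eval x := by
    have := invertibleOfNonzero hx0.ne'
    simpa using Polynomial.eval₂_reverse_mul_pow (RingHom.id R) x p
  rw [← hrev, sign_mul, sign_pos (pow_pos hx0 _), mul_one,
    hsign _ ⟨(inv_pos.2 hx0).le, inv_le_of_inv_le₀ hc.1 hx⟩, heval]

theorem exists_forall_ge_sign_eval_neg_eq (p : R[X]) :
    ∃ N : R, ∀ x ≥ N, sign (p.eval (-x)) = sign ((-1) ^ p.natDegree * p.leadingCoeff) := by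
  obtain ⟨N, hN⟩ := exists_forall_ge_sign_eval_eq (p.comp (-.X))
  refine ⟨N, fun x hx => ?_⟩
  have := hN x hx
  rw [Polynomial.leadingCoeff_comp (by simp)] at this
  simpa [mul_comm] using this

theorem exists_forall_abs_lt_sign_eval_eq (p : R[X]) (S : Finset R) :
    ∃ M : R, (∀ x ∈ S, |x| < M) ∧ 0 < M ∧ sign (p.eval M) = sign p.leadingCoeff ∧
      sign (p.eval (-M)) = sign ((-1) ^ p.natDegree * p.leadingCoeff) := by
  obtain ⟨N, hN⟩ := exists_forall_ge_sign_eval_eq p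
  obtain ⟨N', hN'⟩ := exists_forall_ge_sign_eval_neg_eq p
  obtain ⟨M, hM, -⟩ := Order.exists_between_finsets
    (insert 0 (insert N (insert N' (S.image abs)))) ∅ (by simp)
  simp only [Finset.forall_mem_insert, Finset.forall_mem_image] at hM
  exact ⟨M, fun x hx => hM.2.2.2 hx, hM.1, hN M hM.2.1.le, hN' M hM.2.2.1.le⟩

/- Between consecutive zeros of its derivative, a polynomial takes only those signs that its values
at the endpoints force. -/
theorem exists_mem_Ioo_sign_eval_eq {R' : Type*} [Field R'] [LinearOrder R']
    [IsStrictOrderedRing R'] [PolynomialIVT R'] {p : R[X]} {p' : R'[X]} (hp : p ≠ 0) {l x r : R}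
    (hx : x ∈ Set.Ioo l r)
    (hd : p.derivative = 0 ∨ ∀ c ∈ Set.Ioo l r, p.derivative.eval c ≠ 0)
    {l' r' : R'} (hlr : l' < r') (hl : sign (p.eval l) = sign (p'.eval l'))
    (hr : sign (p.eval r) = sign (p'.eval r')) :
    ∃ y ∈ Set.Ioo l' r', sign (p'.eval y) = sign (p.eval x) := by
  have hcases : (p.eval x ≠ 0 ∧ sign (p.eval l) = sign (p.eval x)) ∨
      (p.eval x ≠ 0 ∧ sign (p.eval r) = sign (p.eval x)) ∨
      (p.eval x = 0 ∧ p.eval l * p.eval r < 0) := by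
    rcases hd with hd | hd
    · left
      rw [Polynomial.eq_C_of_natDegree_eq_zero (Polynomial.derivative_eq_zero.1 hd)] at hp ⊢
      simpa using hp
    · have hlm : l ∈ Set.Icc l r := Set.left_mem_Icc.2 (hx.1.trans hx.2).le
      have hrm : r ∈ Set.Icc l r := Set.right_mem_Icc.2 (hx.1.trans hx.2).le
      have hxm := Set.Ioo_subset_Icc_self hx
      exact sign_of_strictly_between <| (strictMonoOn_or_strictAntiOn hd).imp
        (fun h => ⟨h hlm hxm hx.1, h hxm hrm hx.2⟩) fun h => ⟨h hxm hrm hx.2, h hlm hxm hx.1⟩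
  rcases hcases with ⟨hx0, h⟩ | ⟨hx0, h⟩ | ⟨hx0, h⟩
  · rw [← h, hl]
    exact exists_mem_Ioo_sign_eval_eq_left hlr (by rwa [← sign_ne_zero, ← hl, h, sign_ne_zero])
  · rw [← h, hr]
    exact exists_mem_Ioo_sign_eval_eq_right hlr (by rwa [← sign_ne_zero, ← hr, h, sign_ne_zero])
  · rw [← sign_eq_neg_one_iff, sign_mul, hl, hr, ← sign_mul, sign_eq_neg_one_iff] at h
    simpa [hx0, sign_eq_zero_iff] using exists_eval_eq_zero hlr h

end PolynomialIVT

end OrderedField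

section FiniteOrderExtension

variable {α β : Type*} [LinearOrder α]

theorem strictMonoOn_update_insert [Preorder β] {k : α → β} {V : Set α} (hk : StrictMonoOn k V)
    {x : α} {y : β} (hx : x ∉ V) (hlow : ∀ v ∈ V, v < x → k v < y)
    (hupp : ∀ v ∈ V, x < v → y < k v) : StrictMonoOn (Function.update k x y) (insert x V) := by
  have hne {v : α} (hv : v ∈ V) : v ≠ x := by rintro rfl; exact hx hv
  refine strictMonoOn_insert_iff.2 ⟨fun v hv hvx => ?_, fun v hv hxv => ?_, ?_⟩
  · simpa [hne hv] using hlow v hv hvx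
  · simpa [hne hv] using hupp v hv hxv
  · exact hk.congr fun v hv => (Function.update_of_ne (hne hv) _ _).symm

theorem exists_consecutive_of_notMem {V : Finset α} {x : α} (hx : x ∉ V) (hl : ∃ l ∈ V, l < x)
    (hr : ∃ r ∈ V, x < r) :
    ∃ l ∈ V, ∃ r ∈ V, x ∈ Set.Ioo l r ∧ ∀ v ∈ V, v ≤ l ∨ r ≤ v := by
  obtain ⟨l, hlmax⟩ := (V.filter (· < x)).exists_maximal (by simpa [Finset.Nonempty] using hl)
  obtain ⟨r, hrmin⟩ := (V.filter (x < ·)).exists_minimal (by simpa [Finset.Nonempty] using hr)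
  obtain ⟨hlV, hlx⟩ := Finset.mem_filter.1 hlmax.prop
  obtain ⟨hrV, hxr⟩ := Finset.mem_filter.1 hrmin.prop
  refine ⟨l, hlV, r, hrV, ⟨hlx, hxr⟩, fun v hv => ?_⟩
  rcases lt_or_gt_of_ne (show v ≠ x by rintro rfl; exact hx hv) with h | h
  · exact .inl (le_of_not_gt (hlmax.not_gt (Finset.mem_filter.2 ⟨hv, h⟩)))
  · exact .inr (le_of_not_gt (hrmin.not_lt (Finset.mem_filter.2 ⟨hv, h⟩)))

theorem exists_strictMonoOn_insert [LinearOrder β] {P : α → β → Prop} {W : Finset α} {k : α → β}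
    (hk : StrictMonoOn k W) (hP : ∀ w ∈ W, P w (k w)) {x : α} (hl : ∃ l ∈ W, l < x)
    (hr : ∃ r ∈ W, x < r)
    (step : ∀ l r l' r', x ∈ Set.Ioo l r → (∀ w ∈ W, w ∉ Set.Ioo l r) → l' < r' →
      P l l' → P r r' → ∃ y ∈ Set.Ioo l' r', P x y) :
    ∃ k' : α → β, StrictMonoOn k' (insert x W) ∧ Set.EqOn k' k W ∧
      ∀ v ∈ insert x W, P v (k' v) := by
  by_cases hx : x ∈ W
  · rw [Finset.insert_eq_self.2 hx]
    exact ⟨k, by simpa [hx] using hk, fun _ _ => rfl, hP⟩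
  obtain ⟨l, hlW, r, hrW, hlr, hgap⟩ := exists_consecutive_of_notMem hx hl hr
  obtain ⟨y, hy, hxy⟩ := step l r (k l) (k r) hlr
    (fun w hw h => (hgap w hw).elim h.1.not_ge h.2.not_ge)
    (hk hlW hrW (hlr.1.trans hlr.2)) (hP l hlW) (hP r hrW)
  have heq : Set.EqOn (Function.update k x y) k W := fun w hw =>
    Function.update_of_ne (by rintro rfl; exact hx hw) _ _
  refine ⟨Function.update k x y, strictMonoOn_update_insert hk hx ?_ ?_, heq, fun v hv => ?_⟩
  · exact fun v hv hvx => (hk.monotoneOn hv hlW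
      ((hgap v hv).resolve_right (hvx.trans hlr.2).not_ge)).trans_lt hy.1
  · exact fun v hv hxv => hy.2.trans_le (hk.monotoneOn hrW hv
      ((hgap v hv).resolve_left (hlr.1.trans hxv).not_ge))
  · rcases Finset.mem_insert.1 hv with rfl | hv
    · rwa [Function.update_self]
    · exact heq hv ▸ hP v hv

theorem exists_strictMonoOn_union [LinearOrder β] {P : α → β → Prop} {W : Finset α} {k : α → β}
    (hk : StrictMonoOn k W) (hP : ∀ w ∈ W, P w (k w))
    (step : ∀ l x r l' r', x ∈ Set.Ioo l r → (∀ w ∈ W, w ∉ Set.Ioo l r) → l' < r' →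
      P l l' → P r r' → ∃ y ∈ Set.Ioo l' r', P x y)
    (A : Finset α) (hl : ∀ x ∈ A, ∃ l ∈ W, l < x) (hr : ∀ x ∈ A, ∃ r ∈ W, x < r) :
    ∃ k' : α → β, StrictMonoOn k' (W ∪ A : Finset α) ∧ Set.EqOn k' k W ∧
      ∀ x ∈ W ∪ A, P x (k' x) := by
  induction A using Finset.induction_on with
  | empty => exact ⟨k, by simpa using hk, fun _ _ => rfl, by simpa using hP⟩
  | insert x A _ ih =>
    obtain ⟨k₁, hk₁, heq₁, hP₁⟩ := ih (fun z hz => hl z (Finset.mem_insert_of_mem hz))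
      fun z hz => hr z (Finset.mem_insert_of_mem hz)
    have hW : W ⊆ W ∪ A := Finset.subset_union_left
    obtain ⟨k₂, hk₂, heq₂, hP₂⟩ := exists_strictMonoOn_insert hk₁ hP₁
      ((hl x (Finset.mem_insert_self ..)).imp fun _ h => ⟨hW h.1, h.2⟩)
      ((hr x (Finset.mem_insert_self ..)).imp fun _ h => ⟨hW h.1, h.2⟩)
      fun l r l' r' hlr hgap => step l x r l' r' hlr fun w hw => hgap w (hW hw)
    rw [Finset.union_insert]
    exact ⟨k₂, by simpa using hk₂, (heq₂.mono hW).trans heq₁, hP₂⟩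

theorem exists_strictMonoOn_insert_insert [Preorder β] {k : α → β} {V : Set α}
    (hk : StrictMonoOn k V) {a b : α} {a' b' : β} (hab : a < b) (hab' : a' < b')
    (hV : V ⊆ Set.Ioo a b) (hV' : Set.MapsTo k V (Set.Ioo a' b')) :
    ∃ k' : α → β, StrictMonoOn k' (insert b (insert a V)) ∧ Set.EqOn k' k V ∧
      k' a = a' ∧ k' b = b' := by
  have hne {v : α} (hv : v ∈ V) : v ≠ a ∧ v ≠ b := ⟨(hV hv).1.ne', (hV hv).2.ne⟩
  have ha : StrictMonoOn (Function.update k a a') (insert a V) :=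
    strictMonoOn_update_insert hk (fun h => (hV h).1.false)
      (fun v hv hva => absurd hva (hV hv).1.not_gt) fun v hv _ => (hV' hv).1
  refine ⟨Function.update (Function.update k a a') b b', strictMonoOn_update_insert ha ?_ ?_ ?_,
    fun v hv => by simp [hne hv], by simp [hab.ne], by simp⟩
  · rintro (h | h)
    · exact hab.ne' h
    · exact (hV h).2.false
  · rintro v (rfl | hv) -
    · simpa using hab'
    · simpa [hne hv] using (hV' hv).2
  · rintro v (rfl | hv) h
    · exact absurd h hab.not_gt
    · exact absurd h (hV hv).2.not_gt

end FiniteOrderExtension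

section SignMatch

open scoped Polynomial
open SignType (sign)

variable {R₁ R₂ : Type*} [Field R₁] [LinearOrder R₁] [Field R₂] [LinearOrder R₂]

variable {B : Type*} [CommRing B]

/-- The roots in `R` of the nonzero members of the specialized family `Q`. -/
def familyRoots {R : Type*} [Field R] [LinearOrder R] (Q : Finset B[X]) (φ : B →+* R) : Finset R :=
  Q.biUnion fun q => (q.map φ).roots.toFinset

/-- Every finite configuration of points of `R₁` can be copied into `R₂` in an order-preserving way,
so that the members of `Q`, specialized along `φ₁` and `φ₂`, have the same signs at corresponding
points. -/
def SignMatch (Q : Finset B[X]) (φ₁ : B →+* R₁) (φ₂ : B →+* R₂) : Prop :=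
  ∀ A : Finset R₁, ∃ h : R₁ → R₂, StrictMonoOn h A ∧ ∀ x ∈ A, ∀ q ∈ Q,
    sign ((q.map φ₁).eval x) = sign ((q.map φ₂).eval (h x))

variable {Q Q₀ : Finset B[X]} {p : B[X]} {φ₁ : B →+* R₁} {φ₂ : B →+* R₂}

theorem SignMatch.mono (h : SignMatch Q φ₁ φ₂) (hQ : Q₀ ⊆ Q) : SignMatch Q₀ φ₁ φ₂ := fun A =>
  (h A).imp fun _ hk => ⟨hk.1, fun x hx q hq => hk.2 x hx q (hQ hq)⟩

theorem mem_familyRoots {x : R₁} :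
    x ∈ familyRoots Q φ₁ ↔ ∃ q ∈ Q, q.map φ₁ ≠ 0 ∧ (q.map φ₁).eval x = 0 := by
  simp [familyRoots]

theorem map_eq_zero_iff_of_sign_coeff_eq
    (hco : ∀ i, sign (φ₁ (p.coeff i)) = sign (φ₂ (p.coeff i))) : p.map φ₁ = 0 ↔ p.map φ₂ = 0 := by
  simp only [Polynomial.ext_iff, Polynomial.coeff_map, Polynomial.coeff_zero,
    ← sign_eq_zero_iff (a := φ₁ _), hco, sign_eq_zero_iff]

theorem natDegree_map_eq_of_sign_coeff_eq
    (hco : ∀ i, sign (φ₁ (p.coeff i)) = sign (φ₂ (p.coeff i))) :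
    (p.map φ₁).natDegree = (p.map φ₂).natDegree := by
  have hsupp : (p.map φ₁).support = (p.map φ₂).support := by
    ext i
    rw [Polynomial.mem_support_iff, Polynomial.mem_support_iff, Polynomial.coeff_map,
      Polynomial.coeff_map, ← sign_ne_zero, hco, sign_ne_zero]
  exact Polynomial.natDegree_eq_of_degree_eq (congrArg Finset.max hsupp)

theorem mapsTo_familyRoots {h : R₁ → R₂} (hz : ∀ q ∈ Q, q.map φ₂ = 0 → q.map φ₁ = 0)
    (hsign : ∀ x ∈ familyRoots Q φ₁, ∀ q ∈ Q,
      sign ((q.map φ₁).eval x) = sign ((q.map φ₂).eval (h x))) :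
    Set.MapsTo h (familyRoots Q φ₁) (familyRoots Q φ₂) := by
  intro x hx
  obtain ⟨q, hq, hq0, hqx⟩ := mem_familyRoots.1 hx
  refine mem_familyRoots.2 ⟨q, hq, mt (hz q hq) hq0, ?_⟩
  rw [← sign_eq_zero_iff, ← hsign x hx q hq, hqx, sign_zero]

/- The reverse matching injects the roots over `R₂` into those over `R₁`, so the numbers of roots
agree. -/
theorem SignMatch.surjOn_familyRoots (hm : SignMatch Q φ₂ φ₁)
    (hz : ∀ q ∈ Q, q.map φ₁ = 0 ↔ q.map φ₂ = 0) {h : R₁ → R₂}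
    (hinj : Set.InjOn h (familyRoots Q φ₁))
    (hsign : ∀ x ∈ familyRoots Q φ₁, ∀ q ∈ Q,
      sign ((q.map φ₁).eval x) = sign ((q.map φ₂).eval (h x))) :
    Set.SurjOn h (familyRoots Q φ₁) (familyRoots Q φ₂) := by
  obtain ⟨k, hk, hksign⟩ := hm (familyRoots Q φ₂)
  exact Finset.surjOn_of_injOn_of_card_le h (mapsTo_familyRoots (fun q hq => (hz q hq).2) hsign)
    hinj (Finset.card_le_card_of_injOn k
      (mapsTo_familyRoots (fun q hq => (hz q hq).1) hksign) hk.injOn)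

variable [IsStrictOrderedRing R₁] [IsStrictOrderedRing R₂] [PolynomialIVT R₁] [PolynomialIVT R₂]

theorem PolynomialIVT.exists_strictMonoOn_sign_eval_eq
    {p₁ : R₁[X]} {p₂ : R₂[X]} (hp₁ : p₁ ≠ 0) (hdeg : p₁.natDegree = p₂.natDegree)
    (hlead : sign p₁.leadingCoeff = sign p₂.leadingCoeff) {Z : Finset R₁}
    (hZ : p₁.derivative.roots.toFinset ⊆ Z) {h : R₁ → R₂} (hmono : StrictMonoOn h Z)
    (hsign : ∀ z ∈ Z, sign (p₁.eval z) = sign (p₂.eval (h z))) (A : Finset R₁) :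
    ∃ k : R₁ → R₂, StrictMonoOn k (Z ∪ A : Finset R₁) ∧ Set.EqOn k h Z ∧
      ∀ x ∈ A, sign (p₁.eval x) = sign (p₂.eval (k x)) := by
  obtain ⟨M₁, hM₁, hM₁0, hpM₁, hpM₁'⟩ := exists_forall_abs_lt_sign_eval_eq p₁ (Z ∪ A)
  obtain ⟨M₂, hM₂, hM₂0, hpM₂, hpM₂'⟩ := exists_forall_abs_lt_sign_eval_eq p₂ (Z.image h)
  obtain ⟨k₀, hk₀, heq₀, hk₀l, hk₀r⟩ := exists_strictMonoOn_insert_insert hmono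
    (a := -M₁) (b := M₁) (a' := -M₂) (b' := M₂) (by linarith) (by linarith)
    (fun z hz => abs_lt.1 (hM₁ z (Finset.mem_union_left _ hz)))
    (fun z hz => abs_lt.1 (hM₂ _ (Finset.mem_image_of_mem h hz)))
  let W := insert M₁ (insert (-M₁) Z)
  have hZW : Z ⊆ W := (Finset.subset_insert ..).trans (Finset.subset_insert ..)
  have hsignW : ∀ x ∈ W, sign (p₁.eval x) = sign (p₂.eval (k₀ x)) := by
    simp only [W, Finset.forall_mem_insert, hk₀l, hk₀r]
    refine ⟨by rw [hpM₁, hpM₂, hlead], ?_, fun z hz => heq₀ hz ▸ hsign z hz⟩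
    rw [hpM₁', hpM₂', hdeg, sign_mul, sign_mul, hlead, sign_pow, sign_pow]
    simp
  obtain ⟨k, hk, heq, hkp⟩ := exists_strictMonoOn_union
    (P := fun x y => sign (p₁.eval x) = sign (p₂.eval y)) (k := k₀) (by simpa [W] using hk₀) hsignW
    (fun l x r l' r' hx hgap hlr hl hr => by
      obtain ⟨y, hy, hxy⟩ := exists_mem_Ioo_sign_eval_eq hp₁ hx
        (or_iff_not_imp_left.2 fun hd0 c hc hc0 =>
          hgap c (hZW (hZ (by simpa [hd0] using hc0))) hc) hlr hl hr
      exact ⟨y, hy, hxy.symm⟩) A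
    (fun x hx => ⟨-M₁, by simp [W], (abs_lt.1 (hM₁ x (Finset.mem_union_right _ hx))).1⟩)
    (fun x hx => ⟨M₁, by simp [W], (abs_lt.1 (hM₁ x (Finset.mem_union_right _ hx))).2⟩)
  exact ⟨k, hk.mono (Finset.coe_subset.2 (Finset.union_subset_union_left hZW)),
    (heq.mono hZW).trans heq₀, fun x hx => hkp x (Finset.mem_union_right _ hx)⟩

theorem PolynomialIVT.sign_eval_eq_of_eqOn {α : Type*} [LinearOrder α]
    {q : R₂[X]} {Z : Set α} {x : α} {h k : α → R₂} (hh : StrictMonoOn h (insert x Z))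
    (hk : StrictMonoOn k (insert x Z)) (heq : Set.EqOn k h Z)
    (hroots : ∀ c, q.eval c = 0 → c ∈ h '' Z) : sign (q.eval (h x)) = sign (q.eval (k x)) := by
  by_cases hx : x ∈ Z
  · rw [heq hx]
  refine sign_eval_eq fun c hc hc0 => ?_
  obtain ⟨z, hz, rfl⟩ := hroots c hc0
  rcases lt_or_gt_of_ne (show z ≠ x by rintro rfl; exact hx hz) with hzx | hxz
  · refine (lt_inf_iff.2 ⟨hh (.inr hz) (.inl rfl) hzx, ?_⟩).not_ge hc.1
    exact heq hz ▸ hk (.inr hz) (.inl rfl) hzx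
  · refine (sup_lt_iff.2 ⟨hh (.inl rfl) (.inr hz) hxz, ?_⟩).not_ge hc.2
    exact heq hz ▸ hk (.inl rfl) (.inr hz) hxz

open Classical in
/- The roots of `Q₀` in the two fields correspond monotonically, and between consecutive ones `p` is
monotone because `Q₀` contains its derivative. -/
theorem SignMatch.insert (hQ : Q₀ ⊆ Q)
    (hd : p.derivative ∈ Q₀) (hm : SignMatch Q φ₁ φ₂) (hm' : SignMatch Q φ₂ φ₁)
    (hco : ∀ q ∈ insert p Q₀, ∀ i, sign (φ₁ (q.coeff i)) = sign (φ₂ (q.coeff i)))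
    (hp : ∀ x ∈ familyRoots Q₀ φ₁, ∀ y ∈ familyRoots Q₀ φ₂,
      (∀ q ∈ Q, sign ((q.map φ₁).eval x) = sign ((q.map φ₂).eval y)) →
      sign ((p.map φ₁).eval x) = sign ((p.map φ₂).eval y)) :
    SignMatch (insert p Q₀) φ₁ φ₂ := by
  have hcop := hco p (Finset.mem_insert_self ..)
  have hz : ∀ q ∈ Q₀, q.map φ₁ = 0 ↔ q.map φ₂ = 0 := fun q hq =>
    map_eq_zero_iff_of_sign_coeff_eq (hco q (Finset.mem_insert_of_mem hq))
  intro A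
  obtain ⟨h, hmono, hsign⟩ := hm (familyRoots Q₀ φ₁ ∪ A)
  by_cases hp0 : p.map φ₁ = 0
  · have hp0' := (map_eq_zero_iff_of_sign_coeff_eq hcop).1 hp0
    refine ⟨h, hmono.mono (by simp), fun x hx => ?_⟩
    simpa [hp0, hp0'] using fun q hq => hsign x (Finset.mem_union_right _ hx) q (hQ hq)
  have hdeg := natDegree_map_eq_of_sign_coeff_eq hcop
  have hmonoZ : StrictMonoOn h (familyRoots Q₀ φ₁) := hmono.mono (by simp)
  have hsignZ := fun x hx => hsign x (Finset.mem_union_left A hx)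
  have hmaps := mapsTo_familyRoots (fun q hq => (hz q hq).2) fun x hx q hq => hsignZ x hx q (hQ hq)
  have hsurj := (hm'.mono hQ).surjOn_familyRoots hz hmonoZ.injOn fun x hx q hq =>
    hsignZ x hx q (hQ hq)
  obtain ⟨k, hk, heq, hkp⟩ := PolynomialIVT.exists_strictMonoOn_sign_eval_eq hp0 hdeg
    (by rw [Polynomial.leadingCoeff, Polynomial.leadingCoeff, ← hdeg, Polynomial.coeff_map,
      Polynomial.coeff_map, hcop])
    (Polynomial.derivative_map p φ₁ ▸ Finset.subset_biUnion_of_mem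
      (fun q => (q.map φ₁).roots.toFinset) hd)
    hmonoZ (fun z hz => hp z hz (h z) (hmaps hz) (hsignZ z hz)) A
  refine ⟨k, hk.mono (by simp), fun x hx => ?_⟩
  refine (Finset.forall_mem_insert ..).2 ⟨hkp x hx, fun q hq => ?_⟩
  rw [hsign x (Finset.mem_union_right _ hx) q (hQ hq)]
  by_cases hq0 : q.map φ₂ = 0
  · simp [hq0]
  have hsub : Insert.insert x (familyRoots Q₀ φ₁ : Set R₁) ⊆ (familyRoots Q₀ φ₁ ∪ A : Finset R₁) :=
    Set.insert_subset (by simp [hx]) (by simp)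
  exact PolynomialIVT.sign_eval_eq_of_eqOn (hmono.mono hsub) (hk.mono hsub) heq fun c hc =>
    hsurj (mem_familyRoots.2 ⟨q, hq, hq0, hc⟩)

end SignMatch

section Elimination

open scoped Polynomial
open SignType (sign)

theorem exists_strictMonoOn_finset {α R : Type*} [LinearOrder α] [Semiring R] [PartialOrder R]
    [IsStrictOrderedRing R] (A : Finset α) : ∃ h : α → R, StrictMonoOn h A := by
  refine ⟨fun x => (A.filter (· < x)).card, fun x hx y _ hxy => ?_⟩
  refine Nat.cast_lt.2 (Finset.card_lt_card (Finset.ssubset_iff_subset_ne.2 ⟨?_, fun h => ?_⟩))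
  · exact Finset.monotone_filter_right A fun z _ hz => hz.trans hxy
  · simpa using h.ge (Finset.mem_filter.2 ⟨hx, hxy⟩)

variable {R₁ R₂ B : Type*} [Field R₁] [LinearOrder R₁] [Field R₂] [LinearOrder R₂] [CommRing B]

/-- `r` is a remainder of a pseudo-division of `p` by the part of `q` of degree at most `j`. The
power of the leading coefficient is even, so that it does not affect signs. -/
def IsPseudoRemainder (p q : B[X]) (j : ℕ) (r : B[X]) : Prop :=
  r.degree < j ∧ ∃ (m : ℕ) (s : B[X]),
    .C ((q.coeff j ^ m) ^ 2) * p = (q : PowerSeries B).trunc (j + 1) * s + r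

theorem exists_isPseudoRemainder (p q : B[X]) (j : ℕ) : ∃ r, IsPseudoRemainder p q j r := by
  suffices ∀ N : ℕ, ∀ p : B[X], p.degree < N → ∃ r, IsPseudoRemainder p q j r from
    this _ p (Polynomial.degree_lt_iff_coeff_zero _ _ |>.2 fun i hi =>
      Polynomial.coeff_eq_zero_of_natDegree_lt hi : p.degree < (p.natDegree + 1 : ℕ))
  intro N
  induction N with
  | zero =>
    exact fun p hp => ⟨p, hp.trans_le (by exact_mod_cast Nat.zero_le j), 0, 0, by simp⟩
  | succ N ih =>
    intro p hp
    rcases Nat.lt_or_ge N j with hj | hj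
    · exact ⟨p, hp.trans_le (by exact_mod_cast hj), 0, 0, by simp⟩
    obtain ⟨r, hr, m, s, e⟩ := ih (.C (q.coeff j ^ 2) * p -
      .C (q.coeff j * p.coeff N) * .X ^ (N - j) * (q : PowerSeries B).trunc (j + 1)) (by
        rw [Polynomial.degree_lt_iff_coeff_zero] at hp ⊢
        intro i hi
        rw [mul_assoc, Polynomial.coeff_sub, Polynomial.coeff_C_mul, Polynomial.coeff_C_mul,
          Polynomial.coeff_X_pow_mul', if_pos (by lia), PowerSeries.coeff_trunc,
          Polynomial.coeff_coe]
        rcases hi.eq_or_lt with rfl | hi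
        · rw [if_pos (by lia), Nat.sub_sub_self hj]
          ring
        · rw [hp i hi, if_neg (by lia)]
          simp)
    refine ⟨r, hr, m + 1,
      s + .C ((q.coeff j ^ m) ^ 2 * (q.coeff j * p.coeff N)) * .X ^ (N - j), ?_⟩
    simp only [map_mul, map_pow] at e ⊢
    linear_combination e

theorem IsPseudoRemainder.sign_eval_eq [IsStrictOrderedRing R₁] {p q r : B[X]} {φ : B →+* R₁}
    (hr : IsPseudoRemainder p q (q.map φ).natDegree r) (hq : q.map φ ≠ 0) {x : R₁}
    (hx : (q.map φ).eval x = 0) : sign ((p.map φ).eval x) = sign ((r.map φ).eval x) := by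
  obtain ⟨-, m, s, e⟩ := hr
  have htrunc : ((q : PowerSeries B).trunc ((q.map φ).natDegree + 1)).map φ = q.map φ := by
    ext i
    rw [Polynomial.coeff_map, PowerSeries.coeff_trunc, Polynomial.coeff_coe, Polynomial.coeff_map]
    split_ifs with hi
    · rfl
    · rw [map_zero, ← Polynomial.coeff_map, Polynomial.coeff_eq_zero_of_natDegree_lt (by lia)]
  have hlead : φ (q.coeff (q.map φ).natDegree) ≠ 0 := by
    rwa [← Polynomial.coeff_map, ← Polynomial.leadingCoeff, Polynomial.leadingCoeff_ne_zero]
  have heval := congrArg (fun P => (P.map φ).eval x) e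
  simp only [Polynomial.map_mul, Polynomial.map_add, htrunc, Polynomial.eval_mul,
    Polynomial.eval_add, hx, Polynomial.map_C, Polynomial.eval_C, zero_mul, zero_add] at heval
  have hpos : 0 < φ ((q.coeff (q.map φ).natDegree ^ m) ^ 2) := by
    rw [map_pow, map_pow]
    positivity
  rw [← heval, sign_mul, sign_pos hpos, one_mul]

theorem sign_eval_eq_of_mem_familyRoots [IsStrictOrderedRing R₁] [IsStrictOrderedRing R₂]
    {p : B[X]} {Q₀ Q : Finset B[X]} {φ₁ : B →+* R₁} {φ₂ : B →+* R₂} (hQ : Q₀ ⊆ Q)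
    (hco : ∀ q ∈ Q₀, ∀ i, sign (φ₁ (q.coeff i)) = sign (φ₂ (q.coeff i)))
    {r : B[X] → ℕ → B[X]} (hr : ∀ q j, IsPseudoRemainder p q j (r q j))
    (hrQ : ∀ q ∈ Q₀, ∀ j ≤ q.natDegree, r q j ∈ Q) {x : R₁} {y : R₂}
    (hx : x ∈ familyRoots Q₀ φ₁)
    (hxy : ∀ q ∈ Q, sign ((q.map φ₁).eval x) = sign ((q.map φ₂).eval y)) :
    sign ((p.map φ₁).eval x) = sign ((p.map φ₂).eval y) := by
  obtain ⟨q, hq, hq0, hqx⟩ := mem_familyRoots.1 hx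
  have hqy : (q.map φ₂).eval y = 0 := by
    rw [← sign_eq_zero_iff, ← hxy q (hQ hq), hqx, sign_zero]
  have hq0' := mt (map_eq_zero_iff_of_sign_coeff_eq (hco q hq)).2 hq0
  have hdeg := natDegree_map_eq_of_sign_coeff_eq (hco q hq)
  rw [(hr q _).sign_eval_eq hq0 hqx, (hr q _).sign_eval_eq hq0' hqy, ← hdeg]
  exact hxy _ (hrQ q hq _ Polynomial.natDegree_map_le)

variable (R₁ R₂) in
/-- The signs of finitely many elements of `B` determine the sign patterns that `Q` realizes: two
specializations agreeing in sign on those elements are matched, in both directions. -/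
def Controlled (Q : Finset B[X]) : Prop :=
  ∃ Q' : Finset B, ∀ (φ₁ : B →+* R₁) (φ₂ : B →+* R₂),
    (∀ b ∈ Q', sign (φ₁ b) = sign (φ₂ b)) → SignMatch Q φ₁ φ₂ ∧ SignMatch Q φ₂ φ₁

theorem Controlled.mono {Q Q' : Finset B[X]} (h : Controlled R₁ R₂ Q) (hQ : Q' ⊆ Q) :
    Controlled R₁ R₂ Q' :=
  h.imp fun _ hS φ₁ φ₂ hφ => (hS φ₁ φ₂ hφ).imp (·.mono hQ) (·.mono hQ)

variable [IsStrictOrderedRing R₁] [IsStrictOrderedRing R₂]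

theorem controlled_of_forall_eq_zero {Q : Finset B[X]} (hQ : ∀ q ∈ Q, q = 0) :
    Controlled R₁ R₂ Q := by
  refine ⟨∅, fun φ₁ φ₂ _ => ⟨fun A => ?_, fun A => ?_⟩⟩
  · exact (exists_strictMonoOn_finset A).imp fun h hh => ⟨hh, fun x _ q hq => by simp [hQ q hq]⟩
  · exact (exists_strictMonoOn_finset A).imp fun h hh => ⟨hh, fun x _ q hq => by simp [hQ q hq]⟩

variable [PolynomialIVT R₁] [PolynomialIVT R₂]

open Classical in
theorem controlled_insert {d : ℕ} {p : B[X]} {Q₀ : Finset B[X]}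
    (hd : p.derivative ∈ Q₀) (hQ₀ : ∀ q ∈ Q₀, q.natDegree ≤ d)
    (hlow : ∀ Q : Finset B[X], (∀ q ∈ Q, q.degree < d) → Controlled R₁ R₂ (Q ∪ Q₀)) :
    Controlled R₁ R₂ (insert p Q₀) := by
  choose r hr using exists_isPseudoRemainder p
  let Rem : Finset B[X] := Q₀.biUnion fun q => (Finset.range (d + 1)).image (r q)
  have hRem : ∀ q ∈ Q₀, ∀ j ≤ q.natDegree, r q j ∈ Rem ∪ Q₀ := fun q hq j hj =>
    Finset.mem_union_left _ (Finset.mem_biUnion.2 ⟨q, hq, Finset.mem_image_of_mem _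
      (Finset.mem_range.2 (Nat.lt_succ_of_le (hj.trans (hQ₀ q hq))))⟩)
  obtain ⟨S, hS⟩ := hlow Rem (by
    simp only [Rem, Finset.mem_biUnion, Finset.mem_image, Finset.mem_range]
    rintro _ ⟨q, -, j, hj, rfl⟩
    exact (hr q j).1.trans_le (by exact_mod_cast Nat.lt_succ_iff.1 hj))
  refine ⟨S ∪ (insert p Q₀).biUnion Polynomial.coeffs, fun φ₁ φ₂ hφ => ?_⟩
  obtain ⟨hm, hm'⟩ := hS φ₁ φ₂ fun b hb => hφ b (Finset.mem_union_left _ hb)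
  have hco : ∀ q ∈ insert p Q₀, ∀ i, sign (φ₁ (q.coeff i)) = sign (φ₂ (q.coeff i)) := by
    intro q hq i
    by_cases hi : q.coeff i = 0
    · simp [hi]
    · exact hφ _ (Finset.mem_union_right _
        (Finset.mem_biUnion.2 ⟨q, hq, Polynomial.coeff_mem_coeffs hi⟩))
  have hco₀ := fun q hq => hco q (Finset.mem_insert_of_mem hq)
  exact ⟨hm.insert Finset.subset_union_right hd hm' hco fun x hx y _ hxy =>
      sign_eval_eq_of_mem_familyRoots Finset.subset_union_right hco₀ hr hRem hx hxy,
    hm'.insert Finset.subset_union_right hd hm (fun q hq i => (hco q hq i).symm)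
      fun x hx y _ hxy => sign_eval_eq_of_mem_familyRoots Finset.subset_union_right
        (fun q hq i => (hco₀ q hq i).symm) hr hRem hx hxy⟩

/- For a fixed degree bound one inducts on the number of polynomials of top degree, allowing
arbitrary further polynomials of smaller degree: pseudo-remainders and derivatives are of this
kind. -/
open Classical in
theorem controlled_of_degree_lt (d : ℕ) :
    ∀ Q : Finset B[X], (∀ q ∈ Q, q.degree < d) → Controlled R₁ R₂ Q := by
  induction d with
  | zero => exact fun Q hQ => controlled_of_forall_eq_zero fun q hq => by simpa using hQ q hq
  | succ d ih =>
    suffices ∀ T : Finset B[X], (∀ q ∈ T, q.natDegree ≤ d) →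
        ∀ Q : Finset B[X], (∀ q ∈ Q, q.degree < d) → Controlled R₁ R₂ (Q ∪ T) by
      intro Q hQ
      simpa using this Q
        (fun q hq => Polynomial.natDegree_le_iff_coeff_eq_zero.2
          ((Polynomial.degree_lt_iff_coeff_zero q _).1 (hQ q hq))) ∅ (by simp)
    intro T
    induction T using Finset.induction_on with
    | empty => exact fun _ Q hQ => by simpa using ih Q hQ
    | insert p T _ ihT =>
      intro hT Q hQ
      obtain ⟨hp, hT⟩ := (Finset.forall_mem_insert ..).1 hT
      have hQ' : ∀ q ∈ insert p.derivative Q, q.degree < d :=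
        (Finset.forall_mem_insert ..).2 ⟨(Polynomial.degree_lt_iff_coeff_zero _ _).2 fun i hi => by
          rw [Polynomial.coeff_derivative, Polynomial.coeff_eq_zero_of_natDegree_lt (by lia),
            zero_mul], hQ⟩
      refine (controlled_insert (p := p) (Q₀ := insert p.derivative Q ∪ T) (d := d) (by simp)
        (fun q hq => ?_) fun Q₂ hQ₂ => ?_).mono (by grind)
      · exact (Finset.mem_union.1 hq).elim
          (fun hq => Polynomial.natDegree_le_of_degree_le (hQ' q hq).le) (hT q)
      · rw [← Finset.union_assoc]
        exact ihT hT _ fun q hq => (Finset.mem_union.1 hq).elim (hQ₂ q) (hQ' q)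

theorem controlled (Q : Finset B[X]) : Controlled R₁ R₂ Q :=
  controlled_of_degree_lt (Q.sup Polynomial.natDegree + 1) Q fun _ hq =>
    (Polynomial.degree_lt_iff_coeff_zero _ _).2 fun _ hi =>
      Polynomial.coeff_eq_zero_of_natDegree_lt
        ((Finset.le_sup (f := Polynomial.natDegree) hq).trans_lt hi)

end Elimination

section Transfer

open SignType (sign)

variable {R₁ R₂ : Type*} [Field R₁] [LinearOrder R₁] [IsStrictOrderedRing R₁] [PolynomialIVT R₁]
  [Field R₂] [LinearOrder R₂] [IsStrictOrderedRing R₂]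

theorem eval₂Hom_cons {B R : Type*} [CommRing B] [CommRing R] (φ : B →+* R) {n : ℕ} (y : R)
    (x : Fin n → R) (f : MvPolynomial (Fin (n + 1)) B) :
    eval₂Hom φ (Fin.cons y x : Fin (n + 1) → R) f =
      ((finSuccEquiv B n f).map (eval₂Hom φ x)).eval y := by
  suffices eval₂Hom φ (Fin.cons y x : Fin (n + 1) → R) =
      (Polynomial.eval₂RingHom (eval₂Hom φ x) y).comp (finSuccEquiv B n).toRingHom by
    rw [Polynomial.eval_map]
    exact RingHom.congr_fun this f
  ext i
  · simp [finSuccEquiv_apply]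
  · induction i using Fin.cases <;> simp [finSuccEquiv_apply]

open Classical in
theorem exists_finset_forall_exists_sign_eval₂Hom_eq [PolynomialIVT R₂] {B : Type*} [CommRing B]
    {n : ℕ} (Q : Finset (MvPolynomial (Fin n) B)) :
    ∃ Q' : Finset B, ∀ (φ₁ : B →+* R₁) (φ₂ : B →+* R₂), (∀ b ∈ Q', sign (φ₁ b) = sign (φ₂ b)) →
      ∀ x : Fin n → R₁, ∃ y : Fin n → R₂,
        ∀ q ∈ Q, sign (eval₂Hom φ₁ x q) = sign (eval₂Hom φ₂ y q) := by
  induction n with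
  | zero =>
    refine ⟨Q.image (coeff 0), fun φ₁ φ₂ hφ x => ⟨Fin.elim0, fun q hq => ?_⟩⟩
    obtain ⟨b, rfl⟩ := C_surjective (Fin 0) q
    simpa using hφ _ (Finset.mem_image_of_mem _ hq)
  | succ n ih =>
    obtain ⟨Q₁, hQ₁⟩ := controlled (R₁ := R₁) (R₂ := R₂) (Q.image (finSuccEquiv B n))
    obtain ⟨Q', hQ'⟩ := ih Q₁
    refine ⟨Q', fun φ₁ φ₂ hφ x => ?_⟩
    obtain ⟨y, hy⟩ := hQ' φ₁ φ₂ hφ (Fin.tail x)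
    obtain ⟨h, -, hh⟩ := (hQ₁ _ _ hy).1 {x 0}
    refine ⟨Fin.cons (h (x 0)) y, fun q hq => ?_⟩
    rw [← Fin.cons_self_tail x, eval₂Hom_cons, eval₂Hom_cons]
    exact hh _ (Finset.mem_singleton_self _) _ (Finset.mem_image_of_mem _ hq)

theorem PolynomialIVT.sign_map_eq (ι : R₁ →+* R₂) (c : R₁) : sign (ι c) = sign c := by
  have hnonneg : ∀ {c : R₁}, 0 ≤ c → 0 ≤ ι c := fun hc => ((isSquare_of_nonneg hc).map ι).nonneg
  have hmono : StrictMono ι := (monotone_iff_map_nonneg ι).2 (fun _ => hnonneg)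
    |>.strictMono_of_injective ι.injective
  rcases lt_trichotomy c 0 with h | rfl | h
  · rw [sign_neg h, sign_neg (by simpa using hmono h)]
  · simp
  · rw [sign_pos h, sign_pos (by simpa using hmono h)]

/- The Artin–Lang homomorphism theorem. -/
theorem PolynomialIVT.exists_sign_eval_eq [PolynomialIVT R₂] (ι : R₁ →+* R₂) {n : ℕ}
    (Q : Finset (MvPolynomial (Fin n) R₁)) (x : Fin n → R₂) :
    ∃ x' : Fin n → R₁, ∀ q ∈ Q, sign (eval₂Hom ι x q) = sign (eval x' q) := by
  obtain ⟨Q', hQ'⟩ := exists_finset_forall_exists_sign_eval₂Hom_eq (R₁ := R₂) (R₂ := R₁) Q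
  exact hQ' ι (.id R₁) (fun b _ => sign_map_eq ι b) x

end Transfer

section WeightedSumSq

variable {R A : Type*} [CommSemiring R] [CommSemiring A]

/-- The semiring of finite sums of elements `φ t * h ^ 2` with `t ∈ T` and `h ∈ S`. -/
def weightedSumSq (φ : R →+* A) (T : Subsemiring R) (S : Subsemiring A) : Subsemiring A :=
  (T.toSubmonoid.map φ ⊔ S.toSubmonoid.map (powMonoidHom 2)).subsemiringClosure

variable {φ : R →+* A} {T : Subsemiring R} {S : Subsemiring A}

theorem mul_sq_mem_weightedSumSq {t : R} (ht : t ∈ T) {h : A} (hh : h ∈ S) :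
    φ t * h ^ 2 ∈ weightedSumSq φ T S :=
  AddSubmonoid.subset_closure <| Submonoid.mul_mem_sup ⟨t, ht, rfl⟩ ⟨h, hh, rfl⟩

theorem map_mem_weightedSumSq {t : R} (ht : t ∈ T) : φ t ∈ weightedSumSq φ T S := by
  simpa using mul_sq_mem_weightedSumSq ht S.one_mem

theorem sq_mem_weightedSumSq {h : A} (hh : h ∈ S) : h ^ 2 ∈ weightedSumSq φ T S := by
  simpa using mul_sq_mem_weightedSumSq (φ := φ) T.one_mem hh

theorem weightedSumSq_induction {p : A → Prop} (zero : p 0)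
    (add : ∀ x y, p x → p y → p (x + y))
    (mul_sq : ∀ t ∈ T, ∀ h ∈ S, p (φ t * h ^ 2)) {x : A} (hx : x ∈ weightedSumSq φ T S) : p x := by
  rw [weightedSumSq, Submonoid.subsemiringClosure_mem] at hx
  induction hx using AddSubmonoid.closure_induction with
  | mem x hx =>
    obtain ⟨_, ⟨t, ht, rfl⟩, _, ⟨h, hh, rfl⟩, rfl⟩ := Submonoid.mem_sup.1 hx
    exact mul_sq t ht h hh
  | zero => exact zero
  | add x y _ _ hx hy => exact add x y hx hy

theorem weightedSumSq_mono {S' : Subsemiring A} (h : S ≤ S') :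
    weightedSumSq φ T S ≤ weightedSumSq φ T S' := fun _ =>
  weightedSumSq_induction (zero_mem _) (fun _ _ => add_mem) fun _ ht _ hh =>
    mul_sq_mem_weightedSumSq ht (h hh)

theorem exists_mem_weightedSumSq_of_directed {ι : Type*} [Nonempty ι] {S : ι → Subsemiring A}
    (hS : Directed (· ≤ ·) S) {U : Subsemiring A} (hU : ∀ h ∈ U, ∃ i, h ∈ S i) {x : A}
    (hx : x ∈ weightedSumSq φ T U) : ∃ i, x ∈ weightedSumSq φ T (S i) := by
  refine weightedSumSq_induction (p := fun x => ∃ i, x ∈ weightedSumSq φ T (S i))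
    ⟨Classical.arbitrary ι, zero_mem _⟩ ?_ ?_ hx
  · rintro x y ⟨i, hi⟩ ⟨j, hj⟩
    obtain ⟨k, hik, hjk⟩ := hS i j
    exact ⟨k, add_mem (weightedSumSq_mono hik hi) (weightedSumSq_mono hjk hj)⟩
  · intro t ht h hh
    exact (hU h hh).imp fun _ => mul_sq_mem_weightedSumSq ht

end WeightedSumSq

section RealClosedExtension

open scoped Polynomial

theorem exists_linearOrder_of_mem_or_neg_mem {K : Type*} [Field K] (P : RingPreordering K)
    (hP : ∀ x, x ∈ P ∨ -x ∈ P) :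
    ∃ (_ : LinearOrder K) (_ : IsStrictOrderedRing K), ∀ x, 0 ≤ x ↔ x ∈ P := by
  classical
  let C : RingCone K :=
    { P.toSubsemiring with
      eq_zero_of_mem_of_neg_mem' := RingPreordering.eq_zero_of_mem_of_neg_mem }
  have : HasMemOrNegMem C := ⟨hP⟩
  let _ : LinearOrder K := .mkOfAddGroupCone C
  have : IsOrderedRing K := .mkOfCone C
  refine ⟨inferInstance, IsOrderedRing.toIsStrictOrderedRing K, fun x => ?_⟩
  change x - 0 ∈ P ↔ x ∈ P
  rw [sub_zero]

/-- A preordering of a field `K` is inextensible if it does not extend to a preordering of any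
finite extension `K[X] / (f)` with `f` irreducible of degree different from `1`. -/
def IsInextensible {K : Type*} [Field K] (P : RingPreordering K) : Prop :=
  ∀ f : K[X], Irreducible f → f.natDegree ≠ 1 →
    ∃ G ∈ weightedSumSq Polynomial.C P.toSubsemiring ⊤, f ∣ 1 + G

theorem exists_X_sq_sub_C_dvd_sub {K : Type*} [Field K] {P : Subsemiring K}
    (hP : ∀ x, x ^ 2 ∈ P) (a : K) {G : K[X]} (hG : G ∈ weightedSumSq Polynomial.C P ⊤) :
    ∃ s ∈ P, ∃ s' ∈ P, ∃ w : K,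
      .X ^ 2 - .C a ∣ G - (.C (s + a * s') + .C w * .X) := by
  refine weightedSumSq_induction (p := fun G => ∃ s ∈ P, ∃ s' ∈ P, ∃ w : K,
    .X ^ 2 - .C a ∣ G - (.C (s + a * s') + .C w * .X))
    ⟨0, zero_mem _, 0, zero_mem _, 0, by simp⟩ ?_ ?_ hG
  · rintro G G' ⟨s, hs, s', hs', w, h⟩ ⟨z, hz, z', hz', w', h'⟩
    refine ⟨s + z, add_mem hs hz, s' + z', add_mem hs' hz', w + w', ?_⟩
    convert dvd_add h h' using 1
    simp only [map_add, map_mul]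
    ring
  · intro t ht q _
    have hdeg : (q %ₘ (.X ^ 2 - .C a)).natDegree ≤ 1 :=
      Nat.le_of_lt_succ <| by
        simpa using Polynomial.natDegree_modByMonic_lt q
          (Polynomial.monic_X_pow_sub_C a two_ne_zero) (fun h => by
            simpa using congrArg Polynomial.natDegree h)
    obtain ⟨v, u, huv⟩ := Polynomial.exists_eq_X_add_C_of_natDegree_le_one hdeg
    have hq := Polynomial.modByMonic_add_div q (.X ^ 2 - .C a)
    rw [huv] at hq
    refine ⟨t * u ^ 2, mul_mem ht (hP u), t * v ^ 2, mul_mem ht (hP v), 2 * t * u * v,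
      .C t * (q /ₘ (.X ^ 2 - .C a)) * (q + (.C v * .X + .C u)) + .C t * .C v ^ 2, ?_⟩
    simp only [map_add, map_mul, map_pow, map_ofNat]
    linear_combination -.C t * (q + (.C v * .X + .C u)) * hq

/- If `a` is not a square, then `-1` is congruent modulo `X ^ 2 - a` to some `s + a s' + w X` with
`s, s' ∈ P`, so that `-a = (1 + s) / s'`. -/
theorem IsInextensible.mem_or_neg_mem {K : Type*} [Field K] {P : RingPreordering K}
    (hP : IsInextensible P) (a : K) : a ∈ P ∨ -a ∈ P := by
  by_cases ha : ∃ b, b ^ 2 = a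
  · obtain ⟨b, rfl⟩ := ha
    exact .inl (P.pow_two_mem b)
  push Not at ha
  obtain ⟨G, hG, hdvd⟩ := hP _ (X_pow_sub_C_irreducible_of_prime Nat.prime_two ha) (by simp)
  obtain ⟨s, hs, s', hs', w, hGdvd⟩ := exists_X_sq_sub_C_dvd_sub (fun x => P.pow_two_mem x) a hG
  have hdvd' : (.X ^ 2 - .C a : K[X]) ∣ .C w * .X + .C (1 + s + a * s') := by
    convert dvd_sub hdvd hGdvd using 1
    simp only [map_add, map_one]
    ring
  have hzero := Polynomial.eq_zero_of_dvd_of_natDegree_lt hdvd' (by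
    rw [Polynomial.natDegree_X_pow_sub_C]
    exact Polynomial.natDegree_linear_le.trans_lt one_lt_two)
  have h0 : 1 + s + a * s' = 0 := by simpa using congrArg (Polynomial.coeff · 0) hzero
  have hs0 : s' ≠ 0 := by
    rintro rfl
    refine P.neg_one_notMem ?_
    rwa [show -1 = s by linear_combination -h0]
  right
  rw [show -a = (1 + s) * s'⁻¹ by field_simp; linear_combination -h0]
  exact mul_mem (add_mem (one_mem P) hs) (RingPreordering.inv_mem hs')

end RealClosedExtension

section Descent

open scoped Polynomial

variable {K : Type*} [Field K] [LinearOrder K] [IsStrictOrderedRing K] {a b : K}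

theorem eval_nonneg_of_mem_weightedSumSq {P : Subsemiring K} (hP : ∀ t ∈ P, 0 ≤ t) {G : K[X]}
    (hG : G ∈ weightedSumSq Polynomial.C P ⊤) (x : K) : 0 ≤ G.eval x := by
  refine weightedSumSq_induction (p := fun G => 0 ≤ G.eval x) (by simp) (fun G G' h h' => ?_)
    (fun t ht q _ => ?_) hG
  · simpa using add_nonneg h h'
  · simpa using mul_nonneg (hP t ht) (sq_nonneg (q.eval x))

theorem exists_mem_weightedSumSq_natDegree_le {K : Type*} [Field K] {P : Subsemiring K} {f G : K[X]}
    (hf : f.natDegree ≠ 0) (hG : G ∈ weightedSumSq Polynomial.C P ⊤) :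
    ∃ G' ∈ weightedSumSq Polynomial.C P ⊤, f ∣ G - G' ∧ G'.natDegree ≤ 2 * (f.natDegree - 1) := by
  refine weightedSumSq_induction (p := fun G => ∃ G' ∈ weightedSumSq Polynomial.C P ⊤, f ∣ G - G' ∧
    G'.natDegree ≤ 2 * (f.natDegree - 1)) ⟨0, zero_mem _, by simp, by simp⟩ ?_ ?_ hG
  · rintro G₁ G₂ ⟨G₁', h₁, hd₁, hn₁⟩ ⟨G₂', h₂, hd₂, hn₂⟩
    refine ⟨G₁' + G₂', add_mem h₁ h₂, ?_, Polynomial.natDegree_add_le_of_degree_le hn₁ hn₂⟩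
    simpa [add_sub_add_comm] using dvd_add hd₁ hd₂
  · intro t ht q _
    refine ⟨.C t * (q % f) ^ 2, mul_sq_mem_weightedSumSq ht (Subsemiring.mem_top _),
      ⟨.C t * (q / f) * (q + q % f), ?_⟩, ?_⟩
    · linear_combination (-.C t * (q + q % f)) * EuclideanDomain.div_add_mod q f
    · have hmod := Polynomial.natDegree_mod_lt q hf
      exact (Polynomial.natDegree_C_mul_le _ _).trans
        (Polynomial.natDegree_pow_le_of_le 2 (by omega))

/- After reducing `G` modulo `f`, the cofactor of `f` in `1 + G` has smaller degree than `f` and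
changes sign as well, which allows descent on the degree. -/
theorem not_dvd_one_add_of_eval_mul_eval_neg {P : Subsemiring K} (hP : ∀ t ∈ P, 0 ≤ t) {f G : K[X]}
    (hf : f.eval a * f.eval b < 0) (hG : G ∈ weightedSumSq Polynomial.C P ⊤) : ¬ f ∣ 1 + G := by
  induction hd : f.natDegree using Nat.strong_induction_on generalizing f G with
  | _ d ih =>
  intro hdvd
  have hd0 : f.natDegree ≠ 0 := by
    intro h0
    rw [Polynomial.eq_C_of_natDegree_eq_zero h0] at hf
    simpa using hf.not_ge (by simpa using mul_self_nonneg _)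
  obtain ⟨G', hG', hGG', hdeg⟩ := exists_mem_weightedSumSq_natDegree_le hd0 hG
  obtain ⟨g, hg⟩ : f ∣ 1 + G' := by
    convert dvd_sub hdvd hGG' using 1
    ring
  have hpos (x : K) : 0 < f.eval x * g.eval x := by
    rw [← Polynomial.eval_mul, ← hg, Polynomial.eval_add, Polynomial.eval_one]
    linarith [eval_nonneg_of_mem_weightedSumSq hP hG' x]
  have hfg : f * g ≠ 0 := fun h => (hpos a).ne' (by simp [← Polynomial.eval_mul, h])
  have hn : f.natDegree + g.natDegree ≤ 2 * (f.natDegree - 1) := by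
    rw [← Polynomial.natDegree_mul (left_ne_zero_of_mul hfg) (right_ne_zero_of_mul hfg), ← hg]
    exact (Polynomial.natDegree_add_le _ _).trans (by simpa using hdeg)
  have hgab : g.eval a * g.eval b < 0 := by
    have := mul_pos (hpos a) (hpos b)
    rw [mul_mul_mul_comm] at this
    exact neg_of_mul_pos_right this hf.le
  exact ih _ (by omega) hgab hG' rfl ⟨f, by rw [hg, mul_comm]⟩

theorem exists_irreducible_dvd_eval_mul_eval_neg {p : K[X]} (hp : p.eval a * p.eval b < 0) :
    ∃ f : K[X], Irreducible f ∧ f ∣ p ∧ f.eval a * f.eval b < 0 := by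
  induction p using WfDvdMonoid.induction_on_irreducible with
  | zero => simp at hp
  | unit u hu =>
    obtain ⟨r, -, rfl⟩ := Polynomial.isUnit_iff.1 hu
    simpa using hp.not_ge (by simpa using mul_self_nonneg r)
  | mul q i _ hi ih =>
    by_cases h : i.eval a * i.eval b < 0
    · exact ⟨i, hi, dvd_mul_right _ _, h⟩
    rw [Polynomial.eval_mul, Polynomial.eval_mul, mul_mul_mul_comm] at hp
    obtain ⟨f, hf, hfq, hfab⟩ := ih (neg_of_mul_neg_right hp (not_lt.1 h))
    exact ⟨f, hf, hfq.mul_left _, hfab⟩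

theorem exists_mem_Ioo_eval_eq_zero_of_natDegree_eq_one {f : K[X]} (hf : f.natDegree = 1)
    (hab : a < b) (hfab : f.eval a * f.eval b < 0) : ∃ x ∈ Set.Ioo a b, f.eval x = 0 := by
  obtain ⟨c, hc, d, rfl⟩ := Polynomial.natDegree_eq_one.1 hf
  have heval (x : K) : (Polynomial.C c * .X + .C d).eval x = c * (x - -d / c) := by
    simp; field_simp; ring
  refine ⟨-d / c, ?_, by simp [heval]⟩
  rw [heval, heval, mul_mul_mul_comm] at hfab
  rcases mul_neg_iff.1 (neg_of_mul_neg_right hfab (mul_self_nonneg c)) with h | h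
  · exact absurd hab (by linarith)
  · exact ⟨by linarith, by linarith⟩

theorem IsInextensible.polynomialIVT {P : RingPreordering K} (hP : IsInextensible P)
    (h0 : ∀ t ∈ P, 0 ≤ t) : PolynomialIVT K where
  exists_eval_eq_zero {p a b} hab hp := by
    obtain ⟨f, hf, hfp, hfab⟩ := exists_irreducible_dvd_eval_mul_eval_neg hp
    have hdeg : f.natDegree = 1 := by
      by_contra hdeg
      obtain ⟨G, hG, hdvd⟩ := hP f hf hdeg
      exact not_dvd_one_add_of_eval_mul_eval_neg h0 hfab hG hdvd
    obtain ⟨x, hx, hfx⟩ := exists_mem_Ioo_eval_eq_zero_of_natDegree_eq_one hdeg hab hfab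
    exact ⟨x, hx, Polynomial.eval_eq_zero_of_dvd_of_eval_eq_zero hfp hfx⟩

end Descent

section MaximalExtension

open scoped Polynomial IntermediateField

variable {F Ω : Type*} [Field F] [Field Ω] [Algebra F Ω] {T : RingPreordering F}

theorem neg_one_notMem_weightedSumSq_bot (T : RingPreordering F) :
    -1 ∉ weightedSumSq (algebraMap F Ω) T.toSubsemiring
      (⊥ : IntermediateField F Ω).toSubsemiring := by
  intro hmem
  obtain ⟨t, ht, h⟩ : ∃ t ∈ T, algebraMap F Ω t = -1 := by
    refine weightedSumSq_induction (p := fun x => ∃ t ∈ T, algebraMap F Ω t = x)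
      ⟨0, zero_mem T, map_zero _⟩ ?_ ?_ hmem
    · rintro _ _ ⟨t, ht, rfl⟩ ⟨t', ht', rfl⟩
      exact ⟨t + t', add_mem ht ht', map_add ..⟩
    · rintro t ht _ ⟨h, rfl⟩
      exact ⟨t * h ^ 2, mul_mem ht (T.pow_two_mem h), by rw [map_mul, map_pow]; rfl⟩
  refine T.neg_one_notMem ?_
  rwa [← (algebraMap F Ω).injective (show algebraMap F Ω t = algebraMap F Ω (-1) by simpa using h)]

theorem exists_maximal_neg_one_notMem_weightedSumSq (T : RingPreordering F) :
    ∃ K : IntermediateField F Ω, Maximal (fun K : IntermediateField F Ω =>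
      -1 ∉ weightedSumSq (algebraMap F Ω) T.toSubsemiring K.toSubsemiring) K := by
  refine (zorn_le_nonempty₀ _ (fun c hc hchain K₀ hK₀ => ?_) ⊥
    (neg_one_notMem_weightedSumSq_bot T)).imp fun _ => And.right
  have : Nonempty c := ⟨K₀, hK₀⟩
  have hdir : Directed (· ≤ ·) ((↑) : c → IntermediateField F Ω) := hchain.directed
  refine ⟨⨆ K : c, K, fun hmem => ?_, fun K hK =>
    le_iSup ((↑) : c → IntermediateField F Ω) ⟨K, hK⟩⟩
  obtain ⟨K, hK⟩ := exists_mem_weightedSumSq_of_directed (S := fun K : c => K.1.toSubsemiring) hdir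
    (fun h hh => by
      simpa using (IntermediateField.coe_iSup_of_directed hdir).subset hh) hmem
  exact hc K.2 hK

/-- The preordering that `T` generates in an intermediate field `K`, when this is proper. -/
def extendedPreordering (T : RingPreordering F) (K : IntermediateField F Ω)
    (hK : -1 ∉ weightedSumSq (algebraMap F Ω) T.toSubsemiring K.toSubsemiring) :
    RingPreordering K where
  toSubsemiring := (weightedSumSq (algebraMap F Ω) T.toSubsemiring K.toSubsemiring).comap
    (algebraMap K Ω)
  mem_of_isSquare' := by
    rintro _ ⟨x, rfl⟩
    simpa [← pow_two] using sq_mem_weightedSumSq x.2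
  neg_one_notMem' h := hK (by simpa using h)

theorem algebraMap_mem_extendedPreordering {K : IntermediateField F Ω}
    (hK : -1 ∉ weightedSumSq (algebraMap F Ω) T.toSubsemiring K.toSubsemiring) {t : F}
    (ht : t ∈ T) : algebraMap F K t ∈ extendedPreordering T K hK :=
  map_mem_weightedSumSq (φ := algebraMap F Ω) ht

theorem exists_mem_weightedSumSq_aeval_eq {K : IntermediateField F Ω}
    (hK : -1 ∉ weightedSumSq (algebraMap F Ω) T.toSubsemiring K.toSubsemiring) {α : Ω}
    (hα : IsAlgebraic K α) {x : Ω} (hx : x ∈ weightedSumSq (algebraMap F Ω) T.toSubsemiring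
      (K⟮α⟯.restrictScalars F).toSubsemiring) :
    ∃ G ∈ weightedSumSq Polynomial.C (extendedPreordering T K hK).toSubsemiring ⊤,
      Polynomial.aeval α G = x := by
  refine weightedSumSq_induction (p := fun x => ∃ G ∈ weightedSumSq Polynomial.C
    (extendedPreordering T K hK).toSubsemiring ⊤, Polynomial.aeval α G = x)
    ⟨0, zero_mem _, map_zero _⟩ ?_ ?_ hx
  · rintro _ _ ⟨G, hG, rfl⟩ ⟨G', hG', rfl⟩
    exact ⟨G + G', add_mem hG hG', map_add ..⟩
  · intro t ht h hh
    replace hh : h ∈ K⟮α⟯.toSubalgebra := hh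
    rw [IntermediateField.adjoin_simple_toSubalgebra_of_isAlgebraic hα,
      Algebra.adjoin_singleton_eq_range_aeval] at hh
    obtain ⟨q, rfl⟩ := hh
    refine ⟨.C (algebraMap F K t) * q ^ 2,
      mul_sq_mem_weightedSumSq (algebraMap_mem_extendedPreordering hK ht)
        (Subsemiring.mem_top _), ?_⟩
    simp [← IsScalarTower.algebraMap_apply]

theorem isInextensible_extendedPreordering [IsAlgClosed Ω] {K : IntermediateField F Ω}
    (hK : Maximal (fun K : IntermediateField F Ω =>
      -1 ∉ weightedSumSq (algebraMap F Ω) T.toSubsemiring K.toSubsemiring) K) :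
    IsInextensible (extendedPreordering T K hK.prop) := by
  intro f hf hdeg
  obtain ⟨α, hα⟩ := IsAlgClosed.exists_aeval_eq_zero Ω f hf.degree_pos.ne'
  have hαK : α ∉ K := fun h => hdeg <| Polynomial.natDegree_eq_of_degree_eq_some <|
    Polynomial.degree_eq_one_of_irreducible_of_root hf (x := ⟨α, h⟩) <|
      (algebraMap K Ω).injective <| by
        rw [map_zero, ← hα, ← Polynomial.aeval_algebraMap_apply_eq_algebraMap_eval]
        rfl
  have hmem : -1 ∈ weightedSumSq (algebraMap F Ω) T.toSubsemiring
      (K⟮α⟯.restrictScalars F).toSubsemiring := by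
    by_contra hL
    exact hαK (hK.le_of_ge hL (fun x hx => K⟮α⟯.algebraMap_mem ⟨x, hx⟩)
      (IntermediateField.mem_adjoin_simple_self K α))
  obtain ⟨G, hG, hGα⟩ := exists_mem_weightedSumSq_aeval_eq hK.prop ⟨f, hf.ne_zero, hα⟩ hmem
  exact ⟨G, hG, (Dvd.intro _ (minpoly.eq_of_irreducible hf hα)).trans
    (minpoly.dvd K α (by simp [hGα]))⟩

theorem exists_polynomialIVT_extension {F : Type*} [Field F] (T : RingPreordering F) :
    ∃ (K : IntermediateField F (AlgebraicClosure F)) (_ : LinearOrder K)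
      (_ : IsStrictOrderedRing K), PolynomialIVT K ∧ ∀ t ∈ T, 0 ≤ algebraMap F K t := by
  obtain ⟨K, hK⟩ := exists_maximal_neg_one_notMem_weightedSumSq (Ω := AlgebraicClosure F) T
  have hP := isInextensible_extendedPreordering hK
  obtain ⟨_, _, hle⟩ := exists_linearOrder_of_mem_or_neg_mem _ hP.mem_or_neg_mem
  exact ⟨K, inferInstance, inferInstance, hP.polynomialIVT fun t => (hle t).2,
    fun t ht => (hle _).2 (algebraMap_mem_extendedPreordering hK.prop ht)⟩

end MaximalExtension

section RealPrime

universe u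

variable {A : Type u} [CommRing A]

/-- The multiplicative set `1 + T`. -/
def onePlus (T : Subsemiring A) : Submonoid A where
  carrier := {x | ∃ t ∈ T, 1 + t = x}
  one_mem' := ⟨0, zero_mem T, add_zero 1⟩
  mul_mem' := by
    rintro _ _ ⟨t, ht, rfl⟩ ⟨t', ht', rfl⟩
    exact ⟨t + t' + t * t', add_mem (add_mem ht ht') (mul_mem ht ht'), by ring⟩

theorem disjoint_bot_onePlus (T : RingPreordering A) :
    Disjoint ((⊥ : Ideal A) : Set A) (onePlus T.toSubsemiring) := by
  rw [Submodule.bot_coe, Set.disjoint_singleton_left]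
  rintro ⟨t, ht, h⟩
  exact T.neg_one_notMem (by rwa [show -1 = t by linear_combination -h])

theorem exists_maximal_disjoint_onePlus (T : RingPreordering A) :
    ∃ I, Maximal (fun I : Ideal A => Disjoint (I : Set A) (onePlus T.toSubsemiring)) I := by
  refine (zorn_le_nonempty₀ {I : Ideal A | Disjoint (I : Set A) (onePlus T.toSubsemiring)}
    (fun c hc hchain J hJ => ⟨sSup c, Set.disjoint_left.2 fun x hx hxT => ?_, fun I => le_sSup⟩) ⊥
    (disjoint_bot_onePlus T)).imp fun _ => And.right
  obtain ⟨I, hI, hxI⟩ := (Submodule.mem_sSup_of_directed ⟨J, hJ⟩ hchain.directedOn).1 hx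
  exact Set.disjoint_left.1 (hc hI) hxI hxT

/- If `a ∉ I`, then `I + (a)` contains some `1 + t' = y + c a` with `y ∈ I`, and squaring gives
`(1 + t') ^ 2 + c ^ 2 t ∈ I`, an element of `1 + T`. -/
theorem exists_isPrime_forall_sq_add_mem (T : RingPreordering A) :
    ∃ I : Ideal A, I.IsPrime ∧ ∀ a, ∀ t ∈ T, a ^ 2 + t ∈ I → a ∈ I := by
  obtain ⟨I, hI⟩ := exists_maximal_disjoint_onePlus T
  have hdisj (t : A) (ht : t ∈ T) : 1 + t ∉ I := fun h => Set.disjoint_left.1 hI.1 h ⟨t, ht, rfl⟩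
  have hmax (J : Ideal A) (hJ : I < J) : ¬ Disjoint (J : Set A) (onePlus T.toSubsemiring) :=
    hI.not_prop_of_gt hJ
  refine ⟨I, Ideal.isPrime_of_maximally_disjoint I _ hI.1 hmax, fun a t ht hat => ?_⟩
  by_contra ha
  obtain ⟨_, hx, t', ht', rfl⟩ := Set.not_disjoint_iff.1 <|
    hmax (I ⊔ Ideal.span {a}) (by simpa [left_lt_sup, Ideal.span_le] using ha)
  obtain ⟨y, hy, z, hz, hyz⟩ := Submodule.mem_sup.1 hx
  obtain ⟨c, rfl⟩ := Ideal.mem_span_singleton'.1 hz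
  refine hdisj (t' + t' + t' ^ 2 + c ^ 2 * t) (add_mem (add_mem (add_mem ht' ht')
    (T.pow_two_mem t')) (mul_mem (T.pow_two_mem c) ht)) ?_
  rw [show 1 + (t' + t' + t' ^ 2 + c ^ 2 * t) = (1 + t' + c * a) * y + c ^ 2 * (a ^ 2 + t) by
    linear_combination -(1 + t' + c * a) * hyz]
  exact I.add_mem (I.mul_mem_left _ hy) (I.mul_mem_left _ hat)

theorem exists_mul_sq_eq_of_mem_weightedSumSq {I : Ideal A} [I.IsPrime] (T : RingPreordering A)
    {x : I.ResidueField} (hx : x ∈ weightedSumSq (algebraMap A I.ResidueField) T.toSubsemiring ⊤) :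
    ∃ s ∉ I, ∃ t ∈ T, x * algebraMap A I.ResidueField s ^ 2 = algebraMap A I.ResidueField t := by
  refine weightedSumSq_induction
    (p := fun x => ∃ s ∉ I, ∃ t ∈ T, x * algebraMap A I.ResidueField s ^ 2 = algebraMap A _ t)
    ⟨1, I.ne_top_iff_one.1 (Ideal.IsPrime.ne_top ‹_›), 0, zero_mem T, by simp⟩ ?_ ?_ hx
  · rintro x y ⟨s, hs, t, ht, hx⟩ ⟨s', hs', t', ht', hy⟩
    refine ⟨s * s', Ideal.IsPrime.mul_notMem ‹_› hs hs', t * s' ^ 2 + t' * s ^ 2,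
      add_mem (mul_mem ht (T.pow_two_mem s')) (mul_mem ht' (T.pow_two_mem s)), ?_⟩
    simp only [map_add, map_mul, map_pow, ← hx, ← hy]
    ring
  · intro t ht h _
    obtain ⟨a, s, hs, rfl⟩ := IsFractionRing.div_surjective (A := A ⧸ I) h
    obtain ⟨a, rfl⟩ := Ideal.Quotient.mk_surjective a
    obtain ⟨s, rfl⟩ := Ideal.Quotient.mk_surjective s
    have hs0 : s ∉ I := fun h => nonZeroDivisors.ne_zero hs (Ideal.Quotient.eq_zero_iff_mem.2 h)
    have hφs : algebraMap A I.ResidueField s ≠ 0 := mt Ideal.algebraMap_residueField_eq_zero.1 hs0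
    refine ⟨s, hs0, t * a ^ 2, mul_mem ht (T.pow_two_mem a), ?_⟩
    simp only [Ideal.algebraMap_quotient_residueField_mk, map_mul, map_pow]
    field_simp

theorem exists_ringHom_polynomialIVT (T : RingPreordering A) :
    ∃ (K : Type u) (_ : Field K) (_ : LinearOrder K) (_ : IsStrictOrderedRing K)
      (_ : PolynomialIVT K) (ψ : A →+* K), ∀ t ∈ T, 0 ≤ ψ t := by
  obtain ⟨I, hI, hreal⟩ := exists_isPrime_forall_sq_add_mem T
  let φ := algebraMap A I.ResidueField
  let T' : RingPreordering I.ResidueField :=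
    { weightedSumSq φ T.toSubsemiring ⊤ with
      mem_of_isSquare' := by
        rintro _ ⟨h, rfl⟩
        rw [← sq]
        exact sq_mem_weightedSumSq trivial
      neg_one_notMem' := fun h => by
        obtain ⟨s, hs, t, ht, hst⟩ := exists_mul_sq_eq_of_mem_weightedSumSq T h
        refine hs (hreal s t ht (Ideal.algebraMap_residueField_eq_zero.1 ?_))
        rw [map_add, map_pow, ← hst]
        ring }
  obtain ⟨K, _, _, hK, hT'⟩ := exists_polynomialIVT_extension T'
  exact ⟨K, inferInstance, inferInstance, inferInstance, hK, (algebraMap _ K).comp φ,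
    fun t ht => hT' _ (map_mem_weightedSumSq ht)⟩

end RealPrime

section Positivstellensatz

section PreorderingSpan

variable {A : Type*} [CommRing A] {s : Set A}

/-- The preordering generated by `s` (not required to be proper): the semiring generated by `s` and
all squares. -/
def preorderingSpan (s : Set A) : Subsemiring A :=
  Subsemiring.closure (s ∪ {a | IsSquare a})

theorem subset_preorderingSpan : s ⊆ preorderingSpan s :=
  Set.subset_union_left.trans Subsemiring.subset_closure

theorem sq_mem_preorderingSpan (a : A) : a ^ 2 ∈ preorderingSpan s :=
  Subsemiring.subset_closure (.inr (IsSquare.sq a))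

theorem exists_eq_add_mul_of_mem_preorderingSpan_insert {a x : A}
    (hx : x ∈ preorderingSpan (insert a s)) :
    ∃ t ∈ preorderingSpan s, ∃ t' ∈ preorderingSpan s, x = t + a * t' := by
  induction hx using Subsemiring.closure_induction with
  | mem x hx =>
    obtain (rfl | hx) | hx := hx
    · exact ⟨0, zero_mem _, 1, one_mem _, by ring⟩
    · exact ⟨x, subset_preorderingSpan hx, 0, zero_mem _, by ring⟩
    · exact ⟨x, Subsemiring.subset_closure (.inr hx), 0, zero_mem _, by ring⟩
  | zero => exact ⟨0, zero_mem _, 0, zero_mem _, by ring⟩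
  | one => exact ⟨1, one_mem _, 0, zero_mem _, by ring⟩
  | add x y _ _ hx hy =>
    obtain ⟨t, ht, t', ht', rfl⟩ := hx
    obtain ⟨u, hu, u', hu', rfl⟩ := hy
    exact ⟨t + u, add_mem ht hu, t' + u', add_mem ht' hu', by ring⟩
  | mul x y _ _ hx hy =>
    obtain ⟨t, ht, t', ht', rfl⟩ := hx
    obtain ⟨u, hu, u', hu', rfl⟩ := hy
    exact ⟨t * u + a ^ 2 * (t' * u'),
      add_mem (mul_mem ht hu) (mul_mem (sq_mem_preorderingSpan a) (mul_mem ht' hu')),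
      t * u' + t' * u, add_mem (mul_mem ht hu') (mul_mem ht' hu), by ring⟩

theorem map_preorderingSpan_le {B : Type*} [CommRing B] (φ : A →+* B) :
    (preorderingSpan s).map φ ≤ preorderingSpan (φ '' s) := by
  rw [preorderingSpan, RingHom.map_closureS, Set.image_union]
  exact Subsemiring.closure_mono <|
    Set.union_subset_union_right _ <| Set.image_subset_iff.2 fun _ => IsSquare.map φ

end PreorderingSpan

variable {R : Type*} [Field R] [LinearOrder R] [IsStrictOrderedRing R] [PolynomialIVT R] {n : ℕ}
  {s : Set (MvPolynomial (Fin n) R)}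

/- A proper preordering would be nonnegative at a point over some larger real closed field, and
then, by transfer, also at a point over `R`. -/
theorem neg_one_mem_preorderingSpan (hs : s.Finite) (h : ∀ x, ∃ g ∈ s, eval x g < 0) :
    -1 ∈ preorderingSpan s := by
  by_contra hneg
  let T : RingPreordering (MvPolynomial (Fin n) R) :=
    { preorderingSpan s with
      mem_of_isSquare' := fun ha => Subsemiring.subset_closure (.inr ha)
      neg_one_notMem' := hneg }
  obtain ⟨K, _, _, _, _, ψ, hψ⟩ := exists_ringHom_polynomialIVT T
  have hψ_eval : eval₂Hom (ψ.comp C) (fun i => ψ (X i)) = ψ :=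
    MvPolynomial.ringHom_ext (by simp) (by simp)
  obtain ⟨x, hx⟩ := PolynomialIVT.exists_sign_eval_eq (ψ.comp C) hs.toFinset fun i => ψ (X i)
  obtain ⟨g, hg, hlt⟩ := h x
  have hsign := hx g (hs.mem_toFinset.2 hg)
  rw [hψ_eval, sign_neg hlt, sign_eq_neg_one_iff] at hsign
  exact hsign.not_ge (hψ g (subset_preorderingSpan hg))

theorem exists_mul_eq_one_add_of_pos (hs : s.Finite) {F : MvPolynomial (Fin n) R}
    (hF : ∀ x, (∀ g ∈ s, 0 ≤ eval x g) → 0 < eval x F) :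
    ∃ t ∈ preorderingSpan s, ∃ t' ∈ preorderingSpan s, t * F = 1 + t' := by
  have hneg : -1 ∈ preorderingSpan (insert (-F) s) := by
    refine neg_one_mem_preorderingSpan (hs.insert _) fun x => ?_
    by_cases hx : ∀ g ∈ s, 0 ≤ eval x g
    · exact ⟨-F, s.mem_insert _, by simpa using hF x hx⟩
    · push Not at hx
      exact hx.imp fun g => And.imp_left (Set.mem_insert_of_mem _)
  obtain ⟨t', ht', t, ht, h⟩ := exists_eq_add_mul_of_mem_preorderingSpan_insert hneg
  exact ⟨t, ht, t', ht', by linear_combination h⟩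

end Positivstellensatz

section GenPreordering

variable {E : Type*} [CommRing E] {m : ℕ} {g : Fin m → E}

theorem genPreordering_subset_preorderingSpan :
    genPreordering g ⊆ preorderingSpan (Set.range g) := by
  rintro _ ⟨σ, hσ, rfl⟩
  refine sum_mem fun ν _ => mul_mem ?_ (prod_mem fun j _ => ?_)
  · generalize σ ν = x, hσ ν = hx
    induction hx with
    | zero => exact zero_mem _
    | sq_add a _ ih => exact add_mem (sq a ▸ sq_mem_preorderingSpan a) ih
  · split_ifs
    · exact subset_preorderingSpan ⟨j, rfl⟩
    · exact one_mem _

theorem prod_ite_mul_prod_ite (ν μ : Fin m → Bool) :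
    (∏ j, if ν j then g j else 1) * ∏ j, (if μ j then g j else 1) =
      (∏ j, if ν j && μ j then g j else 1) ^ 2 * ∏ j, if xor (ν j) (μ j) then g j else 1 := by
  simp only [← Finset.prod_mul_distrib, ← Finset.prod_pow]
  refine Finset.prod_congr rfl fun j _ => ?_
  cases ν j <;> cases μ j <;> simp [sq]

/-- The monoid of the products of a square and of distinct `g j`. -/
def squarefreeMonoid (g : Fin m → E) : Submonoid E where
  carrier := {x | ∃ (a : E) (ν : Fin m → Bool), x = a ^ 2 * ∏ j, if ν j then g j else 1}
  one_mem' := ⟨1, fun _ => false, by simp⟩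
  mul_mem' := by
    rintro _ _ ⟨a, ν, rfl⟩ ⟨b, μ, rfl⟩
    refine ⟨a * b * ∏ j, (if ν j && μ j then g j else 1), fun j => xor (ν j) (μ j), ?_⟩
    linear_combination (a ^ 2 * b ^ 2) * prod_ite_mul_prod_ite (g := g) ν μ

theorem preorderingSpan_le_subsemiringClosure :
    preorderingSpan (Set.range g) ≤ (squarefreeMonoid g).subsemiringClosure := by
  classical
  refine Subsemiring.closure_le.2 ?_
  rintro _ (⟨i, rfl⟩ | ⟨a, rfl⟩)
  · exact AddSubmonoid.subset_closure ⟨1, fun j => decide (j = i), by simp⟩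
  · exact AddSubmonoid.subset_closure ⟨a, fun _ => false, by simp [sq]⟩

theorem preorderingSpan_subset_genPreordering :
    (preorderingSpan (Set.range g) : Set E) ⊆ genPreordering g := by
  classical
  intro x hx
  have hx' := preorderingSpan_le_subsemiringClosure hx
  rw [Submonoid.subsemiringClosure_mem] at hx'
  clear hx
  induction hx' using AddSubmonoid.closure_induction with
  | mem y hy =>
    obtain ⟨a, ν, rfl⟩ := hy
    refine ⟨Pi.single ν (a ^ 2), fun μ => ?_, ?_⟩
    · obtain rfl | h := eq_or_ne μ ν
      · simpa using (IsSquare.sq a).isSumSq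
      · simp [h, IsSumSq.zero]
    · rw [Fintype.sum_eq_single ν fun μ h => by simp [h], Pi.single_eq_same]
  | zero => exact ⟨0, fun _ => .zero, by simp⟩
  | add y z _ _ hy hz =>
    obtain ⟨σ, hσ, rfl⟩ := hy
    obtain ⟨τ, hτ, rfl⟩ := hz
    exact ⟨σ + τ, fun ν => (hσ ν).add (hτ ν), by simp [add_mul, Finset.sum_add_distrib]⟩

theorem coe_preorderingSpan_range : (preorderingSpan (Set.range g) : Set E) = genPreordering g :=
  preorderingSpan_subset_genPreordering.antisymm genPreordering_subset_preorderingSpan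

end GenPreordering

theorem le_one_of_sq_le_two_mul {r : ℕ → ℝ} {B : ℝ} (h : ∀ m, r m ^ 2 ≤ r (2 * m))
    (hB : ∀ m, r m ≤ B) : r 1 ≤ 1 := by
  by_contra! h1
  have hpow (j : ℕ) : r 1 ^ (2 ^ j) ≤ r (2 ^ j) := by
    induction j with
    | zero => simp
    | succ j ih =>
      rw [pow_succ' 2 j]
      refine le_trans ?_ (h _)
      rw [pow_mul']
      exact pow_le_pow_left₀ (by positivity) ih 2
  obtain ⟨j, hj⟩ := pow_unbounded_of_one_lt B h1
  have hj' : r 1 ^ j ≤ r 1 ^ (2 ^ j) := pow_le_pow_right₀ h1.le Nat.lt_two_pow_self.le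
  exact (hj'.trans ((hpow j).trans (hB _))).not_gt hj

theorem apply_one_le_mul_apply_zero {v : ℕ → ℝ} {B c : ℝ} (hc : 0 < c) (h0 : 0 ≤ v 0)
    (h : ∀ m, v m ^ 2 ≤ v 0 * v (2 * m)) (hB : ∀ m, v m ≤ B * c ^ m) : v 1 ≤ c * v 0 := by
  obtain h0 | h0 := h0.eq_or_lt
  · have h1 := h 1
    rw [← h0, zero_mul] at h1
    simp [← h0, pow_eq_zero_iff two_ne_zero |>.1 (h1.antisymm (sq_nonneg _))]
  have hr := le_one_of_sq_le_two_mul (r := fun m => v m / (v 0 * c ^ m)) (B := B / v 0)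
    (fun m => by
      rw [div_pow, div_le_div_iff₀ (by positivity) (by positivity)]
      calc v m ^ 2 * (v 0 * c ^ (2 * m)) ≤ v 0 * v (2 * m) * (v 0 * c ^ (2 * m)) := by
            gcongr
            exact h m
        _ = v (2 * m) * (v 0 * c ^ m) ^ 2 := by ring)
    (fun m => by
      rw [div_le_div_iff₀ (by positivity) h0]
      linear_combination v 0 * hB m)
  rw [pow_one, div_le_one (by positivity)] at hr
  linarith

section PositiveFunctional

variable {E : Type*} [CommRing E] [Algebra ℝ E] {s : Set E}

theorem sq_apply_mul_le {L : E →ₗ[ℝ] ℝ} (hL : ∀ t ∈ preorderingSpan s, 0 ≤ L t) (x y : E) :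
    L (x * y) ^ 2 ≤ L (x ^ 2) * L (y ^ 2) := by
  have hquad (u : ℝ) : 0 ≤ L (y ^ 2) * (u * u) + 2 * L (x * y) * u + L (x ^ 2) := by
    have hexp : (u • y + x) ^ 2 = (u * u) • y ^ 2 + (2 * u) • (x * y) + x ^ 2 := by
      simp only [Algebra.smul_def, map_mul, map_ofNat]
      ring
    have h := hL _ (sq_mem_preorderingSpan (u • y + x))
    rw [hexp, map_add, map_add, map_smul, map_smul, smul_eq_mul, smul_eq_mul] at h
    linarith
  have h := discrim_le_zero hquad
  rw [discrim] at h
  linarith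

theorem apply_mul_pow_le {L : E →ₗ[ℝ] ℝ} (hL : ∀ t ∈ preorderingSpan s, 0 ≤ L t) {c : ℝ}
    (hc : 0 ≤ c) {a t t' : E} (ht : t ∈ preorderingSpan s)
    (h : t * (algebraMap ℝ E c - a ^ 2) = 1 + t') (m : ℕ) :
    L ((1 + t') * (a ^ m) ^ 2) ≤ L (1 + t') * c ^ m := by
  induction m with
  | zero => simp
  | succ m ih =>
    have hle := hL _ (mul_mem ht (sq_mem_preorderingSpan ((algebraMap ℝ E c - a ^ 2) * a ^ m)))
    have hexp : t * ((algebraMap ℝ E c - a ^ 2) * a ^ m) ^ 2 =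
        c • ((1 + t') * (a ^ m) ^ 2) - (1 + t') * (a ^ (m + 1)) ^ 2 := by
      rw [Algebra.smul_def, ← h]
      ring
    rw [hexp, map_sub, map_smul, smul_eq_mul] at hle
    linear_combination hle + c * ih

/- The certificate makes `L (a ^ (2 m))` grow at most like `c ^ m`, whereas by Cauchy–Schwarz it
grows at least like `(L (a ^ 2) / L 1) ^ m` along the powers `m` of two. -/
theorem apply_sq_le_of_certificate {L : E →ₗ[ℝ] ℝ} (hL : ∀ t ∈ preorderingSpan s, 0 ≤ L t) {c : ℝ}
    (hc : 0 < c) {a t t' : E} (ht : t ∈ preorderingSpan s) (ht' : t' ∈ preorderingSpan s)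
    (h : t * (algebraMap ℝ E c - a ^ 2) = 1 + t') : L (a ^ 2) ≤ c * L 1 := by
  have hv := apply_one_le_mul_apply_zero (v := fun m => L ((a ^ m) ^ 2)) (B := L (1 + t')) hc
    (hL _ (sq_mem_preorderingSpan _))
    (fun m => by simpa [show (a ^ (2 * m)) ^ 2 = ((a ^ m) ^ 2) ^ 2 by ring] using
      sq_apply_mul_le hL 1 ((a ^ m) ^ 2))
    (fun m => by
      refine le_trans ?_ (apply_mul_pow_le hL hc.le ht h m)
      have := hL _ (mul_mem ht' (sq_mem_preorderingSpan (a ^ m)))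
      rw [add_mul, one_mul, map_add]
      linarith)
  simpa using hv

theorem algebraMap_sub_mem_dualClosure {r : ℝ} (hr : 0 ≤ r) {a : E}
    (h : ∀ c > r ^ 2, ∃ t ∈ preorderingSpan s, ∃ t' ∈ preorderingSpan s,
      t * (algebraMap ℝ E c - a ^ 2) = 1 + t') :
    algebraMap ℝ E r - a ∈ dualClosure (preorderingSpan s : Set E) := by
  intro L hL
  have h1 : 0 ≤ L 1 := hL 1 (one_mem _)
  have hsq : L (a ^ 2) ≤ r ^ 2 * L 1 := by
    refine ge_of_tendsto ((continuous_mul_const (L 1)).continuousWithinAt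
      (s := Set.Ioi (r ^ 2)) (x := r ^ 2)) (eventually_mem_nhdsWithin.mono fun c hc => ?_)
    obtain ⟨t, ht, t', ht', e⟩ := h c hc
    exact apply_sq_le_of_certificate hL ((sq_nonneg r).trans_lt hc) ht ht' e
  have hcs := sq_apply_mul_le hL 1 a
  rw [one_mul, one_pow] at hcs
  have hle : L a ≤ r * L 1 := by
    refine (abs_le_of_sq_le_sq' ?_ (by positivity)).2
    calc L a ^ 2 ≤ L 1 * L (a ^ 2) := hcs
      _ ≤ L 1 * (r ^ 2 * L 1) := by gcongr
      _ = (r * L 1) ^ 2 := by ring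
  rw [Algebra.algebraMap_eq_smul_one, map_sub, map_smul, smul_eq_mul]
  linarith

theorem sq_mul_mem_dualClosure {x : E} (hx : x ∈ dualClosure (preorderingSpan s : Set E)) (a : E) :
    a ^ 2 * x ∈ dualClosure (preorderingSpan s : Set E) := fun L hL =>
  hx (L ∘ₗ LinearMap.mulLeft ℝ (a ^ 2)) fun _ ht => hL _ (mul_mem (sq_mem_preorderingSpan a) ht)

end PositiveFunctional

theorem exists_abs_eval_le_mul_pow {σ : Type*} {X : Set (σ → ℝ)} {w : (σ → ℝ) → ℝ}
    (hw1 : ∀ x ∈ X, 1 ≤ w x) (hw : ∀ x ∈ X, ∀ i, |x i| ≤ w x) (F : MvPolynomial σ ℝ) :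
    ∃ c ≥ 0, ∃ l : ℕ, ∀ x ∈ X, |eval x F| ≤ c * w x ^ l := by
  induction F using MvPolynomial.induction_on with
  | C a => exact ⟨|a|, abs_nonneg a, 0, fun x _ => by simp⟩
  | add F G hF hG =>
    obtain ⟨c, hc, l, h⟩ := hF
    obtain ⟨c', hc', l', h'⟩ := hG
    refine ⟨c + c', add_nonneg hc hc', max l l', fun x hx => ?_⟩
    have hw1x := hw1 x hx
    calc |eval x (F + G)| ≤ |eval x F| + |eval x G| := by
          rw [map_add]
          exact abs_add_le _ _
      _ ≤ c * w x ^ l + c' * w x ^ l' := add_le_add (h x hx) (h' x hx)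
      _ ≤ c * w x ^ max l l' + c' * w x ^ max l l' := by gcongr <;> simp
      _ = (c + c') * w x ^ max l l' := by ring
  | mul_X F i hF =>
    obtain ⟨c, hc, l, h⟩ := hF
    refine ⟨c, hc, l + 1, fun x hx => ?_⟩
    rw [map_mul, eval_X, abs_mul, pow_succ, ← mul_assoc]
    exact mul_le_mul (h x hx) (hw x hx i) (abs_nonneg _) ((abs_nonneg _).trans (h x hx))

section NonnegativePolynomials

variable {n m : ℕ} {g : Fin m → MvPolynomial (Fin n) ℝ}

section

variable {E : Type*} [CommRing E] [Algebra ℝ E] {φ : MvPolynomial (Fin n) ℝ →ₐ[ℝ] E}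

/- For `c > r ^ 2` the polynomial `c q ^ 2 - u ^ 2` is positive on `K_S`, and a certificate for it
is one for `c - a ^ 2` after moving the factor `q ^ 2`. -/
theorem algebraMap_sub_mem_dualClosure_of_abs_le {r : ℝ} (hr : 0 ≤ r)
    {q u : MvPolynomial (Fin n) ℝ} (hq : ∀ x ∈ KS g, 0 < eval x q)
    (hu : ∀ x ∈ KS g, |eval x u| ≤ r * eval x q) {a : E} (ha : φ q * a = φ u) :
    algebraMap ℝ E r - a ∈ dualClosure (genPreordering fun i => φ (g i)) := by
  rw [← coe_preorderingSpan_range]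
  refine algebraMap_sub_mem_dualClosure hr fun c hc => ?_
  have hpos (x : Fin n → ℝ) (hx : ∀ h ∈ Set.range g, 0 ≤ eval x h) :
      0 < eval x (C c * q ^ 2 - u ^ 2) := by
    replace hx : x ∈ KS g := fun i => hx _ ⟨i, rfl⟩
    have hqx := hq x hx
    have hsq : eval x u ^ 2 ≤ (r * eval x q) ^ 2 := sq_le_sq.2 ((hu x hx).trans (le_abs_self _))
    have hlt : r ^ 2 * eval x q ^ 2 < c * eval x q ^ 2 := by gcongr
    simp only [map_sub, map_mul, map_pow, eval_C]
    linarith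
  obtain ⟨t, ht, t', ht', h⟩ := exists_mul_eq_one_add_of_pos (Set.finite_range g) hpos
  have hmap (t) (ht : t ∈ preorderingSpan (Set.range g)) :
      φ t ∈ preorderingSpan (Set.range fun i => φ (g i)) := by
    simpa [← Set.range_comp, Function.comp_def] using
      map_preorderingSpan_le (φ : _ →+* E) ⟨t, ht, rfl⟩
  refine ⟨φ t * φ q ^ 2, mul_mem (hmap t ht) (sq_mem_preorderingSpan _), φ t', hmap t' ht', ?_⟩
  have hφ := congrArg φ h
  simp only [map_mul, map_sub, map_add, map_one, map_pow, algHom_C, ← ha] at hφ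
  linear_combination hφ

theorem mem_dualClosure_of_nonneg_of_le {r : ℝ} (hr : 0 ≤ r) {q F : MvPolynomial (Fin n) ℝ}
    (hq : ∀ x ∈ KS g, 0 < eval x q) (h0 : ∀ x ∈ KS g, 0 ≤ eval x F)
    (hF : ∀ x ∈ KS g, eval x F ≤ r * eval x q) {b : E} (hb : φ q * b = φ F) :
    b ∈ dualClosure (genPreordering fun i => φ (g i)) := by
  have h := algebraMap_sub_mem_dualClosure_of_abs_le (φ := φ) (u := C (r / 2) * q - F)
    (a := algebraMap ℝ E (r / 2) - b) (div_nonneg hr zero_le_two) hq (fun x hx => ?_) ?_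
  · simpa using h
  · have := h0 x hx
    have := hF x hx
    rw [map_sub, map_mul, eval_C, abs_le]
    constructor <;> linarith
  · simp only [map_sub, map_mul, algHom_C, ← hb]
    ring

theorem map_mem_dualClosure_of_nonneg {w : MvPolynomial (Fin n) ℝ} (hφw : IsUnit (φ w))
    (hw1 : ∀ x ∈ KS g, 1 ≤ eval x w) (hw : ∀ x ∈ KS g, ∀ i, |x i| ≤ eval x w)
    {F : MvPolynomial (Fin n) ℝ} (hF : ∀ x ∈ KS g, 0 ≤ eval x F) :
    φ F ∈ dualClosure (genPreordering fun i => φ (g i)) := by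
  obtain ⟨c, hc, l, hle⟩ := exists_abs_eval_le_mul_pow hw1 hw F
  obtain ⟨v, hv⟩ := hφw.exists_right_inv
  have hvl : φ w ^ l * v ^ l = 1 := by rw [← mul_pow, hv, one_pow]
  have hb : (v ^ l) ^ 2 * φ F ∈ dualClosure (genPreordering fun i => φ (g i)) := by
    refine mem_dualClosure_of_nonneg_of_le hc (q := (w ^ l) ^ 2) (fun x hx => ?_) hF
      (fun x hx => ?_) ?_
    · have := hw1 x hx
      simp only [map_pow]
      positivity
    · simp only [map_pow]
      have hwl : 1 ≤ eval x w ^ l := one_le_pow₀ (hw1 x hx)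
      calc eval x F ≤ c * eval x w ^ l := (le_abs_self _).trans (hle x hx)
        _ ≤ c * (eval x w ^ l) ^ 2 := by gcongr; exact le_self_pow₀ hwl two_ne_zero
    · simp only [map_pow]
      linear_combination φ F * (φ w ^ l * v ^ l + 1) * hvl
  rw [← coe_preorderingSpan_range] at hb ⊢
  convert sq_mul_mem_dualClosure hb (φ w ^ l) using 1
  linear_combination -φ F * (φ w ^ l * v ^ l + 1) * hvl

end

theorem PosE_subset_dualClosure {D : Submonoid (MvPolynomial (Fin n) ℝ)}
    {w : MvPolynomial (Fin n) ℝ} (hDw : IsUnit (algebraMap _ (Localization D) w))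
    (hw1 : ∀ x ∈ KS g, 1 ≤ eval x w) (hw : ∀ x ∈ KS g, ∀ i, |x i| ≤ eval x w) :
    PosE D (KS g) ⊆
      dualClosure (genPreordering fun i => algebraMap _ (Localization D) (g i)) := by
  rintro _ ⟨f, d, rfl, hfd⟩
  have hnum : algebraMap _ (Localization D) (f * d) ∈
      dualClosure (genPreordering fun i => algebraMap _ (Localization D) (g i)) :=
    map_mem_dualClosure_of_nonneg (φ := IsScalarTower.toAlgHom ℝ _ (Localization D)) hDw hw1 hw
      (by simpa using hfd)
  rw [← coe_preorderingSpan_range] at hnum ⊢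
  convert sq_mul_mem_dualClosure hnum (.mk 1 d) using 1
  rw [← Localization.mk_one_eq_algebraMap, Localization.mk_pow, Localization.mk_mul,
    Localization.mk_eq_mk_iff, Localization.r_iff_exists]
  exact ⟨1, by push_cast; ring⟩

end NonnegativePolynomials

theorem exists_pairwiseDisjoint_closedBall_cover {E : Type*} [PseudoMetricSpace E] {K : Set E}
    (hK : IsCompact K) {r : E → ℝ} (hr : ∀ a, 0 < r a) :
    ∃ t : Finset E, ↑t ⊆ K ∧ (t : Set E).PairwiseDisjoint (fun a => Metric.closedBall a (r a)) ∧
      K ⊆ ⋃ a ∈ t, Metric.closedBall a (4 * r a) := by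
  obtain ⟨s, hsK, hs⟩ := hK.elim_nhds_subcover (fun a => Metric.closedBall a (r a))
    fun a _ => Metric.closedBall_mem_nhds a (hr a)
  obtain ⟨R, hR⟩ := (s.image r).exists_le
  obtain ⟨u, hus, hu, hcov⟩ := Vitali.exists_disjoint_subfamily_covering_enlargement_closedBall
    s id r R (fun a ha => hR _ (Finset.mem_image_of_mem r ha)) 4 (by norm_num)
  lift u to Finset E using s.finite_toSet.subset hus
  refine ⟨u, fun a ha => hsK a (hus ha), hu, hs.trans (Set.iUnion₂_subset fun a ha => ?_)⟩
  obtain ⟨b, hb, hab⟩ := hcov a ha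
  exact hab.trans (Set.subset_iUnion₂ (s := fun a _ => Metric.closedBall a (4 * r a)) b hb)

section Covers

variable {E : Type*} [NormedAddCommGroup E] [NormedSpace ℝ E] [FiniteDimensional ℝ E] {K : Set E}

theorem exists_sum_pow_finrank_le (hK : IsCompact K) :
    ∃ V ≥ 0, ∀ (t : Finset E) (r : E → ℝ), ↑t ⊆ K → (∀ a ∈ t, 0 ≤ r a) → (∀ a ∈ t, r a ≤ 1) →
      (t : Set E).PairwiseDisjoint (fun a => Metric.closedBall a (r a)) →
      ∑ a ∈ t, r a ^ Module.finrank ℝ E ≤ V := by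
  borelize E
  let μ : Measure E := Measure.addHaar
  have hball : 0 < μ.real (Metric.ball 0 1) :=
    ENNReal.toReal_pos (Metric.measure_ball_pos μ 0 one_pos).ne' measure_ball_lt_top.ne
  refine ⟨μ.real (Metric.cthickening 1 K) / μ.real (Metric.ball 0 1), by positivity,
    fun t r htK hr0 hr1 hdisj => ?_⟩
  rw [le_div_iff₀ hball, Finset.sum_mul]
  calc ∑ a ∈ t, r a ^ Module.finrank ℝ E * μ.real (Metric.ball 0 1)
      = ∑ a ∈ t, μ.real (Metric.closedBall a (r a)) :=
        Finset.sum_congr rfl fun a ha => (Measure.addHaar_real_closedBall μ a (hr0 a ha)).symm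
    _ = μ.real (⋃ a ∈ t, Metric.closedBall a (r a)) :=
        (measureReal_biUnion_finset hdisj (fun _ _ => measurableSet_closedBall)
          fun _ _ => measure_closedBall_lt_top.ne).symm
    _ ≤ μ.real (Metric.cthickening 1 K) :=
        measureReal_mono (Set.iUnion₂_subset fun a ha =>
          (Metric.closedBall_subset_closedBall (hr1 a ha)).trans
            (Metric.closedBall_subset_cthickening (htK ha) 1))
          hK.cthickening.measure_lt_top.ne

/- Vitali's lemma replaces a cover by small balls by enlargements of disjoint ones, whose total
volume is bounded; the surplus in the exponent absorbs the weight `M`. -/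
theorem exists_closedBall_cover_sum_pow_mul_le (hK : IsCompact K) {N : ℕ}
    (hN : Module.finrank ℝ E < N) (M : E → ℝ) {η : ℝ} (hη : 0 < η) :
    ∃ (t : Finset E) (r : E → ℝ), ↑t ⊆ K ∧ (∀ a, 0 < r a) ∧
      (K ⊆ ⋃ a ∈ t, Metric.closedBall a (r a)) ∧ ∑ a ∈ t, r a ^ N * M a ≤ η := by
  obtain ⟨V, hV, hsum⟩ := exists_sum_pow_finrank_le hK
  let δ : ℝ := η / (4 ^ N * (V + 1))
  let ρ (a : E) : ℝ := min 1 (δ / (|M a| + 1))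
  have hδ : 0 < δ := by positivity
  have hρ0 (a : E) : 0 < ρ a := by positivity
  have hρ1 (a : E) : ρ a ≤ 1 := min_le_left _ _
  have hρM (a : E) : ρ a * |M a| ≤ δ := calc
    ρ a * |M a| ≤ δ / (|M a| + 1) * (|M a| + 1) := by
      gcongr
      · exact min_le_right _ _
      · linarith
    _ = δ := div_mul_cancel₀ _ (by positivity)
  obtain ⟨t, htK, hdisj, hcov⟩ := exists_pairwiseDisjoint_closedBall_cover hK hρ0
  refine ⟨t, fun a => 4 * ρ a, htK, fun a => mul_pos four_pos (hρ0 a), hcov, ?_⟩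
  have hterm (a : E) : (4 * ρ a) ^ N * M a ≤ 4 ^ N * δ * ρ a ^ Module.finrank ℝ E := calc
    (4 * ρ a) ^ N * M a ≤ 4 ^ N * (ρ a ^ (Module.finrank ℝ E + 1) * |M a|) := by
      rw [mul_pow, mul_assoc]
      gcongr 4 ^ N * ?_
      exact mul_le_mul_of_nonneg (pow_le_pow_of_le_one (hρ0 a).le (hρ1 a) hN) (le_abs_self _)
        (pow_pos (hρ0 a) N).le (abs_nonneg _)
    _ = 4 ^ N * (ρ a * |M a|) * ρ a ^ Module.finrank ℝ E := by ring
    _ ≤ 4 ^ N * δ * ρ a ^ Module.finrank ℝ E := by gcongr; exact hρM a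
  calc ∑ a ∈ t, (4 * ρ a) ^ N * M a ≤ ∑ a ∈ t, 4 ^ N * δ * ρ a ^ Module.finrank ℝ E :=
        Finset.sum_le_sum fun a _ => hterm a
    _ = 4 ^ N * δ * ∑ a ∈ t, ρ a ^ Module.finrank ℝ E := (Finset.mul_sum ..).symm
    _ ≤ 4 ^ N * δ * (V + 1) := by
        gcongr
        linarith [hsum t ρ htK (fun a _ => (hρ0 a).le) (fun a _ => hρ1 a) hdisj]
    _ = η := by
        simp only [δ]
        field_simp

end Covers

theorem dualClosure_subset_dualClosure {E : Type*} [AddCommGroup E] [Module ℝ E] {C C' : Set E}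
    (h : C ⊆ dualClosure C') : dualClosure C ⊆ dualClosure C' :=
  fun _ hx L hL => hx L fun _ hc => h hc L hL

theorem mul_prod_sq_add_sum_nonneg {ι R : Type*} [DecidableEq ι] [CommRing R] [LinearOrder R]
    [IsStrictOrderedRing R] {t : Finset ι} {a : R} {c e : ι → R} (hc : ∀ i ∈ t, 0 ≤ c i)
    (h : 0 ≤ a ∨ ∃ i ∈ t, 0 ≤ a * e i ^ 2 + c i) :
    0 ≤ a * (∏ i ∈ t, e i) ^ 2 + ∑ i ∈ t, c i * (∏ j ∈ t.erase i, e j) ^ 2 := by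
  have hterm : ∀ i ∈ t, 0 ≤ c i * (∏ j ∈ t.erase i, e j) ^ 2 :=
    fun i hi => mul_nonneg (hc i hi) (sq_nonneg _)
  obtain ha | ⟨i, hi, hai⟩ := h
  · exact add_nonneg (mul_nonneg ha (sq_nonneg _)) (Finset.sum_nonneg hterm)
  · calc 0 ≤ (a * e i ^ 2 + c i) * (∏ j ∈ t.erase i, e j) ^ 2 := mul_nonneg hai (sq_nonneg _)
      _ = a * (∏ j ∈ t, e j) ^ 2 + c i * (∏ j ∈ t.erase i, e j) ^ 2 := by
        rw [← Finset.mul_prod_erase t e hi]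
        ring
      _ ≤ a * (∏ j ∈ t, e j) ^ 2 + ∑ i ∈ t, c i * (∏ j ∈ t.erase i, e j) ^ 2 := by
        gcongr
        exact Finset.single_le_sum hterm hi

theorem abs_apply_le_one_add_sum_sq {ι R : Type*} [Fintype ι] [CommRing R] [LinearOrder R]
    [IsStrictOrderedRing R] (x : ι → R) (i : ι) : |x i| ≤ 1 + ∑ j, x j ^ 2 := calc
  |x i| ≤ 1 + x i ^ 2 := by nlinarith [sq_abs (x i), sq_nonneg (|x i| - 1), abs_nonneg (x i)]
  _ ≤ 1 + ∑ j, x j ^ 2 := by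
    gcongr
    exact Finset.single_le_sum (fun j _ => sq_nonneg (x j)) (Finset.mem_univ i)

theorem exists_lipschitzOnWith_eval {σ : Type*} [Fintype σ] {K : Set (σ → ℝ)} (hK : IsCompact K)
    (q : MvPolynomial σ ℝ) : ∃ C, LipschitzOnWith C (fun x => eval x q) K :=
  have hq : ContDiff ℝ 1 fun x : σ → ℝ => eval x q :=
    (AnalyticOnNhd.eval_mvPolynomial q).contDiff
  (hq.locallyLipschitz.locallyLipschitzOn).exists_lipschitzOnWith_of_compact hK

section NonnegativeOffCompact

variable {n : ℕ} {D : Submonoid (MvPolynomial (Fin n) ℝ)} {X K : Set (Fin n → ℝ)}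
  {f : MvPolynomial (Fin n) ℝ}

theorem algebraMap_add_sum_smul_sq_mem_PosE {ι : Type*} {t : Finset ι} {d : ι → D} {c : ι → ℝ}
    (hc : ∀ i ∈ t, 0 ≤ c i)
    (h : ∀ x ∈ X, 0 ≤ eval x f ∨ ∃ i ∈ t, 0 ≤ eval x f * eval x (d i).1 ^ 2 + c i) :
    algebraMap _ (Localization D) f + ∑ i ∈ t, c i • Localization.mk 1 (d i) ^ 2 ∈ PosE D X := by
  classical
  refine ⟨f * (∏ i ∈ t, (d i).1) ^ 2 +
    ∑ i ∈ t, C (c i) * (∏ j ∈ t.erase i, (d j).1) ^ 2, (∏ i ∈ t, d i) ^ 2, ?_,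
    fun x hx => mul_nonneg ?_ ?_⟩
  · have hd (i : ι) : Localization.mk 1 (d i) * algebraMap _ (Localization D) (d i).1 = 1 := by
      rw [← Localization.mk_one_eq_algebraMap, Localization.mk_mul, one_mul, mul_one,
        Localization.mk_self]
    refine ((Localization.mk_eq_mk'_apply _ _).trans (IsLocalization.mk'_eq_iff_eq_mul.2 ?_)).symm
    simp only [SubmonoidClass.coe_pow, Submonoid.coe_finsetProd, map_add, map_sum, map_mul,
      map_pow, add_mul, Finset.sum_mul]
    congr 1
    refine Finset.sum_congr rfl fun i hi => ?_
    rw [← Finset.mul_prod_erase t _ hi, map_mul, Algebra.smul_def,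
      IsScalarTower.algebraMap_apply ℝ (MvPolynomial (Fin n) ℝ), algebraMap_eq]
    rw [mul_pow, ← mul_assoc, mul_assoc _ (Localization.mk 1 (d i) ^ 2), ← mul_pow, hd,
      one_pow, mul_one]
  · simpa using mul_prod_sq_add_sum_nonneg hc (h x hx)
  · simpa using sq_nonneg _

theorem exists_weights_add_sum_mem_PosE (hK : IsCompact K)
    (hKD : K ⊆ ⋃ d ∈ (D : Set (MvPolynomial (Fin n) ℝ)), Zset d)
    (hf : ∀ x ∈ X \ K, 0 ≤ eval x f) (l : ℕ) :
    ∃ (w : (Fin n → ℝ) → ℝ) (u : (Fin n → ℝ) → Localization D),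
      ∀ (t : Finset (Fin n → ℝ)) (r : (Fin n → ℝ) → ℝ), ↑t ⊆ K →
        (K ⊆ ⋃ a ∈ t, Metric.closedBall a (r a)) →
        algebraMap _ (Localization D) f + ∑ a ∈ t, (r a ^ (2 * l) * w a) • u a ^ 2 ∈ PosE D X := by
  have hd (a : Fin n → ℝ) : ∃ d : D, a ∈ K → eval a (d : MvPolynomial (Fin n) ℝ) = 0 := by
    by_cases ha : a ∈ K
    · obtain ⟨d, hd, hda⟩ := Set.mem_iUnion₂.1 (hKD ha)
      exact ⟨⟨d, hd⟩, fun _ => hda⟩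
    · exact ⟨1, fun h => absurd h ha⟩
  choose d hd using hd
  choose C hC using fun a => exists_lipschitzOnWith_eval hK (d a).1
  obtain ⟨B, hB⟩ := hK.exists_bound_of_continuousOn (MvPolynomial.continuous_eval f).continuousOn
  refine ⟨fun a => |B| * C a ^ (2 * l), fun a => Localization.mk 1 (d a ^ l), fun t r htK hcov =>
    algebraMap_add_sum_smul_sq_mem_PosE (fun a _ => ?_) fun x hx => ?_⟩
  · rw [pow_mul]
    positivity
  · refine (em (x ∈ K)).symm.imp (fun hxK => hf x ⟨hx, hxK⟩) fun hxK => ?_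
    obtain ⟨a, ha, hxa⟩ := Set.mem_iUnion₂.1 (hcov hxK)
    have hdx : |eval x (d a).1| ≤ C a * r a := by
      have h := (hC a).dist_le_mul x hxK a (htK ha)
      rw [hd a (htK ha), dist_zero_right] at h
      exact h.trans (by gcongr; exact hxa)
    have hpow : eval x (d a).1 ^ (2 * l) ≤ (C a * r a) ^ (2 * l) := by
      rw [← Even.pow_abs (even_two_mul l)]
      gcongr
    refine ⟨a, ha, ?_⟩
    calc 0 ≤ |B| * ((C a * r a) ^ (2 * l) - eval x (d a).1 ^ (2 * l)) :=
          mul_nonneg (abs_nonneg B) (sub_nonneg.2 hpow)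
      _ = -|B| * (eval x (d a).1 ^ l) ^ 2 + r a ^ (2 * l) * (|B| * C a ^ (2 * l)) := by ring
      _ ≤ eval x f * eval x (d a ^ l : D).1 ^ 2 + r a ^ (2 * l) * (|B| * C a ^ (2 * l)) := by
        rw [SubmonoidClass.coe_pow, map_pow]
        gcongr
        exact (neg_le_neg ((hB x hxK).trans (le_abs_self B))).trans (neg_abs_le _)

theorem algebraMap_mem_dualClosure_PosE (hK : IsCompact K)
    (hKD : K ⊆ ⋃ d ∈ (D : Set (MvPolynomial (Fin n) ℝ)), Zset d)
    (hf : ∀ x ∈ X \ K, 0 ≤ eval x f) :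
    algebraMap _ (Localization D) f ∈ dualClosure (PosE D X) := by
  intro L hL
  obtain ⟨w, u, hmem⟩ := exists_weights_add_sum_mem_PosE hK hKD hf (n + 1)
  refine le_of_forall_pos_le_add fun η hη => ?_
  obtain ⟨t, r, htK, -, hcov, hsum⟩ := exists_closedBall_cover_sum_pow_mul_le hK
    (N := 2 * (n + 1)) (by rw [Module.finrank_fin_fun]; omega) (fun a => w a * L (u a ^ 2)) hη
  calc 0 ≤ L _ := hL _ (hmem t r htK hcov)
    _ = L (algebraMap _ (Localization D) f) +
        ∑ a ∈ t, r a ^ (2 * (n + 1)) * (w a * L (u a ^ 2)) := by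
      simp only [map_add, map_sum, map_smul, smul_eq_mul, mul_assoc]
    _ ≤ L (algebraMap _ (Localization D) f) + η := by gcongr

end NonnegativeOffCompact

/-- Every polynomial nonnegative on `K_S \ K`, with `K` a compact
subset of `⋃_{d ∈ D} Z(d)`, lies in the closure of `T_S^E` in the finest locally convex
topology. -/
theorem nonneg_off_compact_mem_closure
    {n m : ℕ} (D : Submonoid (MvPolynomial (Fin n) ℝ))
    (hD0 : (0 : MvPolynomial (Fin n) ℝ) ∉ D)
    (g : Fin m → MvPolynomial (Fin n) ℝ)
    (hKne : (KS g).Nonempty)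
    (p : MvPolynomial (Fin n) ℝ) (hpD : p ∈ D)
    (k : ℕ) (hk : 1 ≤ k)
    (hp1 : ∀ x ∈ KS g, 1 ≤ eval x p)
    (hpgrow : ∀ x ∈ KS g, ∑ i, (x i) ^ 2 ≤ (k : ℝ) * eval x p)
    (K : Set (Fin n → ℝ)) (hKc : IsCompact K)
    (hKZ : K ⊆ ⋃ d ∈ (D : Set (MvPolynomial (Fin n) ℝ)), Zset d)
    (f : MvPolynomial (Fin n) ℝ)
    (hf : ∀ x ∈ KS g \ K, 0 ≤ eval x f) :
    algebraMap (MvPolynomial (Fin n) ℝ) (Localization D) f ∈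
      dualClosure (genPreordering fun i =>
        algebraMap (MvPolynomial (Fin n) ℝ) (Localization D) (g i)) := by
  set w : MvPolynomial (Fin n) ℝ := C (1 + k : ℝ) * p
  have hDw : IsUnit (algebraMap _ (Localization D) w) := by
    rw [map_mul, ← algebraMap_eq, ← IsScalarTower.algebraMap_apply]
    exact ((IsUnit.mk0 (1 + k : ℝ) (by positivity)).map _).mul
      (IsLocalization.map_units _ (⟨p, hpD⟩ : D))
  have hweval (x : Fin n → ℝ) : eval x w = eval x p + k * eval x p := by
    rw [map_mul, eval_C]
    ring
  have hw1 (x : Fin n → ℝ) (hx : x ∈ KS g) : 1 ≤ eval x w := by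
    have := hp1 x hx
    rw [hweval]
    exact le_add_of_le_of_nonneg this (by positivity)
  have hw (x : Fin n → ℝ) (hx : x ∈ KS g) (i : Fin n) : |x i| ≤ eval x w := by
    rw [hweval]
    exact (abs_apply_le_one_add_sum_sq x i).trans (add_le_add (hp1 x hx) (hpgrow x hx))
  exact dualClosure_subset_dualClosure (PosE_subset_dualClosure hDw hw1 hw)
    (algebraMap_mem_dualClosure_PosE hKc hKZ hf)

end
end

section
/- (Rational Riesz's Theorem.) Let 𝒳 be a nonempty Hausdorff topological space such that: there is a continuous function q̂ : 𝒳 → ℝ with q̂ ≥ 0 and 𝒳_k = {x : q̂(x) ≤ k} compact for every integer k ≥ 1; and every open subset of 𝒳 is σ-compact. Let D̂ be a multiplicatively closed set of continuous functions on 𝒳 containing 1, each d̂ ∈ D̂ being nonnegative on 𝒳 with zero set Z(d̂) = {x : d̂(x)=0} of empty interior. Then for every linear functional L̄ on the set D̂⁻¹C_c(𝒳,ℝ) of fractions f/d̂ (f ∈ C_c(𝒳,ℝ), d̂ ∈ D̂, fractions taken inside the localization D̂⁻¹C(𝒳,ℝ)) satisfying L̄(f/d̂) ≥ 0 whenever f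 ∈ C_c(𝒳,ℝ) is nonnegative and d̂ ∈ D̂, there exists a unique regular Borel measure μ on 𝒳 such that μ(Z(d̂)) = 0 for every d̂ ∈ D̂ and L̄(f/d̂) = ∫_𝒳 f(x)/d̂(x) dμ(x) for every f ∈ C_c(𝒳,ℝ) and d̂ ∈ D̂. -/
open MeasureTheory

noncomputable section

/-- For a submonoid `D̂` of `C(𝒳,ℝ)`, the subset `D̂⁻¹C_c(𝒳,ℝ)` of the localization
`D̂⁻¹C(𝒳,ℝ)`: fractions `f/d̂` with `f` compactly supported. -/
def ccFracSet {X : Type*} [TopologicalSpace X] (Dh : Submonoid C(X, ℝ)) :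
    Set (Localization Dh) :=
  {R | ∃ f : C(X, ℝ), HasCompactSupport (f : X → ℝ) ∧ ∃ d : Dh, R = Localization.mk f d}

/-!
For a denominator `d`, let `μ_d` be the Riesz–Markov–Kakutani measure of the positive functional
`f ↦ L (f / d)` on `C_c(X, ℝ)`. The identity `f / 1 = d² f / d²` says that `μ_1` and `d² • μ_{d²}`
have the same integrals on `C_c(X, ℝ)`. On a `σ`-compact space a continuous density preserves
regularity, so `μ_1 = d² • μ_{d²}` as measures. Hence `μ_1` does not charge `{d = 0}`, and
`L (f / d) = L (d f / d²) = ∫ d f dμ_{d²} = ∫ f / d dμ_1`.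

With the density `d²` the last equality needs no case distinction: `d² * (f / d) = d * f` holds
everywhere, also on `{d = 0}`, where `f / d` is `0` by convention.
-/

open Set Filter Topology
open scoped CompactlySupported ENNReal

section Sublevel

variable {X : Type*} [TopologicalSpace X] {q : X → ℝ}

theorem exists_isCompact_sublevel_mem_nhds (hq : Continuous q)
    (hqc : ∀ᶠ k : ℕ in atTop, IsCompact {x | q x ≤ k}) (x : X) :
    ∃ k : ℕ, IsCompact {y | q y ≤ k} ∧ {y | q y ≤ k} ∈ 𝓝 x := by
  have hlt : ∀ᶠ k : ℕ in atTop, q x < k :=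
    tendsto_natCast_atTop_atTop.eventually_gt_atTop (q x)
  obtain ⟨k, hk, hxk⟩ := (hqc.and hlt).exists
  exact ⟨k, hk, (hq.continuousAt.eventually_lt_const hxk).mono fun _ => le_of_lt⟩

theorem weaklyLocallyCompactSpace_of_isCompact_sublevel (hq : Continuous q)
    (hqc : ∀ᶠ k : ℕ in atTop, IsCompact {x | q x ≤ k}) : WeaklyLocallyCompactSpace X where
  exists_compact_mem_nhds x :=
    let ⟨_, hk, hkx⟩ := exists_isCompact_sublevel_mem_nhds hq hqc x
    ⟨_, hk, hkx⟩

theorem sigmaCompactSpace_of_isCompact_sublevel (hq : Continuous q)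
    (hqc : ∀ᶠ k : ℕ in atTop, IsCompact {x | q x ≤ k}) : SigmaCompactSpace X := by
  refine .of_countable ((fun k : ℕ => {x | q x ≤ k}) '' {k | IsCompact {x | q x ≤ (k : ℝ)}})
    ((to_countable _).image _) (forall_mem_image.2 fun _ hk => hk) (eq_univ_of_forall fun x => ?_)
  obtain ⟨k, hk, hkx⟩ := exists_isCompact_sublevel_mem_nhds hq hqc x
  exact ⟨_, mem_image_of_mem _ hk, mem_of_mem_nhds hkx⟩

end Sublevel

section Regularity

variable {X : Type*} [TopologicalSpace X] [R1Space X] [MeasurableSpace X] [BorelSpace X]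
  {μ ν : Measure X}

theorem exists_seq_isCompact_measure_sdiff_iUnion_eq_zero [μ.InnerRegularCompactLTTop]
    {s : Set X} (hs : MeasurableSet s) (hμs : μ s ≠ ∞) :
    ∃ K : ℕ → Set X, (∀ n, IsCompact (K n)) ∧ (∀ n, K n ⊆ s) ∧ μ (s \ ⋃ n, K n) = 0 := by
  have approx (n : ℕ) : ∃ K ⊆ s, IsCompact K ∧ IsClosed K ∧ μ (s \ K) < (n : ℝ≥0∞)⁻¹ :=
    hs.exists_isCompact_isClosed_sdiff_lt hμs (by simp)
  choose K hKs hK _ hμK using approx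
  refine ⟨K, hK, hKs, nonpos_iff_eq_zero.1 ?_⟩
  refine ge_of_tendsto' ENNReal.tendsto_inv_nat_nhds_zero fun n => ?_
  exact (measure_mono (sdiff_subset_sdiff_right (subset_iUnion K n))).trans (hμK n).le

theorem innerRegular_of_absolutelyContinuous_of_isFiniteMeasure [IsFiniteMeasure μ]
    [μ.InnerRegularCompactLTTop] (hνμ : ν ≪ μ) : ν.InnerRegular := by
  refine ⟨fun s hs r hr => ?_⟩
  obtain ⟨K, hK, hKs, hμK⟩ :=
    exists_seq_isCompact_measure_sdiff_iUnion_eq_zero hs (measure_ne_top μ s)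
  have hνK : ν s ≤ ⨆ n, ν (accumulate K n) :=
    (measure_mono_ae (ae_le_set.2 (hνμ hμK))).trans_eq measure_iUnion_eq_iSup_accumulate
  obtain ⟨n, hn⟩ := lt_iSup_iff.1 (hr.trans_le hνK)
  exact ⟨accumulate K n, (accumulate_subset_iUnion n).trans (iUnion_subset hKs),
    isCompact_accumulate hK n, hn⟩

theorem innerRegular_of_absolutelyContinuous [SigmaFinite μ] [μ.InnerRegularCompactLTTop]
    (hνμ : ν ≪ μ) : ν.InnerRegular := by
  refine ⟨.of_restrict (s := spanningSets μ) (fun n => ?_) (iUnion_spanningSets μ).ge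
    (monotone_spanningSets μ)⟩
  have : Fact (μ (spanningSets μ n) < ∞) := ⟨measure_spanningSets_lt_top μ n⟩
  exact (innerRegular_of_absolutelyContinuous_of_isFiniteMeasure (hνμ.restrict _)).innerRegular

theorem regular_of_innerRegularCompactLTTop [SigmaCompactSpace X] [IsLocallyFiniteMeasure μ]
    [μ.InnerRegularCompactLTTop] : μ.Regular := by
  have : μ.OuterRegular := by
    refine (μ.finiteSpanningSetsInOpen.mono' fun U hU => ?_).outerRegular
    have : Fact (μ U < ∞) := ⟨hU.2⟩
    exact ⟨hU.1, inferInstance⟩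
  exact { innerRegular := fun U hU => Measure.InnerRegular.innerRegular hU.measurableSet }

theorem regular_withDensity_ofReal [SigmaCompactSpace X] [IsLocallyFiniteMeasure μ]
    [μ.InnerRegularCompactLTTop] {h : X → ℝ} (hh : Continuous h) :
    (μ.withDensity fun x => ENNReal.ofReal (h x)).Regular := by
  have := IsLocallyFiniteMeasure.withDensity_ofReal (μ := μ) hh
  have := innerRegular_of_absolutelyContinuous
    (withDensity_absolutelyContinuous μ fun x => ENNReal.ofReal (h x))
  exact regular_of_innerRegularCompactLTTop

end Regularity

section SquareDensity

variable {X : Type*} [MeasurableSpace X] {μ : Measure X} {d : X → ℝ}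

theorem withDensity_sq_zeroSet (hd : Measurable d) :
    μ.withDensity (fun x => ENNReal.ofReal (d x ^ 2)) {x | d x = 0} = 0 := by
  rw [withDensity_apply_eq_zero (by fun_prop)]
  convert measure_empty (μ := μ)
  ext x
  simp +contextual

theorem toReal_ofReal_sq_smul_div (a b : ℝ) :
    (ENNReal.ofReal (a ^ 2)).toReal • (b / a) = a * b := by
  rw [ENNReal.toReal_ofReal (sq_nonneg a), smul_eq_mul]
  obtain rfl | ha := eq_or_ne a 0
  · simp
  · field_simp

theorem integrable_div_withDensity_sq (hd : Measurable d) {f : X → ℝ} :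
    Integrable (fun x => f x / d x) (μ.withDensity fun x => ENNReal.ofReal (d x ^ 2)) ↔
      Integrable (fun x => d x * f x) μ := by
  rw [integrable_withDensity_iff_integrable_smul' (by fun_prop) (by simp)]
  simp only [toReal_ofReal_sq_smul_div]

theorem integral_div_withDensity_sq (hd : Measurable d) (f : X → ℝ) :
    ∫ x, f x / d x ∂(μ.withDensity fun x => ENNReal.ofReal (d x ^ 2)) =
      ∫ x, d x * f x ∂μ := by
  rw [integral_withDensity_eq_integral_toReal_smul (by fun_prop) (by simp)]
  simp only [toReal_ofReal_sq_smul_div]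

end SquareDensity

theorem rieszMeasure_eq_withDensity {X : Type*} [TopologicalSpace X] [T2Space X]
    [LocallyCompactSpace X] [SigmaCompactSpace X] [MeasurableSpace X] [BorelSpace X]
    {Λ Λ' : C_c(X, ℝ) →ₚ[ℝ] ℝ} {h : C(X, ℝ)} (hh : ∀ x, 0 ≤ h x)
    (hΛ : ∀ f, Λ f = Λ' (h • f)) :
    RealRMK.rieszMeasure Λ =
      (RealRMK.rieszMeasure Λ').withDensity fun x => ENNReal.ofReal (h x) := by
  have := regular_withDensity_ofReal (μ := RealRMK.rieszMeasure Λ') h.continuous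
  refine Measure.ext_of_integral_eq_on_compactlySupported fun f => ?_
  rw [integral_withDensity_eq_integral_toReal_smul (by fun_prop) (by simp),
    RealRMK.integral_rieszMeasure, hΛ, ← RealRMK.integral_rieszMeasure]
  simp only [CompactlySupportedContinuousMap.smulc_apply, ENNReal.toReal_ofReal (hh _)]

section Fractions

variable {X : Type*} [TopologicalSpace X] {Dh : Submonoid C(X, ℝ)}

/-- The fraction `f / d` of a compactly supported `f`, as an element of the span of `D̂⁻¹C_c(X, ℝ)`;
it is linear in the numerator `f`. -/
def ccFrac (d : Dh) : C_c(X, ℝ) →ₗ[ℝ] Submodule.span ℝ (ccFracSet Dh) where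
  toFun f := ⟨Localization.mk f.toContinuousMap d,
    Submodule.subset_span ⟨f.toContinuousMap, f.hasCompactSupport, d, rfl⟩⟩
  map_add' _ _ := Subtype.ext (Localization.add_mk_self _ _ _).symm
  map_smul' c _ := Subtype.ext (Localization.smul_mk c _ _).symm

theorem ccFrac_mul_smul (d e : Dh) (f : C_c(X, ℝ)) :
    ccFrac (e * d) ((e : C(X, ℝ)) • f) = ccFrac d f := by
  refine Subtype.ext (Localization.mk_eq_mk_iff.2 (Localization.r_iff_exists.2 ⟨1, ?_⟩))
  ext x
  change 1 * (d.1 x * (e.1 x * f x)) = 1 * (e.1 x * d.1 x * f x)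
  ring

/-- The positive functional `f ↦ L (f / d)` on `C_c(X, ℝ)`, for a fixed denominator `d`. -/
def fracFunctional (L : Submodule.span ℝ (ccFracSet Dh) →ₗ[ℝ] ℝ)
    (hL : ∀ d f, 0 ≤ f → 0 ≤ L (ccFrac d f)) (d : Dh) : C_c(X, ℝ) →ₚ[ℝ] ℝ :=
  .mk₀ (L ∘ₗ ccFrac d) (hL d)

theorem fracFunctional_mul_smul (L : Submodule.span ℝ (ccFracSet Dh) →ₗ[ℝ] ℝ)
    (hL : ∀ d f, 0 ≤ f → 0 ≤ L (ccFrac d f)) (d e : Dh) (f : C_c(X, ℝ)) :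
    fracFunctional L hL (e * d) ((e : C(X, ℝ)) • f) = fracFunctional L hL d f :=
  congrArg L (ccFrac_mul_smul d e f)

variable [T2Space X] [LocallyCompactSpace X] [SigmaCompactSpace X] [MeasurableSpace X]
  [BorelSpace X] (L : Submodule.span ℝ (ccFracSet Dh) →ₗ[ℝ] ℝ)
  (hL : ∀ d f, 0 ≤ f → 0 ≤ L (ccFrac d f)) (d : Dh)

theorem rieszMeasure_fracFunctional_one :
    RealRMK.rieszMeasure (fracFunctional L hL 1) =
      (RealRMK.rieszMeasure (fracFunctional L hL (d * d))).withDensity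
        fun x => ENNReal.ofReal (d.1 x ^ 2) := by
  have hfrac (f : C_c(X, ℝ)) :
      fracFunctional L hL 1 f = fracFunctional L hL (d * d) ((d.1 ^ 2) • f) := by
    rw [← fracFunctional_mul_smul L hL 1 (d * d) f, mul_one, Submonoid.coe_mul, sq]
  have hsq (x : X) : 0 ≤ (d.1 ^ 2) x := by
    rw [ContinuousMap.pow_apply]
    exact sq_nonneg _
  simpa only [ContinuousMap.pow_apply] using rieszMeasure_eq_withDensity hsq hfrac

theorem rieszMeasure_fracFunctional_one_zeroSet :
    RealRMK.rieszMeasure (fracFunctional L hL 1) {x | d.1 x = 0} = 0 := by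
  rw [rieszMeasure_fracFunctional_one L hL d]
  exact withDensity_sq_zeroSet d.1.continuous.measurable

theorem integrable_div_rieszMeasure_fracFunctional_one (f : C_c(X, ℝ)) :
    Integrable (fun x => f x / d.1 x) (RealRMK.rieszMeasure (fracFunctional L hL 1)) := by
  rw [rieszMeasure_fracFunctional_one L hL d,
    integrable_div_withDensity_sq d.1.continuous.measurable]
  exact (d.1 • f).integrable

theorem integral_div_rieszMeasure_fracFunctional_one (f : C_c(X, ℝ)) :
    ∫ x, f x / d.1 x ∂(RealRMK.rieszMeasure (fracFunctional L hL 1)) = L (ccFrac d f) := by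
  rw [rieszMeasure_fracFunctional_one L hL d,
    integral_div_withDensity_sq d.1.continuous.measurable]
  calc ∫ x, d.1 x * f x ∂(RealRMK.rieszMeasure (fracFunctional L hL (d * d)))
    _ = fracFunctional L hL (d * d) (d.1 • f) := RealRMK.integral_rieszMeasure _ (d.1 • f)
    _ = fracFunctional L hL d f := fracFunctional_mul_smul L hL d d f

end Fractions

theorem rational_riesz_general
    {X : Type*} [TopologicalSpace X] [T2Space X] [LocallyCompactSpace X] [SigmaCompactSpace X]
    [MeasurableSpace X] [BorelSpace X]
    (Dh : Submonoid C(X, ℝ))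
    (L : (Submodule.span ℝ (ccFracSet Dh)) →ₗ[ℝ] ℝ)
    (hL : ∀ (f : C(X, ℝ)), (∀ x, 0 ≤ f x) → ∀ (hc : HasCompactSupport (f : X → ℝ))
      (d : Dh), 0 ≤ L ⟨Localization.mk f d, Submodule.subset_span ⟨f, hc, d, rfl⟩⟩) :
    ∃! μ : Measure X, μ.Regular ∧
      (∀ d ∈ Dh, μ {x : X | d x = 0} = 0) ∧
      ∀ (f : C(X, ℝ)) (hc : HasCompactSupport (f : X → ℝ)) (d : Dh),
        Integrable (fun x => f x / (d : C(X, ℝ)) x) μ ∧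
        L ⟨Localization.mk f d, Submodule.subset_span ⟨f, hc, d, rfl⟩⟩
          = ∫ x, f x / (d : C(X, ℝ)) x ∂μ := by
  have hL' : ∀ d (f : C_c(X, ℝ)), 0 ≤ f → 0 ≤ L (ccFrac d f) :=
    fun d f hf => hL f.toContinuousMap hf f.hasCompactSupport d
  refine ⟨RealRMK.rieszMeasure (fracFunctional L hL' 1), ⟨inferInstance, ?_, ?_⟩, ?_⟩
  · exact fun d hd => rieszMeasure_fracFunctional_one_zeroSet L hL' ⟨d, hd⟩
  · exact fun f hc d => ⟨integrable_div_rieszMeasure_fracFunctional_one L hL' d ⟨f, hc⟩,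
      (integral_div_rieszMeasure_fracFunctional_one L hL' d ⟨f, hc⟩).symm⟩
  · rintro ν ⟨_, -, hν⟩
    refine Measure.ext_of_integral_eq_on_compactlySupported fun f => ?_
    calc ∫ x, f x ∂ν
      _ = ∫ x, f x / (1 : C(X, ℝ)) x ∂ν := by simp
      _ = L (ccFrac 1 f) := (hν f.toContinuousMap f.hasCompactSupport 1).2.symm
      _ = ∫ x, f x ∂(RealRMK.rieszMeasure (fracFunctional L hL' 1)) :=
        (RealRMK.integral_rieszMeasure (fracFunctional L hL' 1) f).symm

/-- **Rational Riesz's Theorem.** -/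
theorem rational_riesz
    {X : Type*} [TopologicalSpace X] [T2Space X] [Nonempty X]
    [MeasurableSpace X] [BorelSpace X]
    (q : C(X, ℝ)) (hq0 : ∀ x, 0 ≤ q x)
    (hqc : ∀ k : ℕ, 1 ≤ k → IsCompact {x : X | q x ≤ (k : ℝ)})
    (hσ : ∀ O : Set X, IsOpen O →
      ∃ K : ℕ → Set X, (∀ i, IsCompact (K i)) ∧ O = ⋃ i, K i)
    (Dh : Submonoid C(X, ℝ))
    (hDpos : ∀ d ∈ Dh, ∀ x, 0 ≤ d x)
    (hDz : ∀ d ∈ Dh, interior {x : X | d x = 0} = ∅)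
    (L : (Submodule.span ℝ (ccFracSet Dh)) →ₗ[ℝ] ℝ)
    (hL : ∀ (f : C(X, ℝ)), (∀ x, 0 ≤ f x) → ∀ (hc : HasCompactSupport (f : X → ℝ))
      (d : Dh), 0 ≤ L ⟨Localization.mk f d, Submodule.subset_span ⟨f, hc, d, rfl⟩⟩) :
    ∃! μ : Measure X, μ.Regular ∧
      (∀ d ∈ Dh, μ {x : X | d x = 0} = 0) ∧
      ∀ (f : C(X, ℝ)) (hc : HasCompactSupport (f : X → ℝ)) (d : Dh),
        Integrable (fun x => f x / (d : C(X, ℝ)) x) μ ∧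
        L ⟨Localization.mk f d, Submodule.subset_span ⟨f, hc, d, rfl⟩⟩
          = ∫ x, f x / (d : C(X, ℝ)) x ∂μ := by
  have hqc' : ∀ᶠ k : ℕ in atTop, IsCompact {x | q x ≤ k} := eventually_atTop.2 ⟨1, hqc⟩
  have := weaklyLocallyCompactSpace_of_isCompact_sublevel q.continuous hqc'
  have := sigmaCompactSpace_of_isCompact_sublevel q.continuous hqc'
  exact rational_riesz_general Dh L hL

end
end

section
/- Let 𝒳 be a Hausdorff topological space, A a commutative unital ℝ-algebra, ^ : A → C(𝒳,ℝ) an ℝ-algebra homomorphism, and q ∈ A with q̂ ≥ 0 on 𝒳 such that 𝒳_k = {x ∈ 𝒳 : q̂(x) ≤ k} is compact for every integer k ≥ 1. Let C'(𝒳,ℝ) = {f ∈ C(𝒳,ℝ) : there exists a ∈ A with |f| ≤ â on 𝒳}. Then for every nonnegative function f ∈ C'(𝒳,ℝ) there exists a monotonically increasing sequence (f_i)_{i≥1} of nonnegative functions in C_c(𝒳,ℝ) such that (f + q̂)²/i ≥ f − f_i ≥ 0 on 𝒳 for every i. -/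
/-!
Multiply `f` by a cutoff in `q`: with `g i = max 0 (min 1 (i + 1 - q))`, the products `f * g i`
increase with `i`. As `g i` vanishes off the compact set `{q ≤ i + 1}`, they have compact support.
The error `f - f * g i` vanishes on `{q ≤ i}`, and where `i ≤ q` it is at most
`f ≤ f * q / i ≤ (f + q) ^ 2 / i`.
-/

section SublevelCutoff

variable {X : Type*} [TopologicalSpace X] {q : C(X, ℝ)} {c : ℝ} {x : X}

/-- The continuous cutoff that is `1` on `{q ≤ c}`, `0` on `{c + 1 ≤ q}` and affine in `q` in
between. It is used to truncate a function to a sublevel set of `q`. -/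
def sublevelCutoff (q : C(X, ℝ)) (c : ℝ) : C(X, ℝ) where
  toFun x := max 0 (min 1 (c + 1 - q x))

theorem sublevelCutoff_apply (q : C(X, ℝ)) (c : ℝ) (x : X) :
    sublevelCutoff q c x = max 0 (min 1 (c + 1 - q x)) :=
  rfl

theorem sublevelCutoff_nonneg (q : C(X, ℝ)) (c : ℝ) (x : X) : 0 ≤ sublevelCutoff q c x :=
  le_max_left _ _

theorem sublevelCutoff_le_one (q : C(X, ℝ)) (c : ℝ) (x : X) : sublevelCutoff q c x ≤ 1 :=
  max_le zero_le_one (min_le_left _ _)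

theorem sublevelCutoff_of_le (h : q x ≤ c) : sublevelCutoff q c x = 1 := by
  rw [sublevelCutoff_apply, min_eq_left (by linarith), max_eq_right zero_le_one]

theorem sublevelCutoff_of_add_one_le (h : c + 1 ≤ q x) : sublevelCutoff q c x = 0 :=
  max_eq_left ((min_le_right _ _).trans (sub_nonpos.2 h))

theorem monotone_sublevelCutoff (q : C(X, ℝ)) : Monotone (sublevelCutoff q) :=
  fun _ _ hcd _ ↦ max_le_max_left 0 (min_le_min_left 1 (by gcongr))

theorem hasCompactSupport_sublevelCutoff (h : IsCompact {x | q x ≤ c + 1}) :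
    HasCompactSupport (sublevelCutoff q c) :=
  .intro' h (isClosed_le q.continuous continuous_const) fun _ hx ↦
    sublevelCutoff_of_add_one_le (not_le.1 hx).le

theorem le_add_sq_div {K : Type*} [Field K] [LinearOrder K] [IsStrictOrderedRing K] {a b c : K}
    (ha : 0 ≤ a) (hc : 0 < c) (hcb : c ≤ b) : a ≤ (a + b) ^ 2 / c := by
  rw [le_div_iff₀ hc]
  calc
    a * c ≤ a * b := by gcongr
    _ ≤ (a + b) ^ 2 := by nlinarith [mul_nonneg ha (hc.le.trans hcb)]

theorem sub_mul_sublevelCutoff_le {y : ℝ} (hy : 0 ≤ y) (hc : 0 < c) :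
    y - y * sublevelCutoff q c x ≤ (y + q x) ^ 2 / c := by
  rcases le_total (q x) c with hqc | hcq
  · rw [sublevelCutoff_of_le hqc, mul_one, sub_self]
    positivity
  · calc
      y - y * sublevelCutoff q c x ≤ y :=
        sub_le_self _ (mul_nonneg hy (sublevelCutoff_nonneg q c x))
      _ ≤ (y + q x) ^ 2 / c := le_add_sq_div hy hc hcq

end SublevelCutoff

theorem exists_increasing_compactly_supported_approximation_general
    {X : Type*} [TopologicalSpace X] (q : C(X, ℝ))
    (hqc : ∀ k : ℕ, 1 ≤ k → IsCompact {x : X | q x ≤ (k : ℝ)})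
    (f : C(X, ℝ)) (hf0 : ∀ x, 0 ≤ f x) :
    ∃ F : ℕ → C(X, ℝ),
      (∀ i, ∀ x, 0 ≤ F i x) ∧
      (∀ i, HasCompactSupport ((F i : X → ℝ))) ∧
      (∀ i j, i ≤ j → ∀ x, F i x ≤ F j x) ∧
      ∀ i : ℕ, 1 ≤ i → ∀ x,
        f x - F i x ≤ (f x + q x) ^ 2 / (i : ℝ) ∧ 0 ≤ f x - F i x := by
  refine ⟨fun i ↦ f * sublevelCutoff q i, fun i x ↦ ?nonneg, fun i ↦ ?compact_support,
    fun i j hij x ↦ ?increasing, fun i hi x ↦ ⟨?error_le, ?error_nonneg⟩⟩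
  case nonneg => exact mul_nonneg (hf0 x) (sublevelCutoff_nonneg q i x)
  case compact_support =>
    have hcompact : IsCompact {x | q x ≤ (i : ℝ) + 1} := by
      exact_mod_cast hqc (i + 1) i.succ_pos
    exact (hasCompactSupport_sublevelCutoff hcompact).mul_left
  case increasing =>
    exact mul_le_mul_of_nonneg_left (monotone_sublevelCutoff q (Nat.cast_le.2 hij) x) (hf0 x)
  case error_le => exact sub_mul_sublevelCutoff_le (hf0 x) (Nat.cast_pos.2 hi)
  case error_nonneg =>
    exact sub_nonneg.2 (mul_le_of_le_one_right (hf0 x) (sublevelCutoff_le_one q i x))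


/-- Approximation of dominated nonnegative continuous functions by an
increasing sequence of compactly supported nonnegative continuous functions. -/
theorem exists_increasing_compactly_supported_approximation
    {X : Type*} [TopologicalSpace X] [T2Space X]
    {A : Type*} [CommRing A] [Algebra ℝ A]
    (φ : A →ₐ[ℝ] C(X, ℝ))
    (q : A) (hq0 : ∀ x, 0 ≤ φ q x)
    (hqc : ∀ k : ℕ, 1 ≤ k → IsCompact {x : X | φ q x ≤ (k : ℝ)})
    (f : C(X, ℝ)) (hf0 : ∀ x, 0 ≤ f x)
    (hfdom : ∃ a : A, ∀ x, |f x| ≤ φ a x) :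
    ∃ F : ℕ → C(X, ℝ),
      (∀ i, ∀ x, 0 ≤ F i x) ∧
      (∀ i, HasCompactSupport ((F i : X → ℝ))) ∧
      (∀ i j, i ≤ j → ∀ x, F i x ≤ F j x) ∧
      ∀ i : ℕ, 1 ≤ i → ∀ x,
        f x - F i x ≤ (f x + φ q x) ^ 2 / (i : ℝ) ∧ 0 ≤ f x - F i x :=
  exists_increasing_compactly_supported_approximation_general (φ q) hqc f hf0
end

section
/- For any preordering T on any commutative unital ℝ-algebra E, the closure of T in the topology of finitely open sets on E is again a preordering: it contains all squares of E and is closed under addition and multiplication. -/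
/-!
Addition and multiplication need not be jointly continuous for the topology of finitely open sets,
but separate continuity is enough: the closure of a set stable under a separately continuous
operation is stable, by extending one argument at a time from the set to its closure. Translations
and one-sided multiplications are affine maps, and every affine map `f` is continuous because it
sends a finite-dimensional subspace `U` into a finite-dimensional subspace, namely the span of
`f 0` and the image of `U` under the linear part of `f`.
-/

open MvPolynomial MeasureTheory

noncomputable section

theorem exists_finite_forall_affineMap_mem {R V W : Type*} [Ring R]
    [AddCommGroup V] [Module R V] [AddCommGroup W] [Module R W] (f : V →ᵃ[R] W)
    (U : Submodule R V) [Module.Finite R U] :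
    ∃ S : Submodule R W, Module.Finite R S ∧ ∀ x ∈ U, f x ∈ S := by
  refine ⟨U.map f.linear ⊔ R ∙ f 0, inferInstance, fun x hx => ?_⟩
  rw [congrFun f.decomp x]
  exact Submodule.add_mem_sup (Submodule.mem_map_of_mem hx) (Submodule.mem_span_singleton_self _)

section Continuity

open scoped Topology

variable {E F : Type*} [AddCommGroup E] [Module ℝ E] [AddCommGroup F] [Module ℝ F]

theorem continuous_weakTop_rng {X : Type*} {t : TopologicalSpace X} {f : X → F} :
    Continuous[t, weakTop F] f ↔ ∀ L : F →ₗ[ℝ] ℝ, Continuous fun x => L (f x) :=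
  continuous_iInf_rng.trans <| forall_congr' fun _ => continuous_induced_rng

theorem continuous_weakTop_linearFunctional (L : E →ₗ[ℝ] ℝ) :
    Continuous[weakTop E, _] L :=
  continuous_iInf_dom (i := L) continuous_induced_dom

theorem continuous_weakTop_affineMap (f : E →ᵃ[ℝ] F) :
    Continuous[weakTop E, weakTop F] f := by
  let : TopologicalSpace E := weakTop E
  refine continuous_weakTop_rng.2 fun L => ?_
  have h_decomp (x : E) : L (f x) = L (f.linear x) + L (f 0) := by
    rw [← map_add, congrFun f.decomp x, Pi.add_apply]
  have h_sum : Continuous fun x => L (f.linear x) + L (f 0) :=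
    (continuous_weakTop_linearFunctional (L ∘ₗ f.linear)).add continuous_const
  exact h_sum.congr fun x => (h_decomp x).symm

theorem weakTop_submodule_eq_induced (S : Submodule ℝ E) :
    weakTop S = (weakTop E).induced Subtype.val := by
  apply le_antisymm
  · exact continuous_iff_le_induced.1 (continuous_weakTop_affineMap S.subtype.toAffineMap)
  · let : TopologicalSpace E := weakTop E
    refine continuous_id_iff_le.1 (continuous_weakTop_rng.2 fun L => ?_)
    obtain ⟨M, rfl⟩ := L.exists_extend
    exact (continuous_weakTop_linearFunctional M).comp continuous_subtype_val

theorem continuous_finTop_dom {X : Type*} {t : TopologicalSpace X} {f : E → X} :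
    Continuous[finTop E, t] f ↔
      ∀ U : Submodule ℝ E, FiniteDimensional ℝ U → Continuous[weakTop U, t] fun x : U => f x := by
  simp only [continuous_def]
  exact ⟨fun h U hU O hO => h O hO U hU, fun h O hO U hU => h U hU O hO⟩

theorem continuous_finTop_subtype_val (U : Submodule ℝ E) [FiniteDimensional ℝ U] :
    Continuous[weakTop U, finTop E] (Subtype.val : U → E) :=
  continuous_finTop_dom.1 (@continuous_id E (finTop E)) U inferInstance

theorem continuous_finTop_affineMap (f : E →ᵃ[ℝ] F) :
    Continuous[finTop E, finTop F] f := by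
  refine continuous_finTop_dom.2 fun U _ => ?_
  obtain ⟨S, _, hS⟩ := exists_finite_forall_affineMap_mem f U
  have h_codRestrict :
      Continuous[weakTop U, weakTop S] fun x : U => ⟨f x, hS x x.2⟩ := by
    rw [weakTop_submodule_eq_induced S]
    exact continuous_induced_rng.2 <|
      continuous_weakTop_affineMap (f.comp U.subtype.toAffineMap)
  let : TopologicalSpace U := weakTop U
  let : TopologicalSpace S := weakTop S
  let : TopologicalSpace F := finTop F
  exact (continuous_finTop_subtype_val S).comp h_codRestrict

theorem separatelyContinuousAdd_finTop (E : Type*) [AddCommGroup E] [Module ℝ E] :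
    @SeparatelyContinuousAdd E (finTop E) _ := by
  let : TopologicalSpace E := finTop E
  have h (a : E) : Continuous (a + ·) :=
    continuous_finTop_affineMap (AffineEquiv.constVAdd ℝ E a).toAffineMap
  exact ⟨fun {a} => h a, fun {a} => by simpa only [add_comm] using h a⟩

theorem separatelyContinuousMul_finTop (E : Type*) [NonUnitalNonAssocRing E] [Module ℝ E]
    [IsScalarTower ℝ E E] [SMulCommClass ℝ E E] :
    @SeparatelyContinuousMul E (finTop E) _ := by
  let : TopologicalSpace E := finTop E
  exact ⟨fun {a} => continuous_finTop_affineMap (LinearMap.mulLeft ℝ a).toAffineMap,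
    fun {a} => continuous_finTop_affineMap (LinearMap.mulRight ℝ a).toAffineMap⟩

end Continuity

theorem finTop_closure_preordering_is_preordering_general
    {E : Type*} [NonUnitalNonAssocRing E] [Module ℝ E] [IsScalarTower ℝ E E] [SMulCommClass ℝ E E]
    (T : Set E)
    (hsq : ∀ a : E, a * a ∈ T)
    (hadd : ∀ a ∈ T, ∀ b ∈ T, a + b ∈ T)
    (hmul : ∀ a ∈ T, ∀ b ∈ T, a * b ∈ T) :
    (∀ a : E, a * a ∈ @closure _ (finTop E) T) ∧
    (∀ a ∈ @closure _ (finTop E) T, ∀ b ∈ @closure _ (finTop E) T,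
      a + b ∈ @closure _ (finTop E) T) ∧
    (∀ a ∈ @closure _ (finTop E) T, ∀ b ∈ @closure _ (finTop E) T,
      a * b ∈ @closure _ (finTop E) T) := by
  let : TopologicalSpace E := finTop E
  have := separatelyContinuousAdd_finTop E
  have := separatelyContinuousMul_finTop E
  exact ⟨fun a => subset_closure (hsq a),
    fun a ha b hb => map_mem_closure₂' continuous_const_add continuous_add_const ha hb hadd,
    fun a ha b hb => map_mem_closure₂' continuous_const_mul continuous_mul_const ha hb hmul⟩

/-- The closure of a preordering in the topology of finitely open
sets is again a preordering. -/
theorem finTop_closure_preordering_is_preordering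
    {E : Type*} [CommRing E] [Algebra ℝ E] (T : Set E)
    (hsq : ∀ a : E, a ^ 2 ∈ T)
    (hadd : ∀ a ∈ T, ∀ b ∈ T, a + b ∈ T)
    (hmul : ∀ a ∈ T, ∀ b ∈ T, a * b ∈ T) :
    (∀ a : E, a ^ 2 ∈ @closure _ (finTop E) T) ∧
    (∀ a ∈ @closure _ (finTop E) T, ∀ b ∈ @closure _ (finTop E) T,
      a + b ∈ @closure _ (finTop E) T) ∧
    (∀ a ∈ @closure _ (finTop E) T, ∀ b ∈ @closure _ (finTop E) T,
      a * b ∈ @closure _ (finTop E) T) := by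
  simp only [sq] at hsq ⊢
  exact finTop_closure_preordering_is_preordering_general T hsq hadd hmul

end
end

section
/- Let D ⊆ ℝ[X₁,…,Xₙ]\{0} be a multiplicatively closed set with 1 ∈ D and E = D⁻¹ℝ[X₁,…,Xₙ], and identify ℝ[X₁,…,Xₙ] with its image in E under the (injective) canonical map. Then a preordering T of E is closed in the topology of finitely open sets on E if and only if T ∩ ℝ[X₁,…,Xₙ] is closed in the topology of finitely open sets on ℝ[X₁,…,Xₙ]. -/
/-!
Let `B` be a localization of an `ℝ`-algebra `A`, with canonical map `φ : A → B`. Linear maps are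
continuous for the topologies of finitely open sets, so if `T ⊆ B` is closed, then so is `φ⁻¹ T`.

Conversely, let `U` be a finite-dimensional subspace of `B` and let `d` be a common denominator of
`U`. Then `u ↦ d u`, hence also `u ↦ d² u`, lifts along `φ` to a linear map `g : U → A`. Since `T`
is stable under multiplication by the squares `d²` and `d⁻²`, an element `u` of `U` is in `T` iff
`d² u` is. So `T ∩ U` is the preimage of `φ⁻¹ T` under `g`, and is closed in `U`.
-/

open MvPolynomial MeasureTheory

noncomputable section

open scoped Topology

section FinitelyOpen

variable {V W : Type*} [AddCommGroup V] [Module ℝ V] [AddCommGroup W] [Module ℝ W]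

theorem isClosed_finTop_iff {S : Set V} :
    IsClosed[finTop V] S ↔ ∀ U : Submodule ℝ V, FiniteDimensional ℝ U →
      IsClosed[weakTop U] (U.subtype ⁻¹' S) := by
  simp only [← @isOpen_compl_iff, ← Set.preimage_compl]
  rfl

theorem continuous_weakTop (f : V →ₗ[ℝ] W) : Continuous[weakTop V, weakTop W] f :=
  continuous_iInf_rng.2 fun L => continuous_induced_rng.2 <|
    continuous_iInf_dom (i := L ∘ₗ f) continuous_induced_dom

theorem continuous_weakTop_finTop (f : V →ₗ[ℝ] W) [FiniteDimensional ℝ f.range] :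
    Continuous[weakTop V, finTop W] f :=
  continuous_def.2 fun _ hO =>
    continuous_def.1 (continuous_weakTop f.rangeRestrict) _ (hO f.range inferInstance)

theorem continuous_finTop (f : V →ₗ[ℝ] W) : Continuous[finTop V, finTop W] f :=
  continuous_def.2 fun O hO U _ =>
    continuous_def.1 (continuous_weakTop_finTop (f ∘ₗ U.subtype)) O hO

end FinitelyOpen

theorem exists_linearMap_comp_eq_of_range_le {R P V W : Type*} [Semiring R]
    [AddCommMonoid P] [Module R P] [Module.Projective R P] [AddCommMonoid V] [Module R V]
    [AddCommMonoid W] [Module R W] (f : V →ₗ[R] W) (g : P →ₗ[R] W) (h : g.range ≤ f.range) :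
    ∃ l : P →ₗ[R] V, f ∘ₗ l = g := by
  obtain ⟨l, hl⟩ := Module.projective_lifting_property f.rangeRestrict
    (g.codRestrict f.range fun x => h ⟨x, rfl⟩) f.surjective_rangeRestrict
  exact ⟨l, congrArg (f.range.subtype ∘ₗ ·) hl⟩

theorem exists_linearMap_algebraMap_eq_smul {k A B : Type*} [CommSemiring k] [CommRing A]
    [CommRing B] [Algebra k A] [Algebra k B] [Algebra A B] [IsScalarTower k A B]
    (M : Submonoid A) [IsLocalization M B]
    {U : Submodule k B} [Module.Projective k U] (hU : U.FG) :
    ∃ d ∈ M, ∃ g : U →ₗ[k] A, ∀ u : U, algebraMap A B (g u) = d • (u : B) := by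
  obtain ⟨d, hd, hdU⟩ : IsFractional M (Submodule.span A (U : Set B)) :=
    FractionalIdeal.isFractional_of_fg hU.span
  have hrange : (d • U.subtype).range ≤ (IsScalarTower.toAlgHom k A B).toLinearMap.range := by
    rintro _ ⟨u, rfl⟩
    exact hdU u (Submodule.subset_span u.2)
  obtain ⟨g, hg⟩ := exists_linearMap_comp_eq_of_range_le _ _ hrange
  exact ⟨d, hd, g, LinearMap.congr_fun hg⟩

theorem sq_mul_mem_iff_of_isUnit {R : Type*} [Monoid R] {T : Set R}
    (hT : ∀ a, ∀ b ∈ T, a ^ 2 * b ∈ T) {v x : R} (hv : IsUnit v) : v ^ 2 * x ∈ T ↔ x ∈ T := by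
  obtain ⟨v, rfl⟩ := hv
  have hcancel : (↑v⁻¹ : R) ^ 2 * ((v : R) ^ 2 * x) = x := by
    rw [← Units.val_pow_eq_pow_val, ← Units.val_pow_eq_pow_val, inv_pow, Units.inv_mul_cancel_left]
  exact ⟨fun h => hcancel ▸ hT _ _ h, hT v x⟩

theorem preordering_finTop_closed_iff_general {A B : Type*} [CommRing A] [CommRing B]
    [Algebra ℝ A] [Algebra ℝ B] [Algebra A B] [IsScalarTower ℝ A B]
    (M : Submonoid A) [IsLocalization M B] {T : Set B} (hT : ∀ a, ∀ b ∈ T, a ^ 2 * b ∈ T) :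
    IsClosed[finTop B] T ↔ IsClosed[finTop A] (algebraMap A B ⁻¹' T) := by
  let := finTop A
  let := finTop B
  constructor
  · exact IsClosed.preimage (continuous_finTop (IsScalarTower.toAlgHom ℝ A B).toLinearMap)
  · refine fun hclosed => isClosed_finTop_iff.2 fun U _ => ?_
    obtain ⟨d, hd, g, hg⟩ := exists_linearMap_algebraMap_eq_smul M
      ((Submodule.fg_iff_finiteDimensional U).2 inferInstance)
    have hsq (u : U) : algebraMap A B ((d • g) u) = algebraMap A B d ^ 2 * u := by
      rw [LinearMap.smul_apply, smul_eq_mul, map_mul, hg, Algebra.smul_def, sq, mul_assoc]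
    have hpreimage : U.subtype ⁻¹' T = (d • g) ⁻¹' (algebraMap A B ⁻¹' T) := by
      ext u
      simp only [Set.mem_preimage, hsq, Submodule.subtype_apply,
        sq_mul_mem_iff_of_isUnit hT (IsLocalization.map_units B ⟨d, hd⟩)]
    rw [hpreimage]
    let := weakTop U
    exact hclosed.preimage (continuous_weakTop_finTop (d • g))

/-- A preordering `T` of `E = D⁻¹ℝ[X]` is closed in the topology of
finitely open sets iff `T ∩ ℝ[X]` (the preimage of `T` under the canonical injection)
is closed in the topology of finitely open sets of `ℝ[X]`. -/
theorem preordering_finTop_closed_iff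
    {n : ℕ} (D : Submonoid (MvPolynomial (Fin n) ℝ))
    (hD0 : (0 : MvPolynomial (Fin n) ℝ) ∉ D)
    (T : Set (Localization D))
    (hsq : ∀ a : Localization D, a ^ 2 ∈ T)
    (hadd : ∀ a ∈ T, ∀ b ∈ T, a + b ∈ T)
    (hmul : ∀ a ∈ T, ∀ b ∈ T, a * b ∈ T) :
    @IsClosed _ (finTop (Localization D)) T ↔
      @IsClosed _ (finTop (MvPolynomial (Fin n) ℝ))
        (algebraMap (MvPolynomial (Fin n) ℝ) (Localization D) ⁻¹' T) := by
  exact preordering_finTop_closed_iff_general D fun a b hb => hmul _ (hsq a) b hb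

end
end

section
/- Let K ⊆ ℝⁿ be a semialgebraic set and D ⊆ ℝ[X₁,…,Xₙ]\{0} a multiplicatively closed set with 1 ∈ D. Then there exists d_K ∈ D such that closure(K \ Z(d_K)) ⊆ closure(K \ Z(d)) for every d ∈ D, the closures being taken in the Euclidean topology of ℝⁿ. -/
/-!
Closures commute with finite unions and `D` is multiplicative, so `K` may be taken to be a
relatively open subset of a real algebraic set, and then an algebraic set `V(I)`. Noetherian
induction on `I` reduces to `I` prime and disjoint from `D`. There it suffices to find one `w ∉ I`
such that `V(I) \ Z(w)` lies in the closure of `V(I) \ Z(d)` for every `d ∉ I`: applied to `w * d`,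
this shows that `1` is minimal for `V(I) \ Z(w)`, and `V(I) ∩ Z(w)` is covered by the induction.

To find `w`, let `A = ℝ[X] / I` and let `R ⊆ A` be a Noether normalization, a polynomial ring. Since
`A` is étale over `R` at the generic point, some localization `A_w` is standard étale over `R`. By
the intermediate value theorem simple real zeros of a polynomial persist under small perturbations
of its coefficients, so `A_w` has an open restriction map from its real points to those of `R`.
Finally `d` divides a nonzero `r ∈ R`, and `{r ≠ 0}` is dense in affine space, so its preimage under
the open map is dense and contained in `{d ≠ 0}`.
-/

open MvPolynomial

noncomputable section

/-- A basic semialgebraic set: `{x | f x = 0 ∧ g₁ x > 0 ∧ ⋯ ∧ g_r x > 0}`. -/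
def IsBasicSemialgebraic {n : ℕ} (s : Set (Fin n → ℝ)) : Prop :=
  ∃ (f : MvPolynomial (Fin n) ℝ) (r : ℕ) (g : Fin r → MvPolynomial (Fin n) ℝ),
    s = {x | eval x f = 0 ∧ ∀ i, 0 < eval x (g i)}

/-- A semialgebraic set: a finite union of basic semialgebraic sets. -/
def IsSemialgebraic {n : ℕ} (s : Set (Fin n → ℝ)) : Prop :=
  ∃ (k : ℕ) (c : Fin k → Set (Fin n → ℝ)),
    (∀ i, IsBasicSemialgebraic (c i)) ∧ s = ⋃ i, c i

open Filter Topology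

theorem eventually_exists_eq_zero_of_hasDerivAt {X : Type*} [TopologicalSpace X] {F : X → ℝ → ℝ}
    {x₀ : X} {t₀ c : ℝ} (hF : ∀ x, Continuous (F x)) (hFx₀ : ∀ t, ContinuousAt (F · t) x₀)
    (hzero : F x₀ t₀ = 0) (hderiv : HasDerivAt (F x₀) c t₀) (hc : c ≠ 0) {T : Set ℝ}
    (hT : T ∈ 𝓝 t₀) : ∀ᶠ x in 𝓝 x₀, ∃ t ∈ T, F x t = 0 := by
  wlog hpos : 0 < c generalizing F c
  · simpa using this (F := fun x t ↦ -F x t) (fun x ↦ (hF x).neg) (fun t ↦ (hFx₀ t).neg)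
      (by simpa using hzero) hderiv.neg (neg_ne_zero.2 hc)
      (neg_pos.2 (lt_of_le_of_ne (not_lt.1 hpos) hc))
  have hsign : ∀ᶠ t in 𝓝 t₀, SignType.sign (F x₀ t) = SignType.sign (t - t₀) :=
    eventually_nhdsWithin_sign_eq_of_deriv_pos (hderiv.deriv.symm ▸ hpos) hzero
  obtain ⟨δ, hδ, hball⟩ := Metric.nhds_basis_closedBall.mem_iff.1 (inter_mem hT hsign)
  rw [Real.closedBall_eq_Icc] at hball
  have hleft : F x₀ (t₀ - δ) < 0 := by
    have h := (hball (Set.left_mem_Icc.2 (by linarith))).2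
    rwa [Set.mem_ofPred_eq, sub_sub_cancel_left, sign_neg (neg_lt_zero.2 hδ),
      sign_eq_neg_one_iff] at h
  have hright : 0 < F x₀ (t₀ + δ) := by
    have h := (hball (Set.right_mem_Icc.2 (by linarith))).2
    rwa [Set.mem_ofPred_eq, add_sub_cancel_left, sign_pos hδ, sign_eq_one_iff] at h
  filter_upwards [(hFx₀ _).eventually_lt_const hleft, (hFx₀ _).eventually_const_lt hright]
    with x hxl hxr
  obtain ⟨t, ht, hxt⟩ :=
    intermediate_value_Icc (by linarith) (hF x).continuousOn ⟨hxl.le, hxr.le⟩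
  exact ⟨t, (hball ht).1, hxt⟩

theorem dense_eval_ne_zero {ι R : Type*} [CommRing R] [IsDomain R] [TopologicalSpace R] [T1Space R]
    [∀ x : R, NeBot (𝓝[≠] x)] {p : MvPolynomial ι R} (hp : p ≠ 0) :
    Dense {x : ι → R | eval x p ≠ 0} := by
  refine dense_iff_inter_open.2 fun U hU ⟨x, hx⟩ ↦ ?_
  obtain ⟨J, V, hV, hVU⟩ := isOpen_pi_iff.1 hU x hx
  by_contra! h
  classical
  have : Infinite R := Set.infinite_univ_iff.1 (infinite_of_mem_nhds (0 : R) univ_mem)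
  refine hp (funext_set (fun i ↦ if i ∈ J then V i else Set.univ) (fun i ↦ ?_) fun y hy ↦ ?_)
  · split_ifs with hi
    · exact infinite_of_mem_nhds (x i) ((hV i hi).1.mem_nhds (hV i hi).2)
    · exact Set.infinite_univ
  · by_contra hyp
    refine (h.subset ⟨hVU fun i hi ↦ ?_, hyp⟩ : y ∈ (∅ : Set _))
    simpa [Finset.mem_coe.1 hi] using hy i trivial

/-- The real points of `Spec A`, encoded as `ℝ`-algebra homomorphisms `A → ℝ`. They let a real
variety be studied through its coordinate ring, with no choice of coordinates. -/
abbrev RealPoint (A : Type*) [CommRing A] [Algebra ℝ A] : Type _ := A →ₐ[ℝ] ℝ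

namespace RealPoint

/-- The Euclidean topology on real points, encoded as pointwise convergence on `A`: the coarsest
topology for which the elements of `A` are continuous functions. -/
instance topologicalSpace {A : Type*} [CommRing A] [Algebra ℝ A] :
    TopologicalSpace (RealPoint A) :=
  .induced (⇑) Pi.topologicalSpace

section
variable {A B X : Type*} [CommRing A] [Algebra ℝ A] [CommRing B] [Algebra ℝ B]
  [TopologicalSpace X]

theorem continuous_iff {f : X → RealPoint A} : Continuous f ↔ ∀ a, Continuous fun x ↦ f x a :=
  continuous_induced_rng.trans continuous_pi_iff

theorem continuous_apply (a : A) : Continuous fun χ : RealPoint A ↦ χ a :=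
  continuous_iff.1 continuous_id a

theorem continuous_comp (φ : A →ₐ[ℝ] B) : Continuous fun χ : RealPoint B ↦ χ.comp φ :=
  continuous_iff.2 fun a ↦ continuous_apply (φ a)

theorem continuous_eval₂ (p : Polynomial A) :
    Continuous fun z : RealPoint A × ℝ ↦ p.eval₂ (z.1 : A →+* ℝ) z.2 := by
  simp only [Polynomial.eval₂_eq_sum_range]
  exact continuous_finsetSum _ fun i _ ↦
    ((continuous_apply (p.coeff i)).comp continuous_fst).mul (continuous_snd.pow i)

end

section StandardEtale

variable {R S : Type*} [CommRing R] [Algebra ℝ R] [CommRing S] [Algebra ℝ S] [Algebra R S]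
  [IsScalarTower ℝ R S]

variable (R) in
/-- The map on real points induced by the structure morphism `Spec S → Spec R`. -/
abbrev restrict (χ : RealPoint S) : RealPoint R := χ.comp (IsScalarTower.toAlgHom ℝ R S)

theorem apply_aeval (χ : RealPoint S) (s : S) (p : Polynomial R) :
    χ (p.aeval s) = p.eval₂ (χ.restrict R : R →+* ℝ) (χ s) :=
  Polynomial.hom_eval₂ p (algebraMap R S) (χ : S →+* ℝ) s

theorem eval₂_g_ne_zero (P : StandardEtalePresentation R S) (χ : RealPoint S) :
    P.g.eval₂ (χ.restrict R : R →+* ℝ) (χ P.x) ≠ 0 := by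
  rw [← apply_aeval]
  exact (P.hasMap.2.map χ).ne_zero

theorem isInducing_restrict_apply (P : StandardEtalePresentation R S) :
    IsInducing fun χ : RealPoint S ↦ (χ.restrict R, χ P.x) := by
  refine ⟨le_antisymm (Continuous.le_induced <|
    (continuous_comp _).prodMk (continuous_apply _)) ?_⟩
  let τ : TopologicalSpace (RealPoint S) := .induced (fun χ ↦ (χ.restrict R, χ P.x)) inferInstance
  have hτ : Continuous[τ, _] fun χ : RealPoint S ↦ (χ.restrict R, χ P.x) := continuous_induced_dom
  have heval (q : Polynomial R) :
      Continuous[τ, _] fun χ : RealPoint S ↦ q.eval₂ (χ.restrict R : R →+* ℝ) (χ P.x) :=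
    (continuous_eval₂ q).comp hτ
  refine continuous_id_iff_le.1 (continuous_iff.2 fun s ↦ ?_)
  obtain ⟨p, n, hp⟩ := P.exists_mul_aeval_x_g_pow_eq_aeval_x s
  have hg (χ : RealPoint S) := pow_ne_zero n (eval₂_g_ne_zero P χ)
  refine ((heval p).div₀ ((heval P.g).pow n) hg).congr fun χ ↦ (eq_div_of_mul_eq (hg χ) ?_).symm
  rw [id, ← apply_aeval, ← apply_aeval, ← map_pow, ← map_mul, hp]

theorem exists_restrict_eq_and_apply_eq (P : StandardEtalePresentation R S) {χ : RealPoint R}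
    {t : ℝ} (hf : P.f.eval₂ (χ : R →+* ℝ) t = 0) (hg : P.g.eval₂ (χ : R →+* ℝ) t ≠ 0) :
    ∃ ψ : RealPoint S, ψ.restrict R = χ ∧ ψ P.x = t := by
  let _ : Algebra R ℝ := (χ : R →+* ℝ).toAlgebra
  have : IsScalarTower ℝ R ℝ := .of_algebraMap_eq' χ.comp_algebraMap.symm
  have hmap : P.P.HasMap t := ⟨hf, hg.isUnit⟩
  refine ⟨((P.P.lift t hmap).comp P.equivRing.toAlgHom).restrictScalars ℝ, ?_, ?_⟩
  · ext r
    exact ((P.P.lift t hmap).comp P.equivRing.toAlgHom).commutes r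
  · simp [P.P.lift_X t hmap]

theorem isOpenMap_restrict [Algebra.IsStandardEtale R S] :
    IsOpenMap (restrict R : RealPoint S → RealPoint R) := by
  obtain ⟨P⟩ := Algebra.IsStandardEtale.nonempty_standardEtalePresentation (R := R) (S := S)
  refine isOpenMap_iff_nhds_le.2 fun χ s hs ↦ ?_
  obtain ⟨W, hW, hWs⟩ := mem_comap.1 ((isInducing_restrict_apply P).nhds_eq_comap χ ▸ hs)
  have hgW := (continuous_eval₂ P.g).continuousAt.eventually_ne
    (x := (χ.restrict R, χ P.x)) (eval₂_g_ne_zero P χ)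
  obtain ⟨U, hU, T, hT, hUT⟩ := mem_nhds_prod_iff.1 (inter_mem hW hgW)
  have hroot : ∀ᶠ χ' : RealPoint R in 𝓝 (χ.restrict R),
      ∃ t ∈ T, P.f.eval₂ (χ' : R →+* ℝ) t = 0 := by
    refine eventually_exists_eq_zero_of_hasDerivAt
      (F := fun (χ' : RealPoint R) t ↦ P.f.eval₂ (χ' : R →+* ℝ) t)
      (c := P.f.derivative.eval₂ (χ.restrict R : R →+* ℝ) (χ P.x)) (fun χ' ↦ ?_) (fun t ↦ ?_)
      ?_ ?_ ?_ hT
    · exact (continuous_eval₂ P.f).comp (Continuous.prodMk_right χ')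
    · exact ((continuous_eval₂ P.f).comp (Continuous.prodMk_left t)).continuousAt
    · rw [← apply_aeval, P.hasMap.1, map_zero]
    · simpa only [Polynomial.eval_map, Polynomial.derivative_map] using
        (P.f.map (χ.restrict R : R →+* ℝ)).hasDerivAt (χ P.x)
    · rw [← apply_aeval]
      exact (P.hasMap.isUnit_derivative_f.map χ).ne_zero
  filter_upwards [hU, hroot] with χ' hχ' ⟨t, ht, hft⟩
  obtain ⟨hW', hgt⟩ := hUT (Set.mk_mem_prod hχ' ht)
  obtain ⟨ψ, rfl, rfl⟩ := exists_restrict_eq_and_apply_eq P hft hgt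
  exact hWs hW'

end StandardEtale

theorem dense_apply_ne_zero_mvPolynomial {ι : Type*} {p : MvPolynomial ι ℝ} (hp : p ≠ 0) :
    Dense {χ : RealPoint (MvPolynomial ι ℝ) | χ p ≠ 0} := by
  have hcont : Continuous fun x : ι → ℝ ↦ (aeval x : RealPoint (MvPolynomial ι ℝ)) :=
    continuous_iff.2 fun q ↦ by simpa [aeval_eq_eval] using q.continuous_eval
  have hsurj : Function.Surjective fun x : ι → ℝ ↦ (aeval x : RealPoint (MvPolynomial ι ℝ)) :=
    fun χ ↦ ⟨fun i ↦ χ (X i), (aeval_unique χ).symm⟩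
  refine (hsurj.denseRange.dense_image hcont (dense_eval_ne_zero hp)).mono ?_
  rintro _ ⟨x, hx, rfl⟩
  simpa [aeval_eq_eval] using hx

theorem dense_apply_ne_zero_of_isStandardEtale {ι S : Type*} [CommRing S] [Algebra ℝ S]
    [Algebra (MvPolynomial ι ℝ) S] [IsScalarTower ℝ (MvPolynomial ι ℝ) S]
    [Algebra.IsAlgebraic (MvPolynomial ι ℝ) S] [Algebra.IsStandardEtale (MvPolynomial ι ℝ) S]
    {d : S} (hd : d ∈ nonZeroDivisors S) : Dense {χ : RealPoint S | χ d ≠ 0} := by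
  obtain ⟨r, hr, hdr⟩ :=
    (Algebra.IsAlgebraic.isAlgebraic (R := MvPolynomial ι ℝ) d).exists_nonzero_dvd hd
  have hdense : Dense (restrict (MvPolynomial ι ℝ) ⁻¹' {χ | χ r ≠ 0} : Set (RealPoint S)) :=
    (dense_apply_ne_zero_mvPolynomial hr).preimage isOpenMap_restrict
  refine hdense.mono fun χ (hχr : χ (algebraMap _ S r) ≠ 0) (hχd : χ d = 0) ↦ hχr ?_
  exact zero_dvd_iff.1 (hχd ▸ map_dvd χ hdr)

end RealPoint

theorem exists_isStandardEtale_away (R A : Type*) [CommRing R] [IsNoetherianRing R] [CharZero R]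
    [IsDomain R] [CommRing A] [IsDomain A] [Algebra R A] [FaithfulSMul R A]
    [Algebra.FiniteType R A] [Algebra.IsAlgebraic R A] :
    ∃ w : A, w ≠ 0 ∧ Algebra.IsStandardEtale R (Localization.Away w) := by
  let L := Localization.AtPrime (⊥ : Ideal A)
  have : IsFractionRing A L := by
    simpa [Ideal.primeCompl_bot] using Localization.isLocalization (M := (⊥ : Ideal A).primeCompl)
  let : Field L := IsFractionRing.toField A
  have : FaithfulSMul R L := by
    rw [faithfulSMul_iff_algebraMap_injective, IsScalarTower.algebraMap_eq R A L]
    exact (IsFractionRing.injective A L).comp (FaithfulSMul.algebraMap_injective R A)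
  let := FractionRing.liftAlgebra R L
  have : Algebra.IsAlgebraic A L := IsLocalization.isAlgebraic L (⊥ : Ideal A).primeCompl
  have : Algebra.IsAlgebraic (FractionRing R) L :=
    IsFractionRing.comap_isAlgebraic_iff.1 (Algebra.IsAlgebraic.trans R A L)
  have : Algebra.FormallyEtale (FractionRing R) L := .of_isSeparable _ _
  have : Algebra.FormallyEtale R (FractionRing R) := .of_isLocalization (nonZeroDivisors R)
  have : Algebra.IsEtaleAt R (⊥ : Ideal A) := Algebra.FormallyEtale.comp R (FractionRing R) L
  have : Algebra.FinitePresentation R A := .of_finiteType.1 ‹_›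
  exact Algebra.IsEtaleAt.exists_isStandardEtale (⊥ : Ideal A)

theorem RealPoint.exists_setOf_ne_zero_subset_closure (A : Type*) [CommRing A] [IsDomain A]
    [Algebra ℝ A] [Algebra.FiniteType ℝ A] :
    ∃ w : A, w ≠ 0 ∧ ∀ d : A, d ≠ 0 →
      {χ : RealPoint A | χ w ≠ 0} ⊆ closure {χ : RealPoint A | χ d ≠ 0} := by
  obtain ⟨s, g, hinj, hint⟩ := exists_integral_inj_algHom_of_fg ℝ A
  algebraize [g.toRingHom]
  have : FaithfulSMul (MvPolynomial (Fin s) ℝ) A :=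
    (faithfulSMul_iff_algebraMap_injective _ _).2 hinj
  have : Algebra.FiniteType (MvPolynomial (Fin s) ℝ) A := .of_restrictScalars_finiteType ℝ _ _
  obtain ⟨w, hw, hetale⟩ := exists_isStandardEtale_away (MvPolynomial (Fin s) ℝ) A
  refine ⟨w, hw, fun d hd χ hχ ↦ ?_⟩
  have : IsScalarTower ℝ (MvPolynomial (Fin s) ℝ) A := .of_algebraMap_eq' g.comp_algebraMap.symm
  let L := Localization.Away w
  have : Algebra.IsAlgebraic A L := IsLocalization.isAlgebraic L (.powers w)
  have : Algebra.IsAlgebraic (MvPolynomial (Fin s) ℝ) L := .trans _ A L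
  have : IsScalarTower ℝ (MvPolynomial (Fin s) ℝ) L := .to₁₂₄ _ _ A L
  obtain ⟨ψ, rfl⟩ : ∃ ψ : RealPoint L, ψ.restrict A = χ :=
    ⟨IsLocalization.Away.liftAlgHom w (f := χ) hχ.isUnit, by ext a; simp⟩
  have hd' : algebraMap A L d ∈ nonZeroDivisors L :=
    IsLocalization.map_nonZeroDivisors_le (.powers w) L ⟨d, mem_nonZeroDivisors_of_ne_zero hd, rfl⟩
  have hdense := dense_apply_ne_zero_of_isStandardEtale (ι := Fin s) hd'
  exact map_mem_closure (continuous_comp (IsScalarTower.toAlgHom ℝ A L)) (hdense ψ) fun _ h ↦ h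

theorem exists_zeroLocus_sdiff_subset_closure {n : ℕ} (I : Ideal (MvPolynomial (Fin n) ℝ))
    [I.IsPrime] :
    ∃ w ∉ I, ∀ d ∉ I, zeroLocus ℝ I \ Zset w ⊆ closure (zeroLocus ℝ I \ Zset d) := by
  obtain ⟨w, hw, hdense⟩ :=
    RealPoint.exists_setOf_ne_zero_subset_closure (MvPolynomial (Fin n) ℝ ⧸ I)
  obtain ⟨w, rfl⟩ := Ideal.Quotient.mk_surjective w
  refine ⟨w, mt Ideal.Quotient.eq_zero_iff_mem.2 hw, fun d hd x ⟨hxI, hxw⟩ ↦ ?_⟩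
  let coords (χ : RealPoint (MvPolynomial (Fin n) ℝ ⧸ I)) : Fin n → ℝ :=
    fun i ↦ χ (Ideal.Quotient.mk I (X i))
  have hcoords : Continuous coords := continuous_pi fun i ↦ RealPoint.continuous_apply _
  have heval (χ : RealPoint (MvPolynomial (Fin n) ℝ ⧸ I)) (p : MvPolynomial (Fin n) ℝ) :
      eval (coords χ) p = χ (Ideal.Quotient.mk I p) :=
    (DFunLike.congr_fun (aeval_unique (χ.comp (Ideal.Quotient.mkₐ ℝ I))) p).symm
  let χ : RealPoint (MvPolynomial (Fin n) ℝ ⧸ I) := Ideal.Quotient.liftₐ I (aeval x) hxI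
  have hχ : coords χ = x := funext fun i ↦ aeval_X x i
  have hχw : χ ∈ {χ : RealPoint (MvPolynomial (Fin n) ℝ ⧸ I) | χ (Ideal.Quotient.mk I w) ≠ 0} := by
    rwa [Set.mem_ofPred_eq, ← heval, hχ]
  rw [← hχ]
  refine map_mem_closure hcoords (hdense _ (mt Ideal.Quotient.eq_zero_iff_mem.1 hd) hχw) ?_
  refine fun ψ hψ ↦ ⟨fun p hp ↦ ?_, fun h ↦ hψ ((heval ψ d).symm.trans h)⟩
  rw [aeval_eq_eval]
  exact (heval ψ p).trans (by rw [Ideal.Quotient.eq_zero_iff_mem.2 hp, map_zero])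

theorem Zset_mul {n : ℕ} (p q : MvPolynomial (Fin n) ℝ) : Zset (p * q) = Zset p ∪ Zset q := by
  ext x
  simp [Zset]

theorem zeroLocus_sup_span_singleton {n : ℕ} (I : Ideal (MvPolynomial (Fin n) ℝ))
    (p : MvPolynomial (Fin n) ℝ) :
    zeroLocus ℝ (I ⊔ .span {p}) = zeroLocus ℝ I ∩ Zset p := by
  have hspan : zeroLocus ℝ (.span {p}) = Zset p := by
    simp [zeroLocus_span, Zset, aeval_eq_eval]
  rw [← hspan]
  exact zeroLocus_vanishingIdeal_galoisConnection.l_sup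

/-- Some member of `D` has a zero set whose removal from `K` leaves the smallest closure among all
members of `D`. Phrased for a fixed `D`, it is a property of `K` that can be proved piecewise. -/
def HasMinimalZeroSet {n : ℕ} (D : Submonoid (MvPolynomial (Fin n) ℝ)) (K : Set (Fin n → ℝ)) :
    Prop :=
  ∃ b ∈ D, ∀ d ∈ D, closure (K \ Zset b) ⊆ closure (K \ Zset d)

namespace HasMinimalZeroSet

variable {n : ℕ} {D : Submonoid (MvPolynomial (Fin n) ℝ)} {K L : Set (Fin n → ℝ)}

theorem of_subset_closure {b : MvPolynomial (Fin n) ℝ} (hb : b ∈ D)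
    (h : ∀ d ∈ D, K \ Zset b ⊆ closure (K \ Zset d)) : HasMinimalZeroSet D K :=
  ⟨b, hb, fun d hd ↦ closure_minimal (h d hd) isClosed_closure⟩

theorem iUnion {ι : Type*} [Finite ι] {K : ι → Set (Fin n → ℝ)}
    (h : ∀ i, HasMinimalZeroSet D (K i)) : HasMinimalZeroSet D (⋃ i, K i) := by
  have := Fintype.ofFinite ι
  choose b hbD hb using h
  refine of_subset_closure (b := ∏ i, b i) (prod_mem fun i _ ↦ hbD i) fun d hd x ⟨hx, hxb⟩ ↦ ?_
  obtain ⟨i, hxi⟩ := Set.mem_iUnion.1 hx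
  have hxbi : x ∉ Zset (b i) := fun hz ↦ hxb <| by
    rw [Zset, Set.mem_ofPred_eq, map_prod]
    exact Finset.prod_eq_zero (Finset.mem_univ i) hz
  exact closure_mono (Set.sdiff_subset_sdiff_left (Set.subset_iUnion K i))
    (hb i d hd (subset_closure ⟨hxi, hxbi⟩))

theorem union (hK : HasMinimalZeroSet D K) (hL : HasMinimalZeroSet D L) :
    HasMinimalZeroSet D (K ∪ L) := by
  rw [Set.union_eq_iUnion]
  exact iUnion (Bool.rec hL hK)

theorem inter_isOpen (hK : HasMinimalZeroSet D K) {U : Set (Fin n → ℝ)} (hU : IsOpen U) :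
    HasMinimalZeroSet D (K ∩ U) := by
  obtain ⟨b, hbD, hb⟩ := hK
  refine of_subset_closure hbD fun d hd x ⟨⟨hxK, hxU⟩, hxb⟩ ↦ ?_
  rw [Set.inter_sdiff_right_comm, Set.inter_comm]
  exact hU.inter_closure ⟨hxU, hb d hd (subset_closure ⟨hxK, hxb⟩)⟩

theorem zeroLocus_of_isPrime {I : Ideal (MvPolynomial (Fin n) ℝ)} [I.IsPrime]
    (ih : ∀ J > I, HasMinimalZeroSet D (zeroLocus ℝ J)) : HasMinimalZeroSet D (zeroLocus ℝ I) := by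
  by_cases hDI : ∃ d ∈ D, d ∈ I
  · obtain ⟨d, hdD, hdI⟩ := hDI
    exact of_subset_closure hdD fun _ _ x hx ↦ (hx.2 (hx.1 d hdI)).elim
  push Not at hDI
  obtain ⟨w, hwI, hw⟩ := exists_zeroLocus_sdiff_subset_closure I
  rw [← Set.inter_union_sdiff (zeroLocus ℝ I) (Zset w), ← zeroLocus_sup_span_singleton]
  refine (ih _ (Submodule.lt_sup_iff_notMem.2 hwI)).union
    (of_subset_closure D.one_mem fun d hd ↦ Set.sdiff_subset.trans ?_)
  rw [Set.sdiff_sdiff, ← Zset_mul]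
  exact hw _ (Ideal.IsPrime.mul_notMem ‹_› hwI (hDI d hd))

end HasMinimalZeroSet

theorem hasMinimalZeroSet_zeroLocus {n : ℕ} (D : Submonoid (MvPolynomial (Fin n) ℝ))
    (I : Ideal (MvPolynomial (Fin n) ℝ)) : HasMinimalZeroSet D (zeroLocus ℝ I) := by
  induction I using WellFoundedGT.induction with | _ I ih
  by_cases hI : I.IsPrime
  · exact .zeroLocus_of_isPrime ih
  obtain rfl | ⟨p, hp, q, hq, hpq⟩ := Ideal.not_isPrime_iff.1 hI
  · exact .of_subset_closure D.one_mem (by simp)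
  have hunion : zeroLocus ℝ I = zeroLocus ℝ (I ⊔ .span {p}) ∪ zeroLocus ℝ (I ⊔ .span {q}) := by
    rw [zeroLocus_sup_span_singleton, zeroLocus_sup_span_singleton, ← Set.inter_union_distrib_left,
      ← Zset_mul]
    exact (Set.inter_eq_left.2 fun x (hx : x ∈ zeroLocus ℝ I) ↦ hx _ hpq).symm
  rw [hunion]
  exact (ih _ (Submodule.lt_sup_iff_notMem.2 hp)).union (ih _ (Submodule.lt_sup_iff_notMem.2 hq))

theorem IsBasicSemialgebraic.hasMinimalZeroSet {n : ℕ} {K : Set (Fin n → ℝ)}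
    (hK : IsBasicSemialgebraic K) (D : Submonoid (MvPolynomial (Fin n) ℝ)) :
    HasMinimalZeroSet D K := by
  obtain ⟨f, r, g, rfl⟩ := hK
  have hopen : IsOpen {x | ∀ i, 0 < eval x (g i)} := by
    simp only [Set.ofPred_forall]
    exact isOpen_iInter_of_finite fun i ↦ isOpen_lt continuous_const (g i).continuous_eval
  convert (hasMinimalZeroSet_zeroLocus D (.span {f})).inter_isOpen hopen using 1
  simp [zeroLocus_span, Set.ofPred_and, aeval_eq_eval]

/-- For a semialgebraic set `K` and a multiplicative set `D` there is
`d_K ∈ D` with `closure (K \ Z(d_K)) ⊆ closure (K \ Z(d))` for every `d ∈ D`. -/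
theorem exists_minimal_zero_set
    {n : ℕ} (D : Submonoid (MvPolynomial (Fin n) ℝ))
    (hD0 : (0 : MvPolynomial (Fin n) ℝ) ∉ D)
    (K : Set (Fin n → ℝ)) (hK : IsSemialgebraic K) :
    ∃ dK ∈ D, ∀ d ∈ D, closure (K \ Zset dK) ⊆ closure (K \ Zset d) := by
  obtain ⟨k, c, hc, rfl⟩ := hK
  exact HasMinimalZeroSet.iUnion fun i ↦ (hc i).hasMinimalZeroSet D

end
end
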